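/- Let (u, π, v, θ) be a smooth solution of the stationary 3D tropical climate model. Suppose p ∈ (3/2, 3), q ∈ [1, 2), r ∈ [1, 6], and u ∈ L^p(ℝ³), v ∈ L^q(ℝ³), θ ∈ L^r(ℝ³). Then u = 0, v = 0 and θ = 0 identically on ℝ³. -/

import Mathlib

open MeasureTheory Filter Metric

noncomputable section

abbrev R3 : Type := EuclideanSpace ℝ (Fin 3)

/-- Partial derivative of `f` in the `j`-th coordinate direction. -/
def pd (f : R3 → ℝ) (j : Fin 3) (x : R3) : ℝ :=
  fderiv ℝ f x (EuclideanSpace.single j 1)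

/-- Laplacian of `f`. -/
def lap (f : R3 → ℝ) (x : R3) : ℝ := ∑ j, pd (pd f j) j x

/-- The stationary 3D tropical climate model:
`-Δu + (u·∇)u + ∇π + div(v⊗v) = 0`, `-Δv + (u·∇)v + ∇θ + (v·∇)u = 0`,
`-Δθ + u·∇θ + div v = 0`, `div u = 0`. -/
def TCM (u v : R3 → R3) (pr θ : R3 → ℝ) : Prop :=
  (∀ i x, -lap (fun y => u y i) x + (∑ j, u x j * pd (fun y => u y i) j x)
      + pd pr i x + (∑ j, pd (fun y => v y j * v y i) j x) = 0) ∧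
  (∀ i x, -lap (fun y => v y i) x + (∑ j, u x j * pd (fun y => v y i) j x)
      + pd θ i x + (∑ j, v x j * pd (fun y => u y i) j x) = 0) ∧
  (∀ x, -lap θ x + (∑ j, u x j * pd θ j x) + (∑ j, pd (fun y => v y j) j x) = 0) ∧
  (∀ x, (∑ j, pd (fun y => u y j) j x) = 0)

abbrev Sm (f : R3 → ℝ) : Prop := ContDiff ℝ (⊤ : ℕ∞) f

abbrev bas (j : Fin 3) : R3 := EuclideanSpace.single j 1

lemma Sm.diff {f : R3 → ℝ} (h : Sm f) : Differentiable ℝ f := h.differentiable (by simp)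

lemma Sm.cont {f : R3 → ℝ} (h : Sm f) : Continuous f := ContDiff.continuous h

lemma Sm.pd {f : R3 → ℝ} (h : Sm f) (j : Fin 3) : Sm (pd f j) := by
  unfold _root_.pd Sm
  exact (h.fderiv_right (m := (⊤ : ℕ∞)) (by simp)).clm_apply contDiff_const

lemma Sm.lap {f : R3 → ℝ} (h : Sm f) : Sm (lap f) := by
  unfold _root_.lap Sm
  exact ContDiff.sum fun i _ => (h.pd i).pd i

lemma Sm.mul {f g : R3 → ℝ} (hf : Sm f) (hg : Sm g) : Sm (fun x => f x * g x) :=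
  ContDiff.mul hf hg

lemma pd_add {f g : R3 → ℝ} (hf : Sm f) (hg : Sm g) (j : Fin 3) (x : R3) :
    pd (fun y => f y + g y) j x = pd f j x + pd g j x := by
  unfold pd
  rw [fderiv_fun_add (hf.diff x) (hg.diff x)]; rfl

lemma pd_sub {f g : R3 → ℝ} (hf : Sm f) (hg : Sm g) (j : Fin 3) (x : R3) :
    pd (fun y => f y - g y) j x = pd f j x - pd g j x := by
  unfold pd
  rw [fderiv_fun_sub (hf.diff x) (hg.diff x)]; rfl

lemma pd_mul {f g : R3 → ℝ} (hf : Sm f) (hg : Sm g) (j : Fin 3) (x : R3) :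
    pd (fun y => f y * g y) j x = f x * pd g j x + pd f j x * g x := by
  unfold pd
  rw [fderiv_fun_mul (hf.diff x) (hg.diff x)]
  simp [mul_comm]

lemma pd_comm {f : R3 → ℝ} (hf : Sm f) (i j : Fin 3) (x : R3) :
    pd (pd f i) j x = pd (pd f j) i x := by
  have h2 : ContDiffAt ℝ 2 f x := (ContDiff.of_le hf (by exact WithTop.coe_le_coe.2 le_top)).contDiffAt
  have hs : IsSymmSndFDerivAt ℝ f x := h2.isSymmSndFDerivAt (by simp)
  have hd : DifferentiableAt ℝ (fderiv ℝ f) x :=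
    ((ContDiff.fderiv_right (m := (⊤ : ℕ∞)) hf (by simp)).differentiable (by simp)) x
  have key : ∀ a b : Fin 3, pd (pd f a) b x = fderiv ℝ (fderiv ℝ f) x (bas b) (bas a) := by
    intro a b
    unfold pd
    rw [fderiv_clm_apply hd (differentiableAt_const _)]
    simp
  rw [key, key, hs]

lemma HasCompactSupport.pd {f : R3 → ℝ} (h : HasCompactSupport f) (j : Fin 3) :
    HasCompactSupport (pd f j) := by
  unfold _root_.pd
  exact h.fderiv_apply ℝ _

lemma Sm.int {f : R3 → ℝ} (hf : Sm f) (h : HasCompactSupport f) : Integrable f :=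
  hf.cont.integrable_of_hasCompactSupport h

lemma ibp {f g : R3 → ℝ} (hf : Sm f) (hg : Sm g) (h : HasCompactSupport g) (j : Fin 3) :
    ∫ x, f x * pd g j x = - ∫ x, pd f j x * g x := by
  apply integral_mul_fderiv_eq_neg_fderiv_mul_of_integrable
  · exact ((hf.pd j).mul hg).int h.mul_left
  · exact (hf.mul (hg.pd j)).int (h.pd j).mul_left
  · exact (hf.mul hg).int h.mul_left
  · intro x _; exact hf.diff x
  · intro x _; exact hg.diff x

lemma ibp' {f g : R3 → ℝ} (hf : Sm f) (hg : Sm g) (h : HasCompactSupport g) (j : Fin 3) :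
    ∫ x, pd f j x * g x = - ∫ x, f x * pd g j x := by
  rw [ibp hf hg h, neg_neg]

lemma int_pd_zero {g : R3 → ℝ} (hg : Sm g) (h : HasCompactSupport g) (j : Fin 3) :
    ∫ x, pd g j x = 0 := by
  have := ibp (f := fun _ => 1) contDiff_const hg h j
  simpa [pd] using this


def ZI (h : R3 → ℝ) : Prop := Integrable h ∧ ∫ x, h x = 0

lemma ZI.pd {g : R3 → ℝ} (hg : Sm g) (h : HasCompactSupport g) (j : Fin 3) : ZI (pd g j) :=
  ⟨(hg.pd j).int (h.pd j), int_pd_zero hg h j⟩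

lemma ZI.add {f g : R3 → ℝ} (hf : ZI f) (hg : ZI g) : ZI (fun x => f x + g x) :=
  ⟨hf.1.add hg.1, by rw [integral_add hf.1 hg.1, hf.2, hg.2, add_zero]⟩

lemma ZI.sub {f g : R3 → ℝ} (hf : ZI f) (hg : ZI g) : ZI (fun x => f x - g x) :=
  ⟨hf.1.sub hg.1, by rw [integral_sub hf.1 hg.1, hf.2, hg.2, sub_zero]⟩

lemma ZI.cmul {f : R3 → ℝ} (c : ℝ) (hf : ZI f) : ZI (fun x => c * f x) :=
  ⟨hf.1.const_mul c, by rw [integral_const_mul, hf.2, mul_zero]⟩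

lemma ZI.sum {f : Fin 3 → R3 → ℝ} (hf : ∀ i, ZI (f i)) : ZI (fun x => ∑ i, f i x) :=
  ⟨integrable_finsetSum _ fun i _ => (hf i).1, by
    rw [integral_finsetSum _ fun i _ => (hf i).1]
    exact Finset.sum_eq_zero fun i _ => (hf i).2⟩

lemma ZI.of {f g : R3 → ℝ} (hf : ZI f) (h : ∀ x, g x = f x) : ZI g := by
  have : g = f := funext h
  rwa [this]

/-- viscous commutator -/
lemma visc {f g C : R3 → ℝ} (hf : Sm f) (hg : Sm g) (hC : Sm C) (h : HasCompactSupport g) :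
    ZI (fun x => lap f x * (g x * C x) + (f x * lap g x + 2 * ∑ k, pd f k x * pd g k x) * C x
       - f x * g x * lap C x) := by
  refine ZI.of (ZI.sum fun k => (((ZI.pd ((hf.pd k).mul (hg.mul hC)) (h.mul_right.mul_left) k).add
    (ZI.pd (hf.mul ((hg.pd k).mul hC)) ((h.pd k).mul_right.mul_left) k)).sub
    (ZI.pd (hf.mul (hg.mul (hC.pd k))) (h.mul_right.mul_left) k))) fun x => ?_
  have e : ∀ k, _ := fun k => pd_mul (hf.pd k) (hg.mul hC) k x
  have e1 : ∀ k, _ := fun k => pd_mul hg hC k x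
  have e2 : ∀ k, _ := fun k => pd_mul hf ((hg.pd k).mul hC) k x
  have e3 : ∀ k, _ := fun k => pd_mul (hg.pd k) hC k x
  have e4 : ∀ k, _ := fun k => pd_mul hf (hg.mul (hC.pd k)) k x
  have e5 : ∀ k, _ := fun k => pd_mul hg (hC.pd k) k x
  simp only [e, e1, e2, e3, e4, e5, lap, Fin.sum_univ_three]
  ring

lemma energy_lap {f P : R3 → ℝ} (hf : Sm f) (hP : Sm P) (h : HasCompactSupport P) :
    ZI (fun x => - lap f x * (P x * f x) - P x * (∑ k, pd f k x ^ 2)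
      - ∑ k, f x * pd f k x * pd P k x) := by
  refine ZI.of (ZI.sum fun k => ((ZI.pd ((hf.pd k).mul (hP.mul hf)) (h.mul_right.mul_left) k).cmul
    (-1))) fun x => ?_
  have e : ∀ k, _ := fun k => pd_mul (hf.pd k) (hP.mul hf) k x
  have e1 : ∀ k, _ := fun k => pd_mul hP hf k x
  simp only [e, e1, lap, Fin.sum_univ_three]
  ring

lemma conv_lem {f P : R3 → ℝ} {U : Fin 3 → R3 → ℝ} (hf : Sm f) (hP : Sm P)
    (h : HasCompactSupport P) (hU : ∀ i, Sm (U i)) (hdiv : ∀ x, ∑ j, pd (U j) j x = 0) :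
    ZI (fun x => (∑ j, U j x * pd f j x) * (P x * f x)
      + (1/2) * f x ^ 2 * ∑ j, U j x * pd P j x) := by
  refine ZI.of (ZI.cmul (1/2) (ZI.sum fun k =>
    (ZI.pd ((hU k).mul ((hf.mul hf).mul hP)) (h.mul_left.mul_left) k))) fun x => ?_
  have e : ∀ k, _ := fun k => pd_mul (hU k) ((hf.mul hf).mul hP) k x
  have e1 : ∀ k, _ := fun k => pd_mul (hf.mul hf) hP k x
  have e2 : ∀ k, _ := fun k => pd_mul hf hf k x
  have hd := hdiv x
  simp only [Fin.sum_univ_three] at hd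
  simp only [e, e1, e2, Fin.sum_univ_three]
  linear_combination -(1/2) * (f x ^ 2 * P x) * hd

/-- the total energy identity, with the `u`-equation replaced by a defect -/
lemma energy_id {θ P : R3 → ℝ} {U V : Fin 3 → R3 → ℝ} (hθ : Sm θ) (hP : Sm P)
    (h : HasCompactSupport P) (hU : ∀ i, Sm (U i)) (hV : ∀ i, Sm (V i))
    (hdiv : ∀ x, ∑ j, pd (U j) j x = 0)
    (h2 : ∀ i x, -lap (V i) x + (∑ j, U j x * pd (V i) j x)
      + pd θ i x + (∑ j, V j x * pd (U i) j x) = 0)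
    (h3 : ∀ x, -lap θ x + (∑ j, U j x * pd θ j x) + (∑ j, pd (V j) j x) = 0) :
    ZI (fun x => ∑ i, (-lap (U i) x + (∑ j, U j x * pd (U i) j x)
        + (∑ j, pd (fun y => V j y * V i y) j x)) * (P x * U i x)
      - (P x * (∑ i, ∑ k, pd (U i) k x ^ 2 + ∑ i, ∑ k, pd (V i) k x ^ 2 + ∑ k, pd θ k x ^ 2)
        + (∑ i, ∑ k, U i x * pd (U i) k x * pd P k x + ∑ i, ∑ k, V i x * pd (V i) k x * pd P k x
            + ∑ k, θ x * pd θ k x * pd P k x)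
        - (1/2) * ((∑ i, U i x ^ 2) + (∑ i, V i x ^ 2) + θ x ^ 2) * (∑ j, U j x * pd P j x)
        - (∑ i, ∑ j, V j x * V i x * U i x * pd P j x)
        - θ x * ∑ j, V j x * pd P j x)) := by
  have A1 := ZI.sum fun i => energy_lap (hU i) hP h
  have A2 := ZI.sum fun i => energy_lap (hV i) hP h
  have A3 := energy_lap hθ hP h
  have B1 := ZI.sum fun i => conv_lem (hU i) hP h hU hdiv
  have B2 := ZI.sum fun i => conv_lem (hV i) hP h hU hdiv
  have B3 := conv_lem hθ hP h hU hdiv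
  have D1 := ZI.sum fun i => ZI.sum fun j => ZI.pd (((hV j).mul (hV i)).mul ((hU i).mul hP))
    (h.mul_left.mul_left) j
  have D2 := ZI.sum fun j => ZI.pd (hθ.mul ((hV j).mul hP)) (h.mul_left.mul_left) j
  refine ZI.of ((((((((A1.add A2).add A3).add B1).add B2).add B3)).add D1).add D2) fun x => ?_
  have e1 : ∀ i j, _ := fun i j => pd_mul ((hV j).mul (hV i)) ((hU i).mul hP) j x
  have e2 : ∀ i j, _ := fun i j => pd_mul (hU i) hP j x
  have e3 : ∀ i j, _ := fun i j => pd_mul (hV j) (hV i) j x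
  have e4 : ∀ j, _ := fun j => pd_mul hθ ((hV j).mul hP) j x
  have e5 : ∀ j, _ := fun j => pd_mul (hV j) hP j x
  have k0 := h2 0 x
  have k1 := h2 1 x
  have k2 := h2 2 x
  have k3 := h3 x
  simp only [Fin.sum_univ_three] at k0 k1 k2 k3
  simp only [e1, e2, e3, e4, e5, Fin.sum_univ_three]
  linear_combination -P x * V 0 x * k0 - P x * V 1 x * k1 - P x * V 2 x * k2 - P x * θ x * k3

/-- testing the `u`-equation with a divergence free field -/
lemma test_id {π P : R3 → ℝ} {U V un : Fin 3 → R3 → ℝ} {C : Fin 3 → Fin 3 → R3 → ℝ}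
    (hπ : Sm π) (hP : Sm P)
    (h : HasCompactSupport P) (hU : ∀ i, Sm (U i)) (hV : ∀ i, Sm (V i)) (hun : ∀ i, Sm (un i))
    (hC : ∀ i j, Sm (C i j)) (anti : ∀ i j x, C i j x = - C j i x)
    (hdC : ∀ i x, ∑ j, pd (C j i) j x = un i x)
    (hlC : ∀ i j x, lap (C j i) x = pd (un i) j x - pd (un j) i x)
    (h1 : ∀ i x, -lap (U i) x + (∑ j, U j x * pd (U i) j x)
      + pd π i x + (∑ j, pd (fun y => V j y * V i y) j x) = 0) :
    ZI (fun x => (∑ i, (-lap (U i) x + (∑ j, U j x * pd (U i) j x)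
        + (∑ j, pd (fun y => V j y * V i y) j x)) * (P x * un i x))
      + (∑ i, ∑ j, (pd (fun y => U i y * pd P j y) j x * un i x
         - pd (fun y => U i y * pd P j y) i x * un j x))
      + ∑ i, ∑ j, (U i x * lap (pd P j) x + 2 * ∑ k, pd (U i) k x * pd (pd P j) k x
         + ((∑ k, U k x * pd (U i) k x) + (∑ k, pd (fun y => V k y * V i y) k x)) * pd P j x)
           * C j i x) := by
  have A := ZI.sum fun i => ZI.sum fun j => ZI.pd ((hπ.pd i).mul (hP.mul (hC j i)))
    (h.mul_right.mul_left) j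
  have B := ZI.sum fun i => ZI.sum fun j => visc (hU i) (hP.pd j) (hC j i) (h.pd j)
  have D1 := ZI.sum fun i => ZI.sum fun j => ZI.pd (((hU i).mul (hP.pd j)).mul (hun i))
    ((h.pd j).mul_left.mul_right) j
  have D2 := ZI.sum fun i => ZI.sum fun j => ZI.pd (((hU i).mul (hP.pd j)).mul (hun j))
    ((h.pd j).mul_left.mul_right) i
  refine ZI.of (((B.add D1).sub D2).sub A) fun x => ?_
  have e1 : ∀ i j, _ := fun i j => pd_mul (hπ.pd i) (hP.mul (hC j i)) j x
  have e2 : ∀ i j, _ := fun i j => pd_mul hP (hC j i) j x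
  have e3 : ∀ i j, _ := fun i j => pd_mul ((hU i).mul (hP.pd j)) (hun i) j x
  have e4 : ∀ i j, _ := fun i j => pd_mul ((hU i).mul (hP.pd j)) (hun j) i x
  have k : ∀ i, pd π i x = lap (U i) x - (∑ j, U j x * pd (U i) j x)
      - (∑ j, pd (fun y => V j y * V i y) j x) := fun i => by linarith [h1 i x]
  have c01 := anti 1 0 x
  have c02 := anti 2 0 x
  have c12 := anti 2 1 x
  have c00 : C 0 0 x = 0 := by linarith [anti 0 0 x]
  have c11 : C 1 1 x = 0 := by linarith [anti 1 1 x]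
  have c22 : C 2 2 x = 0 := by linarith [anti 2 2 x]
  have s10 := pd_comm hπ 1 0 x
  have s20 := pd_comm hπ 2 0 x
  have s21 := pd_comm hπ 2 1 x
  have d0 := hdC 0 x
  have d1 := hdC 1 x
  have d2 := hdC 2 x
  simp only [Fin.sum_univ_three] at d0 d1 d2
  simp only [e1, e2, e3, e4, hlC]
  simp only [Fin.sum_univ_three, s10, s20, s21, c01, c02, c12, c00, c11, c22, ← d0, ← d1, ← d2]
  simp only [k, Fin.sum_univ_three]
  ring

lemma dom_conv {g : R3 → ℝ} (hg : Sm g) (h : HasCompactSupport g) {w : ℕ → R3 → ℝ} {u : R3 → ℝ}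
    (hw : ∀ n, Sm (w n)) (hb : ∀ M : ℝ, ∃ B : ℝ, ∀ n x, ‖x‖ ≤ M → |w n x| ≤ B)
    (hl : ∀ x, Tendsto (fun n => w n x) atTop (nhds (u x))) :
    Tendsto (fun n => ∫ x, g x * w n x) atTop (nhds (∫ x, g x * u x)) := by
  obtain ⟨M, hM⟩ := h.isBounded.exists_norm_le
  obtain ⟨B, hB⟩ := hb M
  refine tendsto_integral_of_dominated_convergence (fun x => |g x| * B) ?_ ?_ ?_ ?_
  · intro n; exact (hg.mul (hw n)).cont.aestronglyMeasurable
  · exact (hg.int h).abs.mul_const B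
  · intro n
    refine Eventually.of_forall fun x => ?_
    by_cases hx : x ∈ tsupport g
    · rw [Real.norm_eq_abs, abs_mul]
      exact mul_le_mul_of_nonneg_left (hB n x (hM x hx)) (abs_nonneg _)
    · simp [image_eq_zero_of_notMem_tsupport hx]
  · exact Eventually.of_forall fun x => (hl x).const_mul _

/-- local part of the error -/
def Hloc (U V : Fin 3 → R3 → ℝ) (θ P : R3 → ℝ) (x : R3) : ℝ :=
  ((∑ i, ∑ k, U i x * pd (U i) k x * pd P k x + ∑ i, ∑ k, V i x * pd (V i) k x * pd P k x
            + ∑ k, θ x * pd θ k x * pd P k x)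
        - (1/2) * ((∑ i, U i x ^ 2) + (∑ i, V i x ^ 2) + θ x ^ 2) * (∑ j, U j x * pd P j x)
        - (∑ i, ∑ j, V j x * V i x * U i x * pd P j x)
        - θ x * ∑ j, V j x * pd P j x) +
  (∑ i, ∑ j, (pd (fun y => U i y * pd P j y) j x * U i x
         - pd (fun y => U i y * pd P j y) i x * U j x))

/-- coefficient of the potential in the error -/
def Hpot (U V : Fin 3 → R3 → ℝ) (P : R3 → ℝ) (i j : Fin 3) (x : R3) : ℝ :=
  (U i x * lap (pd P j) x + 2 * ∑ k, pd (U i) k x * pd (pd P j) k x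
         + ((∑ k, U k x * pd (U i) k x) + (∑ k, pd (fun y => V k y * V i y) k x)) * pd P j x)

def Eden (U V : Fin 3 → R3 → ℝ) (θ : R3 → ℝ) (x : R3) : ℝ :=
  (∑ i, ∑ k, pd (U i) k x ^ 2 + ∑ i, ∑ k, pd (V i) k x ^ 2 + ∑ k, pd θ k x ^ 2)

/-- existence of potentials -/
def HasPot (U : Fin 3 → R3 → ℝ) (a : R3 → ℝ) : Prop :=
  ∃ (un : ℕ → Fin 3 → R3 → ℝ) (C : ℕ → Fin 3 → Fin 3 → R3 → ℝ),
    (∀ n i, Sm (un n i)) ∧ (∀ n i j, Sm (C n i j)) ∧ (∀ n i j x, C n i j x = - C n j i x) ∧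
    (∀ n i x, ∑ j, pd (C n j i) j x = un n i x) ∧
    (∀ n i j x, lap (C n j i) x = pd (un n i) j x - pd (un n j) i x) ∧
    (∀ i, ∀ M : ℝ, ∃ B : ℝ, ∀ n x, ‖x‖ ≤ M → |un n i x| ≤ B) ∧
    (∀ i x, Tendsto (fun n => un n i x) atTop (nhds (U i x))) ∧
    (∀ n i j, ∀ᵐ x : R3, |C n i j x| ≤ a x)

lemma cs_of {P f : R3 → ℝ} (h : HasCompactSupport P) (hf : ∀ x, P x = 0 → f x = 0) :
    HasCompactSupport f := by
  apply h.mono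
  intro x hx hP
  exact hx (hf x hP)

lemma main_ineq {π θ P a : R3 → ℝ} {U V : Fin 3 → R3 → ℝ} (hπ : Sm π) (hθ : Sm θ) (hP : Sm P)
    (h : HasCompactSupport P) (hP0 : ∀ x, 0 ≤ P x) (hU : ∀ i, Sm (U i)) (hV : ∀ i, Sm (V i))
    (hdiv : ∀ x, ∑ j, pd (U j) j x = 0)
    (h1 : ∀ i x, -lap (U i) x + (∑ j, U j x * pd (U i) j x)
      + pd π i x + (∑ j, pd (fun y => V j y * V i y) j x) = 0)
    (h2 : ∀ i x, -lap (V i) x + (∑ j, U j x * pd (V i) j x)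
      + pd θ i x + (∑ j, V j x * pd (U i) j x) = 0)
    (h3 : ∀ x, -lap θ x + (∑ j, U j x * pd θ j x) + (∑ j, pd (V j) j x) = 0)
    (ha : ∀ x, 0 ≤ a x) (hpot : HasPot U a) :
    ∫⁻ x, ENNReal.ofReal (P x * Eden U V θ x) ≤
      ∫⁻ x, ENNReal.ofReal (|Hloc U V θ P x| + ∑ i, ∑ j, |Hpot U V P i j x| * a x) := by
  obtain ⟨un, C, hun, hC, anti, hdC, hlC, hbd, hlim, hCa⟩ := hpot
  set G : Fin 3 → R3 → ℝ := fun i x => (-lap (U i) x + (∑ j, U j x * pd (U i) j x)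
        + (∑ j, pd (fun y => V j y * V i y) j x)) with hG
  have hGs : ∀ i, Sm (G i) := by
    intro i
    exact ((hU i).lap.neg.add (ContDiff.sum fun j _ => (hU j).mul ((hU i).pd j))).add
      (ContDiff.sum fun j _ => ((hV j).mul (hV i)).pd j)
  set g : Fin 3 → R3 → ℝ := fun i x => G i x * P x + ((∑ j, pd (fun y => U i y * pd P j y) j x)
    - ∑ j, pd (fun y => U j y * pd P i y) j x) with hg
  have hUP : ∀ i j, Sm (fun y => U i y * pd P j y) := fun i j => (hU i).mul (hP.pd j)
  have hUPc : ∀ i j, HasCompactSupport (fun y => U i y * pd P j y) := fun i j => (h.pd j).mul_left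
  have hgs : ∀ i, Sm (g i) := by
    intro i
    exact ((hGs i).mul hP).add ((ContDiff.sum fun j _ => (hUP i j).pd j).sub
      (ContDiff.sum fun j _ => (hUP j i).pd j))
  have hsumc : ∀ (F : Fin 3 → R3 → ℝ), (∀ i, HasCompactSupport (F i)) →
      HasCompactSupport (fun x => ∑ j, F j x) := by
    intro F hF
    simp only [Fin.sum_univ_three]
    exact ((hF 0).add (hF 1)).add (hF 2)
  have hgc : ∀ i, HasCompactSupport (g i) := by
    intro i
    refine HasCompactSupport.add h.mul_left ?_
    have := (hsumc _ fun j => (hUPc i j).pd j).add ((hsumc _ fun j => (hUPc j i).pd j).neg)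
    simpa [sub_eq_add_neg, Pi.add_def, Pi.neg_def] using this
  set L : ℕ → R3 → ℝ := fun n x => ∑ i, g i x * un n i x with hL
  set L' : R3 → ℝ := fun x => ∑ i, g i x * U i x with hL'
  set R : ℕ → R3 → ℝ := fun n x => ∑ i, ∑ j, Hpot U V P i j x * C n j i x with hR
  have hLi : ∀ n, Integrable (L n) := fun n => integrable_finsetSum _ fun i _ =>
    ((hgs i).mul (hun n i)).int (hgc i).mul_right
  have hLi' : Integrable L' := integrable_finsetSum _ fun i _ =>
    ((hgs i).mul (hU i)).int (hgc i).mul_right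
  set Q := ∫⁻ x, ENNReal.ofReal (∑ i, ∑ j, |Hpot U V P i j x| * a x) with hQ
  have hn : ∀ n, ‖∫ x, L n x‖ₑ ≤ Q := by
    intro n
    obtain ⟨z1, z2⟩ := test_id hπ hP h hU hV (hun n) (hC n) (anti n) (hdC n) (hlC n) h1
    have z3 : ∀ x, R n x = (fun x => (∑ i, (-lap (U i) x + (∑ j, U j x * pd (U i) j x)
        + (∑ j, pd (fun y => V j y * V i y) j x)) * (P x * un n i x))
      + (∑ i, ∑ j, (pd (fun y => U i y * pd P j y) j x * un n i x
         - pd (fun y => U i y * pd P j y) i x * un n j x))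
      + ∑ i, ∑ j, (U i x * lap (pd P j) x + 2 * ∑ k, pd (U i) k x * pd (pd P j) k x
         + ((∑ k, U k x * pd (U i) k x) + (∑ k, pd (fun y => V k y * V i y) k x)) * pd P j x)
           * C n j i x) x - L n x := by
      intro x
      simp only [hR, hL, Hpot, hg, hG, Fin.sum_univ_three]
      ring
    have z4 : ∫ x, R n x = - ∫ x, L n x := by
      rw [integral_congr_ae (Eventually.of_forall z3), integral_sub z1 (hLi n), z2, zero_sub]
    calc ‖∫ x, L n x‖ₑ = ‖∫ x, R n x‖ₑ := by rw [z4, enorm_neg]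
      _ ≤ ∫⁻ x, ‖R n x‖ₑ := enorm_integral_le_lintegral_enorm _
      _ ≤ Q := by
        have hall : ∀ᵐ x : R3, ∀ i j, |C n i j x| ≤ a x := by
          rw [ae_all_iff]; intro i; rw [ae_all_iff]; intro j; exact hCa n i j
        apply lintegral_mono_ae
        filter_upwards [hall] with x hx
        rw [Real.enorm_eq_ofReal_abs]
        apply ENNReal.ofReal_le_ofReal
        refine (Finset.abs_sum_le_sum_abs _ _).trans (Finset.sum_le_sum fun i _ => ?_)
        refine (Finset.abs_sum_le_sum_abs _ _).trans (Finset.sum_le_sum fun j _ => ?_)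
        rw [abs_mul]
        exact mul_le_mul_of_nonneg_left (hx j i) (abs_nonneg _)
  have ht : Tendsto (fun n => ∫ x, L n x) atTop (nhds (∫ x, L' x)) := by
    have e1 : ∀ n, ∫ x, L n x = ∑ i, ∫ x, g i x * un n i x := fun n =>
      integral_finsetSum _ fun i _ => ((hgs i).mul (hun n i)).int (hgc i).mul_right
    have e2 : ∫ x, L' x = ∑ i, ∫ x, g i x * U i x :=
      integral_finsetSum _ fun i _ => ((hgs i).mul (hU i)).int (hgc i).mul_right
    rw [e2]; simp only [e1]
    exact tendsto_finsetSum _ fun i _ => dom_conv (hgs i) (hgc i) (fun n => hun n i) (hbd i)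
      (hlim i)
  have hle : ‖∫ x, L' x‖ₑ ≤ Q := le_of_tendsto ht.enorm (Eventually.of_forall hn)
  obtain ⟨w1, w2⟩ := energy_id hθ hP h hU hV hdiv h2 h3
  have hEs : Sm (fun x => P x * Eden U V θ x) := by
    refine hP.mul ?_
    unfold Eden
    exact ((ContDiff.sum fun i _ => ContDiff.sum fun k _ => ((hU i).pd k).pow 2).add
      (ContDiff.sum fun i _ => ContDiff.sum fun k _ => ((hV i).pd k).pow 2)).add
      (ContDiff.sum fun k _ => (hθ.pd k).pow 2)
  have hEi : Integrable (fun x => P x * Eden U V θ x) := hEs.int h.mul_right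
  have hHe : ∀ x, Hloc U V θ P x = L' x - P x * Eden U V θ x - (fun x => ∑ i, (-lap (U i) x + (∑ j, U j x * pd (U i) j x)
        + (∑ j, pd (fun y => V j y * V i y) j x)) * (P x * U i x)
      - (P x * (∑ i, ∑ k, pd (U i) k x ^ 2 + ∑ i, ∑ k, pd (V i) k x ^ 2 + ∑ k, pd θ k x ^ 2)
        + (∑ i, ∑ k, U i x * pd (U i) k x * pd P k x + ∑ i, ∑ k, V i x * pd (V i) k x * pd P k x
            + ∑ k, θ x * pd θ k x * pd P k x)
        - (1/2) * ((∑ i, U i x ^ 2) + (∑ i, V i x ^ 2) + θ x ^ 2) * (∑ j, U j x * pd P j x)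
        - (∑ i, ∑ j, V j x * V i x * U i x * pd P j x)
        - θ x * ∑ j, V j x * pd P j x)) x := by
    intro x
    simp only [hL', Hloc, hg, hG, Eden, Fin.sum_univ_three]
    ring
  have hHm : Measurable (Hloc U V θ P) := by
    have s1 : Continuous (Hloc U V θ P) := by
      unfold Hloc
      have c1 : ∀ i, Continuous (U i) := fun i => (hU i).cont
      have c2 : ∀ i, Continuous (V i) := fun i => (hV i).cont
      have c3 : ∀ i k, Continuous (pd (U i) k) := fun i k => ((hU i).pd k).cont
      have c4 : ∀ i k, Continuous (pd (V i) k) := fun i k => ((hV i).pd k).cont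
      have c5 : ∀ k, Continuous (pd P k) := fun k => (hP.pd k).cont
      have c6 : ∀ k, Continuous (pd θ k) := fun k => (hθ.pd k).cont
      have c7 := hθ.cont
      have c8 : ∀ i j k, Continuous (pd (fun y => U i y * pd P j y) k) :=
        fun i j k => ((hUP i j).pd k).cont
      fun_prop
    exact s1.measurable
  have hHint : ∫ x, Hloc U V θ P x = (∫ x, L' x) - ∫ x, P x * Eden U V θ x := by
    clear_value L'
    rw [integral_congr_ae (Eventually.of_forall hHe)]
    have q := hLi'.sub hEi
    have := integral_sub q w1
    rw [w2, sub_zero] at this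
    rw [← integral_sub hLi' hEi]
    exact this
  have hE0 : ∀ x, 0 ≤ P x * Eden U V θ x := fun x => mul_nonneg (hP0 x) (by unfold Eden; positivity)
  rw [← ofReal_integral_eq_lintegral_ofReal hEi (Eventually.of_forall hE0)]
  calc ENNReal.ofReal (∫ x, P x * Eden U V θ x)
      ≤ ‖∫ x, P x * Eden U V θ x‖ₑ := Real.ofReal_le_enorm _
    _ = ‖(∫ x, L' x) - ∫ x, Hloc U V θ P x‖ₑ := by rw [hHint]; congr 1; ring
    _ ≤ ‖∫ x, L' x‖ₑ + ‖∫ x, Hloc U V θ P x‖ₑ := enorm_sub_le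
    _ ≤ Q + ∫⁻ x, ‖Hloc U V θ P x‖ₑ := add_le_add hle (enorm_integral_le_lintegral_enorm _)
    _ = ∫⁻ x, ENNReal.ofReal (|Hloc U V θ P x| + ∑ i, ∑ j, |Hpot U V P i j x| * a x) := ?_
  rw [add_comm, ← lintegral_add_left hHm.enorm]
  congr 1; funext x
  rw [Real.enorm_eq_ofReal_abs]
  rw [ENNReal.ofReal_add (abs_nonneg _)]
  exact Finset.sum_nonneg fun i _ => Finset.sum_nonneg fun j _ => mul_nonneg (abs_nonneg _) (ha x)

def cv (f g : R3 → ℝ) : R3 → ℝ :=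
  convolution f g (ContinuousLinearMap.lsmul ℝ ℝ) volume

lemma cv_apply (f g : R3 → ℝ) (x : R3) : cv f g x = ∫ t, f t * g (x - t) := rfl

lemma cv_sm {f g : R3 → ℝ} (hf : Sm f) (h : HasCompactSupport f) (hg : Sm g) : Sm (cv f g) :=
  h.contDiff_convolution_left _ hf hg.cont.locallyIntegrable

lemma cv_int {f g : R3 → ℝ} (hf : Sm f) (h : HasCompactSupport f) (hg : Sm g) (x : R3) :
    Integrable (fun t => f t * g (x - t)) := by
  apply Continuous.integrable_of_hasCompactSupport
  · exact hf.cont.mul (hg.cont.comp (continuous_const.sub continuous_id))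
  · exact h.mul_right

lemma cv_pd {f g : R3 → ℝ} (hf : Sm f) (h : HasCompactSupport f) (hg : Sm g) (j : Fin 3) :
    pd (cv f g) j = cv (pd f j) g := by
  funext x
  have h1 := h.hasFDerivAt_convolution_left (ContinuousLinearMap.lsmul ℝ ℝ) (μ := volume)
    (ContDiff.of_le hf (by exact_mod_cast le_top)) hg.cont.locallyIntegrable x
  unfold pd cv
  rw [h1.fderiv]
  simp only [convolution]
  rw [ContinuousLinearMap.integral_apply]
  · rfl
  · have := (h.fderiv (𝕜 := ℝ)).convolutionExists_left ((ContinuousLinearMap.lsmul ℝ ℝ).precompL R3)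
      (μ := volume)
      (ContDiff.continuous_fderiv hf (by simp)) hg.cont.locallyIntegrable
    exact this x

lemma cv_sub_left {f f' g : R3 → ℝ} (hf : Sm f) (h : HasCompactSupport f) (hf' : Sm f')
    (h' : HasCompactSupport f') (hg : Sm g) (x : R3) :
    cv (fun x => f x - f' x) g x = cv f g x - cv f' g x := by
  simp only [cv_apply]
  rw [← integral_sub (cv_int hf h hg x) (cv_int hf' h' hg x)]
  congr 1; funext t; ring

lemma cv_div {f : R3 → ℝ} {U : Fin 3 → R3 → ℝ} (hf : Sm f) (h : HasCompactSupport f)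
    (hU : ∀ i, Sm (U i)) (hdiv : ∀ x, ∑ j, pd (U j) j x = 0) (x : R3) :
    ∑ l, cv (pd f l) (U l) x = 0 := by
  have hs : ∀ l, Sm (fun t => U l (x - t)) := fun l =>
    ContDiff.comp (hU l) (contDiff_const.sub contDiff_id)
  have hp : ∀ l t, pd (fun t => U l (x - t)) l t = - pd (U l) l (x - t) := by
    intro l t
    unfold pd
    have := ((hU l).diff (x - t)).hasFDerivAt.comp t ((hasFDerivAt_id t).const_sub x)
    have e : (fun t => U l (x - t)) = (U l) ∘ (HSub.hSub x) := rfl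
    rw [e, this.fderiv]
    simp
  have key : ∀ l, ZI (fun t => pd (fun t => f t * U l (x - t)) l t) := fun l =>
    ZI.pd (hf.mul (hs l)) h.mul_right l
  have := (ZI.sum key).2
  simp only [cv_apply]
  rw [← integral_finsetSum _ fun l _ => cv_int (hf.pd l) (h.pd l) (hU l) x, ← this]
  congr 1; funext t
  have e : ∀ l, _ := fun l => pd_mul hf (hs l) l t
  simp only [e, hp]
  rw [Finset.sum_add_distrib, ← Finset.mul_sum, Finset.sum_neg_distrib, hdiv]
  ring

lemma cs_sum {F : Fin 3 → R3 → ℝ} (hF : ∀ i, HasCompactSupport (F i)) :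
      HasCompactSupport (fun x => ∑ j, F j x) := by
  simp only [Fin.sum_univ_three]
  exact ((hF 0).add (hF 1)).add (hF 2)

lemma pd_sum {F : Fin 3 → R3 → ℝ} (hF : ∀ i, Sm (F i)) (k : Fin 3) (x : R3) :
    pd (fun x => ∑ j, F j x) k x = ∑ j, pd (F j) k x := by
  simp only [Fin.sum_univ_three]
  rw [pd_add ((hF 0).add (hF 1)) (hF 2), pd_add (hF 0) (hF 1)]

lemma pot_of_kernel {K U : Fin 3 → R3 → ℝ} (hK : ∀ i, Sm (K i)) (hc : ∀ i, HasCompactSupport (K i))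
    (hsym : ∀ i j, pd (K i) j = pd (K j) i)
    (hU : ∀ i, Sm (U i)) (hdiv : ∀ x, ∑ j, pd (U j) j x = 0) :
    (∀ i, Sm (cv (fun x => ∑ j, pd (K j) j x) (U i))) ∧
    (∀ i j, Sm (fun x => cv (K i) (U j) x - cv (K j) (U i) x)) ∧
    (∀ i x, ∑ j, pd (fun x => cv (K j) (U i) x - cv (K i) (U j) x) j x
      = cv (fun x => ∑ j, pd (K j) j x) (U i) x) ∧
    (∀ i j x, lap (fun x => cv (K j) (U i) x - cv (K i) (U j) x) x =
      pd (cv (fun x => ∑ j, pd (K j) j x) (U i)) j x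
      - pd (cv (fun x => ∑ j, pd (K j) j x) (U j)) i x) := by
  have hD : Sm (fun x => ∑ j, pd (K j) j x) := ContDiff.sum fun j _ => (hK j).pd j
  have hDc : HasCompactSupport (fun x => ∑ j, pd (K j) j x) := cs_sum fun j => (hc j).pd j
  have hB : ∀ i j, Sm (cv (K i) (U j)) := fun i j => cv_sm (hK i) (hc i) (hU j)
  have hsum : ∀ i x, cv (fun x => ∑ j, pd (K j) j x) (U i) x = ∑ j, cv (pd (K j) j) (U i) x := by
    intro i x
    simp only [cv_apply]
    rw [← integral_finsetSum _ fun l _ => cv_int ((hK l).pd l) ((hc l).pd l) (hU i) x]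
    congr 1; funext t
    rw [Finset.sum_mul]
  have hun : ∀ i, cv (fun x => ∑ j, pd (K j) j x) (U i) = fun x => ∑ j, pd (cv (K j) (U i)) j x := by
    intro i; funext x
    rw [hsum]
    simp only [cv_pd (hK _) (hc _) (hU i)]
  refine ⟨fun i => cv_sm hD hDc (hU i), fun i j => (hB i j).sub (hB j i), ?_, ?_⟩
  · intro i x
    simp only [pd_sub (hB _ _) (hB _ _), Finset.sum_sub_distrib]
    rw [hun, sub_eq_self]
    simp only [cv_pd (hK _) (hc _) (hU _)]
    exact cv_div (hK i) (hc i) hU hdiv x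
  · have hl : ∀ i j x, lap (cv (K j) (U i)) x = pd (cv (fun x => ∑ j, pd (K j) j x) (U i)) j x := by
      intro i j x
      rw [hun, pd_sum (fun k => (hB k i).pd k)]
      unfold lap
      refine Finset.sum_congr rfl fun k _ => ?_
      rw [pd_comm (hB k i)]
      rw [cv_pd (hK j) (hc j) (hU i), cv_pd (hK k) (hc k) (hU i), hsym]
    intro i j x
    rw [← hl, ← hl]
    unfold lap
    rw [← Finset.sum_sub_distrib]
    refine Finset.sum_congr rfl fun k _ => ?_
    have e : pd (fun x => cv (K j) (U i) x - cv (K i) (U j) x) k =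
      fun x => pd (cv (K j) (U i)) k x - pd (cv (K i) (U j)) k x := by
      funext x; exact pd_sub (hB _ _) (hB _ _) k x
    rw [e, pd_sub ((hB _ _).pd k) ((hB _ _).pd k)]

def Scut (t : ℝ) : ℝ := Real.smoothTransition (2 * t - 1)

lemma Scut_smooth : ContDiff ℝ (⊤ : ℕ∞) Scut :=
  Real.smoothTransition.contDiff.comp ((contDiff_const.mul contDiff_id).sub contDiff_const)

lemma Scut_mono : Monotone Scut := fun a b h => Real.smoothTransition.monotone (by linarith)

lemma Scut_zero {t : ℝ} (h : t ≤ 1/2) : Scut t = 0 :=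
  Real.smoothTransition.zero_of_nonpos (by linarith)

lemma Scut_one {t : ℝ} (h : 1 ≤ t) : Scut t = 1 :=
  Real.smoothTransition.one_of_one_le (by linarith)

def gker (t : ℝ) : ℝ := t ^ (-(3/2) : ℝ) * Scut t

lemma gker_zero {t : ℝ} (h : t ≤ 1/2) : gker t = 0 := by simp [gker, Scut_zero h]

lemma gker_smooth : ContDiff ℝ (⊤ : ℕ∞) gker := by
  rw [contDiff_iff_contDiffAt]
  intro t
  rcases lt_or_ge t (1/2) with h | h
  · refine (contDiffAt_const (c := (0:ℝ))).congr_of_eventuallyEq ?_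
    filter_upwards [Iio_mem_nhds h] with s hs using gker_zero (le_of_lt hs)
  · exact (Real.contDiffAt_rpow_const_of_ne (by linarith)).mul Scut_smooth.contDiffAt

lemma gker_deriv {t : ℝ} (h : 0 < t) : 3 * gker t + 2 * t * deriv gker t =
    2 * t ^ (-(1/2) : ℝ) * deriv Scut t := by
  have h1 : HasDerivAt gker _ t := (Real.hasDerivAt_rpow_const (p := -(3/2)) (Or.inl h.ne')).mul
    ((Scut_smooth.differentiable (by simp)) t).hasDerivAt
  rw [h1.deriv, gker]
  have e1 : t ^ (-(3/2) : ℝ) = t ^ (-(1/2) : ℝ) * t⁻¹ := by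
    rw [← Real.rpow_neg_one, ← Real.rpow_add h]; norm_num
  have e2 : t ^ (-(3/2) - 1 : ℝ) = t ^ (-(1/2) : ℝ) * t⁻¹ * t⁻¹ := by
    rw [← Real.rpow_neg_one, ← Real.rpow_add h, ← Real.rpow_add h]; norm_num
  rw [e1, e2]
  field_simp
  ring

lemma gker_nonneg (t : ℝ) : 0 ≤ gker t := by
  rcases le_or_gt t (1/2) with h | h
  · rw [gker_zero h]
  · exact mul_nonneg (Real.rpow_nonneg (by linarith) _) (Real.smoothTransition.nonneg _)

lemma gker_le (x : R3) (hx : x ≠ 0) : gker (‖x‖ ^ 2) ≤ (‖x‖ ^ 3)⁻¹ := by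
  have e : (‖x‖ ^ 2) ^ (-(3/2) : ℝ) = (‖x‖ ^ 3)⁻¹ := by
    rw [← Real.rpow_natCast, ← Real.rpow_mul (norm_nonneg _), ← Real.rpow_natCast,
      ← Real.rpow_neg (norm_nonneg _)]; norm_num
  rw [gker, e]
  exact mul_le_of_le_one_right (by positivity) (Real.smoothTransition.le_one _)

lemma gker_eq (x : R3) (hx : 1 ≤ ‖x‖) : gker (‖x‖ ^ 2) = (‖x‖ ^ 3)⁻¹ := by
  have e : (‖x‖ ^ 2) ^ (-(3/2) : ℝ) = (‖x‖ ^ 3)⁻¹ := by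
    rw [← Real.rpow_natCast, ← Real.rpow_mul (norm_nonneg _), ← Real.rpow_natCast,
      ← Real.rpow_neg (norm_nonneg _)]; norm_num
  rw [gker, e, Scut_one (by nlinarith), mul_one]

def K0 (j : Fin 3) (x : R3) : ℝ := x j * gker (‖x‖ ^ 2)

lemma coord_sm (j : Fin 3) : Sm (fun x : R3 => x j) := by
  have : (fun x : R3 => x j) = (EuclideanSpace.proj j : R3 →L[ℝ] ℝ) := rfl
  unfold Sm
  rw [this]; exact ContinuousLinearMap.contDiff _

lemma gn_sm : Sm (fun x : R3 => gker (‖x‖ ^ 2)) := gker_smooth.comp (contDiff_norm_sq ℝ)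

lemma K0_sm (j : Fin 3) : Sm (K0 j) := (coord_sm j).mul gn_sm

lemma pd_coord (i j : Fin 3) (x : R3) : pd (fun x : R3 => x j) i x = if i = j then 1 else 0 := by
  have : (fun x : R3 => x j) = (EuclideanSpace.proj j : R3 →L[ℝ] ℝ) := rfl
  unfold pd
  rw [this, ContinuousLinearMap.fderiv]
  simp [eq_comm]

lemma pd_gn (i : Fin 3) (x : R3) :
    pd (fun x : R3 => gker (‖x‖ ^ 2)) i x = 2 * x i * deriv gker (‖x‖ ^ 2) := by
  have h1 := (hasStrictFDerivAt_norm_sq x).hasFDerivAt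
  have h2 := ((gker_smooth.differentiable (by simp)) (‖x‖ ^ 2)).hasDerivAt
  have h3 := h2.comp_hasFDerivAt x h1
  unfold pd
  have e : (fun x : R3 => gker (‖x‖ ^ 2)) = gker ∘ (fun x => ‖x‖ ^ 2) := rfl
  rw [e, h3.fderiv]
  simp [EuclideanSpace.inner_single_right]
  ring

lemma K0_pd (i j : Fin 3) (x : R3) : pd (K0 j) i x =
    x j * (2 * x i * deriv gker (‖x‖ ^ 2)) + (if i = j then 1 else 0) * gker (‖x‖ ^ 2) := by
  unfold K0
  rw [pd_mul (coord_sm j) gn_sm, pd_gn, pd_coord]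

lemma K0_symm (i j : Fin 3) : pd (K0 i) j = pd (K0 j) i := by
  funext x
  rw [K0_pd, K0_pd]
  simp only [eq_comm (a := i)]
  ring

def D0 (x : R3) : ℝ := ∑ j, pd (K0 j) j x

lemma D0_sm : Sm D0 := ContDiff.sum fun j _ => (K0_sm j).pd j

lemma D0_eq (x : R3) : D0 x = 3 * gker (‖x‖ ^ 2) + 2 * ‖x‖ ^ 2 * deriv gker (‖x‖ ^ 2) := by
  unfold D0
  simp only [K0_pd]
  simp only [if_true]
  have : ‖x‖ ^ 2 = ∑ j, x j ^ 2 := by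
    rw [EuclideanSpace.norm_sq_eq]; simp
  generalize deriv gker (‖x‖ ^ 2) = d
  generalize gker (‖x‖ ^ 2) = g
  rw [this]
  simp only [Fin.sum_univ_three]
  ring

lemma D0_eq' (x : R3) (hx : x ≠ 0) : D0 x = 2 * (‖x‖ ^ 2) ^ (-(1/2) : ℝ) * deriv Scut (‖x‖ ^ 2) := by
  rw [D0_eq, gker_deriv (by positivity)]

lemma D0_nonneg (x : R3) : 0 ≤ D0 x := by
  by_cases hx : x = 0
  · rw [D0_eq, hx]; simp [gker_zero]
  · rw [D0_eq' x hx]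
    have : 0 ≤ deriv Scut (‖x‖ ^ 2) := Scut_mono.deriv_nonneg
    positivity

lemma D0_zero (x : R3) (hx : 1 ≤ ‖x‖) : D0 x = 0 := by
  have h0 : x ≠ 0 := by intro h; simp [h] at hx; linarith
  rw [D0_eq' x h0]
  have : deriv Scut (‖x‖ ^ 2) = 0 := by
    apply IsLocalMax.deriv_eq_zero
    refine Eventually.of_forall fun t => ?_
    rw [Scut_one (t := ‖x‖ ^ 2) (by nlinarith)]
    exact Real.smoothTransition.le_one _
  rw [this, mul_zero]

lemma D0_cs : HasCompactSupport D0 := by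
  refine HasCompactSupport.intro (isCompact_closedBall 0 1) fun x hx => D0_zero x ?_
  simp at hx; exact hx.le

def cK : ℝ := ∫ x, D0 x

lemma cK_pos : 0 < cK := by
  obtain ⟨t, ht, h⟩ := exists_deriv_eq_slope Scut (a := 1/2) (b := 1) (by norm_num)
    Scut_smooth.continuous.continuousOn (Scut_smooth.differentiable (by simp)).differentiableOn
  rw [Scut_one le_rfl, Scut_zero le_rfl] at h
  have ht0 : 0 < t := by linarith [ht.1]
  let x : R3 := EuclideanSpace.single 0 (Real.sqrt t)
  have hx : ‖x‖ ^ 2 = t := by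
    simp [x, Real.sq_sqrt ht0.le]
  have hx0 : x ≠ 0 := by
    intro h0; rw [h0] at hx; simp at hx; linarith
  refine D0_sm.cont.integral_pos_of_hasCompactSupport_nonneg_nonzero D0_cs D0_nonneg (x := x) ?_
  rw [D0_eq' x hx0, hx, h]
  have : 0 < t ^ (-(1/2) : ℝ) := Real.rpow_pos_of_pos ht0 _
  have h5 : (0:ℝ) < (1 - 0) / (1 - 1/2) := by norm_num
  positivity

lemma K0_le (j : Fin 3) (x : R3) : |K0 j x| ≤ (‖x‖ ^ 2)⁻¹ := by
  by_cases hx : x = 0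
  · simp [K0, hx]
  have h0 : 0 < ‖x‖ := norm_pos_iff.2 hx
  unfold K0
  rw [abs_mul, abs_of_nonneg (gker_nonneg _)]
  calc |x j| * gker (‖x‖ ^ 2) ≤ ‖x‖ * (‖x‖ ^ 3)⁻¹ :=
        mul_le_mul (PiLp.norm_apply_le x j) (gker_le x hx) (gker_nonneg _) h0.le
    _ = _ := by field_simp

/-- scaled kernels -/
def Kb (b : ℝ) (j : Fin 3) (x : R3) : ℝ := b ^ 2 * K0 j (b • x)

lemma pd_scale {f : R3 → ℝ} (hf : Sm f) (b c : ℝ) (i : Fin 3) (x : R3) :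
    pd (fun x => c * f (b • x)) i x = c * b * pd f i (b • x) := by
  unfold pd
  have h1 := (hf.diff (b • x)).hasFDerivAt.comp x ((hasFDerivAt_id x).const_smul b)
  have h2 := h1.const_mul c
  have e : (fun x => c * f (b • x)) = fun y => c * (f ∘ HSMul.hSMul b) y := rfl
  rw [e, h2.fderiv]
  simp
  ring

lemma sm_scale {f : R3 → ℝ} (hf : Sm f) (b c : ℝ) : Sm (fun x => c * f (b • x)) :=
  contDiff_const.mul (ContDiff.comp hf (contDiff_const_smul b))

lemma Kb_sm (b : ℝ) (j : Fin 3) : Sm (Kb b j) := sm_scale (K0_sm j) b _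

lemma Kb_pd (b : ℝ) (i j : Fin 3) (x : R3) : pd (Kb b j) i x = b ^ 3 * pd (K0 j) i (b • x) := by
  unfold Kb
  rw [pd_scale (K0_sm j)]; ring

def Db (b : ℝ) (x : R3) : ℝ := b ^ 3 * D0 (b • x)

lemma Kb_div (b : ℝ) (x : R3) : ∑ j, pd (Kb b j) j x = Db b x := by
  simp only [Kb_pd, Db, D0, Finset.mul_sum]

lemma Kb_le {b : ℝ} (hb : 0 < b) (j : Fin 3) (x : R3) : |Kb b j x| ≤ (‖x‖ ^ 2)⁻¹ := by
  unfold Kb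
  rw [abs_mul, abs_of_pos (by positivity)]
  refine (mul_le_mul_of_nonneg_left (K0_le j _) (by positivity)).trans ?_
  rw [norm_smul, Real.norm_of_nonneg hb.le]
  by_cases hx : ‖x‖ = 0
  · simp [hx]
  · apply le_of_eq; field_simp

lemma Kb_eq {b : ℝ} (hb : 0 < b) (j : Fin 3) (x : R3) (hx : 1 ≤ b * ‖x‖) :
    Kb b j x = x j * (‖x‖ ^ 3)⁻¹ := by
  unfold Kb K0
  have h1 : ‖b • x‖ = b * ‖x‖ := by rw [norm_smul, Real.norm_of_nonneg hb.le]
  rw [gker_eq _ (by rw [h1]; exact hx), h1]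
  have : ‖x‖ ≠ 0 := by intro h; rw [h] at hx; linarith
  simp only [PiLp.smul_apply, smul_eq_mul]
  field_simp

lemma Db_int {b : ℝ} (hb : 0 < b) : ∫ x, Db b x = cK := by
  unfold Db cK
  rw [integral_const_mul, Measure.integral_comp_smul]
  simp [abs_of_pos hb]
  field_simp

lemma Db_nonneg {b : ℝ} (hb : 0 < b) (x : R3) : 0 ≤ Db b x :=
  mul_nonneg (by positivity) (D0_nonneg _)

lemma Db_zero {b : ℝ} (hb : 0 < b) (x : R3) (hx : 1 ≤ b * ‖x‖) : Db b x = 0 := by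
  unfold Db
  rw [D0_zero, mul_zero]
  rw [norm_smul, Real.norm_of_nonneg hb.le]; exact hx

lemma Db_sm (b : ℝ) : Sm (Db b) := sm_scale D0_sm b _

lemma Db_cs {b : ℝ} (hb : 0 < b) : HasCompactSupport (Db b) := by
  refine HasCompactSupport.intro (isCompact_closedBall 0 b⁻¹) fun x hx => Db_zero hb x ?_
  simp at hx
  rw [mul_comm]
  exact ((inv_lt_iff_one_lt_mul₀ hb).1 hx).le

open scoped ENNReal

lemma en_young {x y : ℝ≥0∞} {α β : ℝ} (hα : 0 ≤ α) (hβ : 0 ≤ β) (h : α + β = 1) :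
    x ^ α * y ^ β ≤ x + y := by
  calc x ^ α * y ^ β ≤ (max x y) ^ α * (max x y) ^ β := by
        gcongr
        · exact le_max_left _ _
        · exact le_max_right _ _
    _ = max x y := by rw [← ENNReal.rpow_add_of_nonneg _ _ hα hβ, h, ENNReal.rpow_one]
    _ ≤ x + y := max_le le_self_add le_add_self

lemma lint_cv {k w : R3 → ℝ≥0∞} (hk : Measurable k) (hw : Measurable w) :
    ∫⁻ x, ∫⁻ t, k t * w (x - t) = (∫⁻ t, k t) * ∫⁻ x, w x := by
  rw [lintegral_lintegral_swap]
  · have : ∀ t, ∫⁻ x, k t * w (x - t) = k t * ∫⁻ x, w x := by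
      intro t
      rw [lintegral_const_mul _ (by fun_prop), lintegral_sub_right_eq_self (fun x => w x) t]
    simp only [this]
    rw [lintegral_mul_const _ hk]
  · have : Measurable (Function.uncurry fun (x t : R3) => k t * w (x - t)) := by
      unfold Function.uncurry
      exact (hk.comp measurable_snd).mul (hw.comp (measurable_fst.sub measurable_snd))
    exact this.aemeasurable

lemma lint_young {k w : R3 → ℝ≥0∞} (hk : Measurable k) (hw : Measurable w) {p : ℝ} (hp : 1 < p)
    (hkk : ∫⁻ t, k t ^ (2 * p / (2 * p - 1)) < ⊤) (hww : ∫⁻ t, w t ^ p < ⊤) :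
    ∫⁻ x, (∫⁻ t, k t * w (x - t)) ^ (2 * p) < ⊤ := by
  set κ := 2 * p / (2 * p - 1) with hκ
  have h2 : 0 < 2 * p - 1 := by linarith
  have hκ1 : 1 ≤ κ := by rw [hκ, le_div_iff₀ h2]; linarith
  have hκ2 : κ ≤ 2 := by rw [hκ, div_le_iff₀ h2]; linarith
  have hκ0 : 0 < κ := by linarith
  have hc : (2 * p).HolderConjugate κ := Real.HolderConjugate.conjExponent (by linarith)
  have e1 : (κ - 1) * (2 * p) = κ := by rw [hκ]; field_simp; ring
  set M := (∫⁻ t, k t ^ κ) + ∫⁻ t, w t ^ p with hM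
  have hMt : M < ⊤ := ENNReal.add_lt_top.2 ⟨hkk, hww⟩
  have key : ∀ x, (∫⁻ t, k t * w (x - t)) ^ (2 * p) ≤
      (∫⁻ t, k t ^ κ * w (x - t) ^ p) * M ^ (1 / κ * (2 * p)) := by
    intro x
    have hwx : Measurable fun t => w (x - t) := hw.comp (measurable_const.sub measurable_id)
    have hold := ENNReal.lintegral_mul_le_Lp_mul_Lq volume hc
      (f := fun t => k t ^ (κ - 1) * w (x - t) ^ (1/2 : ℝ))
      (g := fun t => k t ^ (2 - κ) * w (x - t) ^ (1/2 : ℝ))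
      ((hk.pow_const _).mul (hwx.pow_const _)).aemeasurable
      ((hk.pow_const _).mul (hwx.pow_const _)).aemeasurable
    have hl : ∀ t, ((fun t => k t ^ (κ - 1) * w (x - t) ^ (1/2 : ℝ)) *
        (fun t => k t ^ (2 - κ) * w (x - t) ^ (1/2 : ℝ))) t = k t * w (x - t) := by
      intro t
      simp only [Pi.mul_apply]
      calc _ = (k t ^ (κ - 1) * k t ^ (2 - κ)) * (w (x - t) ^ (1/2 : ℝ) * w (x - t) ^ (1/2 : ℝ)) := by
            ring
        _ = _ := by
          rw [← ENNReal.rpow_add_of_nonneg _ _ (by linarith) (by linarith),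
            ← ENNReal.rpow_add_of_nonneg _ _ (by norm_num) (by norm_num)]
          norm_num
    simp only [hl] at hold
    have hf : ∀ t, (k t ^ (κ - 1) * w (x - t) ^ (1/2 : ℝ)) ^ (2 * p) = k t ^ κ * w (x - t) ^ p := by
      intro t
      rw [ENNReal.mul_rpow_of_nonneg _ _ (by linarith), ← ENNReal.rpow_mul, ← ENNReal.rpow_mul, e1]
      congr 2; ring
    have hg : ∀ t, (k t ^ (2 - κ) * w (x - t) ^ (1/2 : ℝ)) ^ κ ≤ k t ^ κ + w (x - t) ^ p := by
      intro t
      rw [ENNReal.mul_rpow_of_nonneg _ _ (by linarith), ← ENNReal.rpow_mul, ← ENNReal.rpow_mul]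
      have := en_young (x := k t ^ κ) (y := w (x - t) ^ p) (α := 2 - κ) (β := κ - 1)
        (by linarith) (by linarith) (by ring)
      rw [← ENNReal.rpow_mul, ← ENNReal.rpow_mul] at this
      have e2 : 1 / 2 * κ = p * (κ - 1) := by linarith
      rw [e2, mul_comm (2 - κ)]
      exact this
    simp only [hf] at hold
    calc _ ≤ ((∫⁻ t, k t ^ κ * w (x - t) ^ p) ^ (1 / (2 * p)) * M ^ (1 / κ)) ^ (2 * p) := by
          gcongr
          refine hold.trans ?_
          gcongr
          refine (lintegral_mono hg).trans ?_
          rw [lintegral_add_left (hk.pow_const _)]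
          rw [lintegral_sub_left_eq_self (fun t => w t ^ p) x]
      _ = _ := by
          rw [ENNReal.mul_rpow_of_nonneg _ _ (by linarith), ← ENNReal.rpow_mul, ← ENNReal.rpow_mul]
          congr 1
          rw [one_div_mul_cancel (by linarith), ENNReal.rpow_one]
  refine (lintegral_mono key).trans_lt ?_
  rw [lintegral_mul_const']
  · rw [lint_cv (hk.pow_const _) (hw.pow_const _)]
    refine ENNReal.mul_lt_top (ENNReal.mul_lt_top hkk hww) ?_
    exact ENNReal.rpow_lt_top_of_nonneg (by positivity) hMt.ne
  · exact (ENNReal.rpow_lt_top_of_nonneg (by positivity) hMt.ne).ne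

/-- near kernel -/
def kn (t : R3) : ℝ := if ‖t‖ < 1 then (‖t‖ ^ 2)⁻¹ else 0

lemma kn_meas : Measurable kn := by
  unfold kn
  exact Measurable.ite (measurableSet_lt measurable_norm measurable_const) (by fun_prop) measurable_const

lemma kn_nonneg (t : R3) : 0 ≤ kn t := by unfold kn; split_ifs <;> positivity

lemma kn_int {κ : ℝ} (h0 : 0 < κ) (h : κ < 3/2) : ∫⁻ t, ENNReal.ofReal (kn t) ^ κ < ⊤ := by
  have h1 : IntegrableOn (fun x : R3 => ‖x‖ ^ (-(2 * κ))) (ball 0 1) := by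
    rw [integrableOn_fun_norm_addHaar volume (f := fun y => y ^ (-(2 * κ)))]
    have h2 : IntegrableOn (fun y : ℝ => y ^ (2 - 2 * κ)) (Set.Ioo 0 1) := by
      have := (intervalIntegral.intervalIntegrable_rpow' (a := 0) (b := 1) (r := 2 - 2 * κ) (by linarith))
      rw [intervalIntegrable_iff_integrableOn_Ioo_of_le zero_le_one] at this
      exact this
    refine h2.congr_fun (fun y hy => ?_) measurableSet_Ioo
    simp only [finrank_euclideanSpace, Fintype.card_fin, smul_eq_mul]
    rw [← Real.rpow_natCast, ← Real.rpow_add hy.1]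
    norm_num
    ring_nf
  have h3 := h1.2
  rw [hasFiniteIntegral_iff_enorm, ← lintegral_indicator measurableSet_ball] at h3
  refine (lintegral_mono fun t => ?_).trans_lt h3
  unfold kn
  by_cases ht : ‖t‖ < 1
  · rw [if_pos ht, Set.indicator_of_mem (by simpa using ht)]
    rw [ENNReal.ofReal_rpow_of_nonneg (by positivity) h0.le, ← Real.enorm_of_nonneg (by positivity)]
    apply le_of_eq
    congr 1
    rw [Real.rpow_neg (norm_nonneg _), Real.rpow_mul (norm_nonneg _), Real.inv_rpow (by positivity)]
    norm_num
  · rw [if_neg ht]; simp [h0]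

lemma far_int {r : ℝ} (h : 3/2 < r) :
    ∫⁻ t : R3, ENNReal.ofReal (if ‖t‖ < 1 then 0 else ((‖t‖ ^ 2)⁻¹) ^ r) < ⊤ := by
  have h1 : Integrable (fun x : R3 => (1 + ‖x‖) ^ (-(2 * r))) :=
    integrable_one_add_norm (by simp; linarith)
  have h3 := (h1.const_mul (2 ^ (2 * r))).2
  rw [hasFiniteIntegral_iff_enorm] at h3
  refine (lintegral_mono fun t => ?_).trans_lt h3
  rw [Real.enorm_of_nonneg (by positivity)]
  apply ENNReal.ofReal_le_ofReal
  split_ifs with ht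
  · positivity
  push Not at ht
  have h0 : 0 < ‖t‖ := by linarith
  have e : ((‖t‖ ^ 2)⁻¹) ^ r = (‖t‖⁻¹) ^ (2 * r) := by
    rw [← inv_pow, ← Real.rpow_natCast, ← Real.rpow_mul (by positivity)]; norm_num
  have e2 : (2:ℝ) ^ (2 * r) * (1 + ‖t‖) ^ (-(2 * r)) = (2 * (1 + ‖t‖)⁻¹) ^ (2 * r) := by
    rw [Real.mul_rpow (by norm_num) (by positivity), Real.rpow_neg (by positivity),
      Real.inv_rpow (by positivity)]
  rw [e, e2]
  apply Real.rpow_le_rpow (by positivity) _ (by linarith)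
  rw [← div_eq_mul_inv, le_div_iff₀ (by positivity), inv_mul_le_iff₀ h0]
  linarith

open scoped ENNReal

def Kn (n : ℕ) (j : Fin 3) (x : R3) : ℝ :=
  cK⁻¹ * (Kb ((n:ℝ)+1) j x - Kb ((n:ℝ)+1)⁻¹ j x)

lemma n1pos (n : ℕ) : (0:ℝ) < (n:ℝ) + 1 := by positivity

lemma Kn_sm (n : ℕ) (j : Fin 3) : Sm (Kn n j) :=
  contDiff_const.mul ((Kb_sm _ j).sub (Kb_sm _ j))

lemma pd_cmul {f : R3 → ℝ} (hf : Sm f) (c : ℝ) (i : Fin 3) (x : R3) :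
    pd (fun x => c * f x) i x = c * pd f i x := by
  have := pd_scale hf 1 c i x
  simpa using this

lemma Kn_pd (n : ℕ) (i j : Fin 3) (x : R3) : pd (Kn n j) i x =
    cK⁻¹ * (pd (Kb ((n:ℝ)+1) j) i x - pd (Kb ((n:ℝ)+1)⁻¹ j) i x) := by
  unfold Kn
  rw [pd_cmul ((Kb_sm _ j).sub (Kb_sm _ j)), pd_sub (Kb_sm _ j) (Kb_sm _ j)]

lemma Kn_symm (n : ℕ) (i j : Fin 3) : pd (Kn n i) j = pd (Kn n j) i := by
  funext x
  simp only [Kn_pd, Kb_pd, K0_symm i j]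

lemma Kn_div (n : ℕ) (x : R3) : ∑ j, pd (Kn n j) j x =
    cK⁻¹ * (Db ((n:ℝ)+1) x - Db ((n:ℝ)+1)⁻¹ x) := by
  simp only [Kn_pd]
  rw [← Finset.mul_sum, Finset.sum_sub_distrib, Kb_div, Kb_div]

lemma Kn_cs (n : ℕ) (j : Fin 3) : HasCompactSupport (Kn n j) := by
  refine HasCompactSupport.intro (isCompact_closedBall 0 ((n:ℝ)+1)) fun x hx => ?_
  simp at hx
  have h1 := n1pos n
  have h2 : (1:ℝ) ≤ (n:ℝ)+1 := by linarith [Nat.cast_nonneg (α := ℝ) n]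
  unfold Kn
  rw [Kb_eq h1 j x (by nlinarith), Kb_eq (inv_pos.2 h1) j x, sub_self, mul_zero]
  rw [inv_mul_eq_div, le_div_iff₀ h1]; linarith

lemma Kn_le (n : ℕ) (j : Fin 3) (x : R3) : |Kn n j x| ≤ 2 * cK⁻¹ * (‖x‖ ^ 2)⁻¹ := by
  unfold Kn
  rw [abs_mul, abs_of_pos (inv_pos.2 cK_pos)]
  have h1 := Kb_le (n1pos n) j x
  have h2 := Kb_le (inv_pos.2 (n1pos n)) j x
  have h3 := abs_sub (Kb ((n:ℝ)+1) j x) (Kb ((n:ℝ)+1)⁻¹ j x)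
  have h4 := inv_pos.2 cK_pos
  calc _ ≤ cK⁻¹ * ((‖x‖ ^ 2)⁻¹ + (‖x‖ ^ 2)⁻¹) := by
        apply mul_le_mul_of_nonneg_left _ h4.le; linarith
    _ = _ := by ring

lemma D0_bdd : ∃ B, 0 ≤ B ∧ ∀ x, D0 x ≤ B := by
  obtain ⟨B, hB⟩ := D0_cs.exists_bound_of_continuous D0_sm.cont
  exact ⟨B, (norm_nonneg _).trans (hB 0), fun x => (le_abs_self _).trans (hB x)⟩

lemma young_delta {w p δ : ℝ} (hw : 0 ≤ w) (hp : 1 ≤ p) (hδ : 0 < δ) :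
    w ≤ δ + δ ^ (1 - p) * w ^ p := by
  rcases le_or_gt w δ with h | h
  · have : 0 ≤ δ ^ (1 - p) * w ^ p := by positivity
    linarith
  · have hw0 : 0 < w := by linarith
    have : w = w ^ (1 - p) * w ^ p := by rw [← Real.rpow_add hw0]; norm_num
    have h2 : w ^ (1 - p) ≤ δ ^ (1 - p) := Real.rpow_le_rpow_of_nonpos hδ h.le (by linarith)
    have h3 := mul_le_mul_of_nonneg_right h2 (Real.rpow_nonneg hw p)
    linarith

lemma far_bound {U W : R3 → ℝ} (hU : Sm U) (hW0 : ∀ x, |U x| ≤ W x) {p : ℝ} (hp : 1 ≤ p)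
    (hWp : Integrable fun x => W x ^ p) {B : ℝ} (hB0 : 0 ≤ B) (hB : ∀ x, D0 x ≤ B)
    {b δ : ℝ} (hb : 0 < b) (hδ : 0 < δ) (x : R3) :
    |cv (Db b) U x| ≤ cK * δ + b ^ 3 * B * δ ^ (1 - p) * ∫ x, W x ^ p := by
  have hWx : Integrable (fun t => W (x - t) ^ p) := hWp.comp_sub_left x
  have i1 : Integrable (fun t => Db b t * δ) := ((Db_sm b).int (Db_cs hb)).mul_const δ
  have i2 : Integrable (fun t => b ^ 3 * B * δ ^ (1 - p) * W (x - t) ^ p) := hWx.const_mul _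
  have hn : ∀ x, 0 ≤ W x := fun x => (abs_nonneg _).trans (hW0 x)
  rw [cv_apply]
  calc |∫ t, Db b t * U (x - t)| ≤ ∫ t, |Db b t * U (x - t)| := abs_integral_le_integral_abs
    _ ≤ ∫ t, (Db b t * δ + b ^ 3 * B * δ ^ (1 - p) * W (x - t) ^ p) := by
        refine integral_mono_of_nonneg (Eventually.of_forall fun t => abs_nonneg _) (i1.add i2)
          (Eventually.of_forall fun t => ?_)
        simp only
        rw [abs_mul, abs_of_nonneg (Db_nonneg hb t)]
        have h1 := (hW0 (x - t)).trans (young_delta (hn (x - t)) hp hδ)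
        have h2 : Db b t ≤ b ^ 3 * B := mul_le_mul_of_nonneg_left (hB _) (by positivity)
        have h3 : 0 ≤ δ ^ (1 - p) * W (x - t) ^ p :=
          mul_nonneg (by positivity) (Real.rpow_nonneg (hn _) _)
        calc _ ≤ Db b t * (δ + δ ^ (1 - p) * W (x - t) ^ p) :=
              mul_le_mul_of_nonneg_left h1 (Db_nonneg hb t)
          _ = Db b t * δ + Db b t * (δ ^ (1 - p) * W (x - t) ^ p) := by ring
          _ ≤ _ := by
            have := mul_le_mul_of_nonneg_right h2 h3
            linarith
    _ = _ := by
        rw [integral_add i1 i2, integral_mul_const, Db_int hb, integral_const_mul,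
          integral_sub_left_eq_self (fun t => W t ^ p) volume x]

lemma un_eq {U : R3 → ℝ} (hU : Sm U) (n : ℕ) (x : R3) :
    cv (fun x => ∑ j, pd (Kn n j) j x) U x = cv (fun x => cK⁻¹ * Db ((n:ℝ)+1) x) U x
      - cK⁻¹ * cv (Db ((n:ℝ)+1)⁻¹) U x := by
  simp only [cv_apply, Kn_div]
  rw [← integral_const_mul, ← integral_sub]
  · congr 1; funext t; ring
  · simpa [mul_assoc] using (cv_int (Db_sm _) (Db_cs (n1pos n)) hU x).const_mul cK⁻¹
  · exact (cv_int (Db_sm _) (Db_cs (inv_pos.2 (n1pos n))) hU x).const_mul cK⁻¹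

lemma phi_supp (n : ℕ) :
    Function.support (fun x => cK⁻¹ * Db ((n:ℝ)+1) x) ⊆ ball (0:R3) (1 / ((n:ℝ)+1)) := by
  intro x hx
  by_contra h
  apply hx
  simp only [mem_ball, dist_zero_right, not_lt] at h
  simp only
  rw [Db_zero (n1pos n), mul_zero]
  rw [div_le_iff₀ (n1pos n)] at h; linarith

lemma phi_int (n : ℕ) : ∫ x, cK⁻¹ * Db ((n:ℝ)+1) x = 1 := by
  rw [integral_const_mul, Db_int (n1pos n), inv_mul_cancel₀ cK_pos.ne']

lemma un_tendsto {U W : R3 → ℝ} (hU : Sm U) (hW0 : ∀ x, |U x| ≤ W x) {p : ℝ} (hp : 1 ≤ p)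
    (hWp : Integrable fun x => W x ^ p) (x : R3) :
    Tendsto (fun n => cv (fun x => ∑ j, pd (Kn n j) j x) U x) atTop (nhds (U x)) := by
  simp only [un_eq hU]
  obtain ⟨B, hB0, hB⟩ := D0_bdd
  have t1 : Tendsto (fun n : ℕ => cv (fun x => cK⁻¹ * Db ((n:ℝ)+1) x) U x) atTop (nhds (U x)) := by
    refine convolution_tendsto_right (x₀ := x) (g := fun _ => U) (k := fun _ => x) (l := atTop) ?_ ?_ ?_ ?_ ?_ ?_
    · exact Eventually.of_forall fun n y => mul_nonneg (inv_pos.2 cK_pos).le (Db_nonneg (n1pos n) y)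
    · exact Eventually.of_forall phi_int
    · rw [tendsto_smallSets_iff]
      intro t ht
      obtain ⟨ε, hε, h⟩ := Metric.mem_nhds_iff.1 ht
      have := tendsto_one_div_add_atTop_nhds_zero_nat.eventually (gt_mem_nhds hε)
      filter_upwards [this] with n hn
      exact (phi_supp n).trans ((ball_subset_ball hn.le).trans h)
    · exact Eventually.of_forall fun n => hU.cont.aestronglyMeasurable
    · have := (hU.cont.tendsto x).comp (tendsto_snd (f := (atTop : Filter ℕ)) (g := nhds x))
      exact this
    · exact tendsto_const_nhds
  have t2 : Tendsto (fun n : ℕ => cv (Db ((n:ℝ)+1)⁻¹) U x) atTop (nhds 0) := by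
    rw [Metric.tendsto_nhds]
    intro ε hε
    set δ := ε / (2 * cK) with hδ
    have hc := cK_pos
    have hδ0 : 0 < δ := by positivity
    have t3 : Tendsto (fun n : ℕ => ((n:ℝ)+1)⁻¹ ^ 3 * B * δ ^ (1 - p) * ∫ x, W x ^ p) atTop (nhds 0) := by
      have := ((((tendsto_one_div_add_atTop_nhds_zero_nat (𝕜 := ℝ)).pow 3).mul_const B).mul_const
        (δ ^ (1 - p))).mul_const (∫ x, W x ^ p)
      simpa using this
    filter_upwards [t3.eventually (gt_mem_nhds (half_pos hε))] with n hn
    have := far_bound hU hW0 hp hWp hB0 hB (inv_pos.2 (n1pos n)) hδ0 x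
    rw [dist_zero_right, Real.norm_eq_abs]
    have e : cK * δ = ε / 2 := by rw [hδ]; field_simp
    linarith
  have := t1.sub (t2.const_mul cK⁻¹)
  simpa using this

lemma un_bdd {U W : R3 → ℝ} (hU : Sm U) (hW0 : ∀ x, |U x| ≤ W x) {p : ℝ} (hp : 1 ≤ p)
    (hWp : Integrable fun x => W x ^ p) (M : ℝ) :
    ∃ B : ℝ, ∀ n x, ‖x‖ ≤ M → |cv (fun x => ∑ j, pd (Kn n j) j x) U x| ≤ B := by
  obtain ⟨B, hB0, hB⟩ := D0_bdd
  obtain ⟨S, hS⟩ := (isCompact_closedBall (0:R3) (M+1)).exists_bound_of_continuousOn hU.cont.continuousOn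
  have hc := cK_pos
  have hI : 0 ≤ ∫ x, W x ^ p := integral_nonneg fun x =>
    Real.rpow_nonneg ((abs_nonneg _).trans (hW0 x)) _
  refine ⟨|S| + cK⁻¹ * (cK + B * ∫ x, W x ^ p), fun n x hx => ?_⟩
  rw [un_eq hU]
  refine (abs_sub _ _).trans (add_le_add ?_ ?_)
  · have := dist_convolution_le (μ := volume) (g := U) (x₀ := x) (z₀ := 0) (abs_nonneg S) (phi_supp n)
      (fun y => mul_nonneg (inv_pos.2 cK_pos).le (Db_nonneg (n1pos n) y)) (phi_int n)
      hU.cont.aestronglyMeasurable (fun y hy => by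
        rw [dist_zero_right]
        refine (hS y ?_).trans (le_abs_self S)
        rw [mem_closedBall, dist_zero_right]
        rw [mem_ball, dist_eq_norm] at hy
        have : 1 / ((n:ℝ)+1) ≤ 1 := by
          rw [div_le_iff₀ (n1pos n)]; linarith [Nat.cast_nonneg (α := ℝ) n]
        have h5 := norm_add_le (y - x) x
        simp at h5
        linarith)
    rw [dist_zero_right] at this
    exact this
  · rw [abs_mul, abs_of_pos (inv_pos.2 hc)]
    apply mul_le_mul_of_nonneg_left _ (inv_pos.2 hc).le
    have := far_bound hU hW0 hp hWp hB0 hB (inv_pos.2 (n1pos n)) one_pos x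
    have h3 : ((n:ℝ)+1)⁻¹ ^ 3 ≤ 1 := by
      apply pow_le_one₀ (by positivity)
      apply inv_le_one_of_one_le₀; linarith [Nat.cast_nonneg (α := ℝ) n]
    simp only [mul_one, Real.one_rpow] at this
    have h4 := mul_le_mul_of_nonneg_right h3 (mul_nonneg hB0 hI)
    linarith

open scoped ENNReal

def wb (W : R3 → ℝ) (x : R3) : ℝ := if 1 < W x then W x else 0

lemma split_kernel {N w p : ℝ} (hN : 0 ≤ N) (hw : 0 ≤ w) (hp : 1 < p) (hlt : Prop) [Decidable hlt] :
    N * w ≤ (if hlt then N else 0) + (if hlt then N else 0) * (if 1 < w then w else 0)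
      + ((if hlt then 0 else N ^ (p / (p - 1))) + w ^ p) := by
  have h1 : 0 ≤ w ^ p := Real.rpow_nonneg hw p
  by_cases h : hlt
  · simp only [h, if_true]
    split_ifs with hw1
    · linarith
    · push Not at hw1; nlinarith
  · simp only [h, if_false]
    have hc : (p / (p - 1)).HolderConjugate p := (Real.HolderConjugate.conjExponent hp).symm
    have := Real.young_inequality_of_nonneg hN hw hc
    have h3 : N ^ (p / (p - 1)) / (p / (p - 1)) ≤ N ^ (p / (p - 1)) :=
      div_le_self (Real.rpow_nonneg hN _) hc.lt.le
    have h4 : w ^ p / p ≤ w ^ p := div_le_self h1 hp.le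
    linarith

lemma exists_pot {U : Fin 3 → R3 → ℝ} (hU : ∀ i, Sm (U i)) (hdiv : ∀ x, ∑ j, pd (U j) j x = 0)
    {W : R3 → ℝ} (hWm : Continuous W) (hW0 : ∀ i x, |U i x| ≤ W x) {p : ℝ} (hp1 : 3/2 < p) (hp2 : p < 3)
    (hWp : ∫⁻ x, ENNReal.ofReal (W x ^ p) < ⊤) :
    ∃ (C0 : ℝ) (a1 : R3 → ℝ), 0 ≤ C0 ∧ Measurable a1 ∧ (∀ x, 0 ≤ a1 x) ∧
      ∫⁻ x, ENNReal.ofReal (a1 x ^ 2) < ⊤ ∧ ∫⁻ x, ENNReal.ofReal (a1 x ^ (2 * p)) < ⊤ ∧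
      HasPot U (fun x => C0 + a1 x) := by
  have hn : ∀ x, 0 ≤ W x := fun x => (abs_nonneg _).trans (hW0 0 x)
  have hWi : Integrable fun x => W x ^ p := by
    refine ⟨(hWm.measurable.pow_const p).aestronglyMeasurable, ?_⟩
    rw [hasFiniteIntegral_iff_enorm]
    refine (lintegral_mono fun x => ?_).trans_lt hWp
    rw [Real.enorm_of_nonneg (Real.rpow_nonneg (hn x) _)]
  have hwm : Measurable (wb W) := by
    unfold wb
    exact Measurable.ite (measurableSet_lt measurable_const hWm.measurable) hWm.measurable
      measurable_const
  have hwn : ∀ x, 0 ≤ wb W x := by intro x; unfold wb; split_ifs <;> [exact hn x; exact le_rfl]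
  set k : R3 → ℝ≥0∞ := fun t => ENNReal.ofReal (kn t) with hk
  set w : R3 → ℝ≥0∞ := fun t => ENNReal.ofReal (wb W t) with hw
  have hkm : Measurable k := kn_meas.ennreal_ofReal
  have hwm' : Measurable w := hwm.ennreal_ofReal
  set A : R3 → ℝ≥0∞ := fun x => ∫⁻ t, k t * w (x - t) with hA
  have hAm : Measurable A := by
    have : Measurable (Function.uncurry fun (x t : R3) => k t * w (x - t)) := by
      unfold Function.uncurry
      exact (hkm.comp measurable_snd).mul (hwm'.comp (measurable_fst.sub measurable_snd))
    exact this.lintegral_prod_right'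
  have hk1 : ∫⁻ t, k t < ⊤ := by
    have := kn_int (κ := 1) (by norm_num) (by norm_num)
    simpa using this
  have hwp : ∫⁻ t, w t ^ p < ⊤ := by
    refine (lintegral_mono fun x => ?_).trans_lt hWp
    simp only [hw]
    rw [ENNReal.ofReal_rpow_of_nonneg (hwn x) (by linarith)]
    apply ENNReal.ofReal_le_ofReal
    apply Real.rpow_le_rpow (hwn x) _ (by linarith)
    unfold wb; split_ifs <;> [exact le_rfl; exact hn x]
  have hw1 : ∫⁻ t, w t < ⊤ := by
    refine (lintegral_mono fun x => ?_).trans_lt hWp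
    simp only [hw]
    apply ENNReal.ofReal_le_ofReal
    unfold wb; split_ifs with h
    · exact Real.self_le_rpow_of_one_le h.le (by linarith)
    · exact Real.rpow_nonneg (hn x) _
  have hA1 : ∫⁻ x, A x < ⊤ := by
    simp only [hA]
    rw [lint_cv hkm hwm']
    exact ENNReal.mul_lt_top hk1 hw1
  have hAs : ∫⁻ x, A x ^ (2 * p) < ⊤ := by
    refine lint_young hkm hwm' (by linarith) ?_ hwp
    apply kn_int
    · apply div_pos <;> linarith
    · rw [div_lt_iff₀ (by linarith)]; linarith
  have hAf : ∀ᵐ x, A x < ⊤ := ae_lt_top hAm hA1.ne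
  set Z : ℝ≥0∞ := (∫⁻ t, k t) + ((∫⁻ t : R3, ENNReal.ofReal (if ‖t‖ < 1 then 0 else ((‖t‖ ^ 2)⁻¹) ^ (p / (p - 1))))
    + ∫⁻ x, ENNReal.ofReal (W x ^ p)) with hZ
  have hZt : Z < ⊤ := by
    refine ENNReal.add_lt_top.2 ⟨hk1, ENNReal.add_lt_top.2 ⟨far_int ?_, hWp⟩⟩
    rw [lt_div_iff₀ (by linarith)]; linarith
  have hc : 0 < cK⁻¹ := inv_pos.2 cK_pos
  set D := 4 * cK⁻¹ with hD
  have hD0 : 0 < D := by positivity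
  have hbase : ∀ x, ∫⁻ t, ENNReal.ofReal ((‖t‖ ^ 2)⁻¹ * W (x - t)) ≤ Z + A x := by
    intro x
    have m2 : Measurable fun t => k t * w (x - t) :=
      hkm.mul (hwm'.comp (measurable_const.sub measurable_id))
    have m3 : Measurable fun t : R3 => ENNReal.ofReal (if ‖t‖ < 1 then 0 else ((‖t‖ ^ 2)⁻¹) ^ (p / (p - 1))) := by
      refine Measurable.ennreal_ofReal (Measurable.ite (measurableSet_lt measurable_norm measurable_const) measurable_const (by fun_prop))
    calc _ ≤ ∫⁻ t, (k t + k t * w (x - t) + (ENNReal.ofReal (if ‖t‖ < 1 then 0 else ((‖t‖ ^ 2)⁻¹) ^ (p / (p - 1)))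
            + ENNReal.ofReal (W (x - t) ^ p))) := by
          refine lintegral_mono fun t => ?_
          have := split_kernel (N := (‖t‖ ^ 2)⁻¹) (w := W (x - t)) (p := p) (by positivity) (hn _) (by linarith) (‖t‖ < 1)
          simp only [hk, hw]
          rw [← ENNReal.ofReal_mul (kn_nonneg t), ← ENNReal.ofReal_add (kn_nonneg t) (mul_nonneg (kn_nonneg t) (hwn _)),
            ← ENNReal.ofReal_add (by split_ifs <;> positivity) (Real.rpow_nonneg (hn _) _),
            ← ENNReal.ofReal_add (add_nonneg (kn_nonneg t) (mul_nonneg (kn_nonneg t) (hwn _)))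
              (add_nonneg (by split_ifs <;> positivity) (Real.rpow_nonneg (hn _) _))]
          exact ENNReal.ofReal_le_ofReal this
      _ = _ := by
          have m4 : Measurable fun t => k t + k t * w (x - t) := hkm.add m2
          rw [lintegral_add_left m4, lintegral_add_left hkm, lintegral_add_left m3,
            lintegral_sub_left_eq_self (fun t => ENNReal.ofReal (W t ^ p)) x]
          simp only [hA, hZ]
          ring
  have hcv : ∀ n i j x, A x < ⊤ → |cv (Kn n i) (U j) x| ≤ 2 * cK⁻¹ * (Z.toReal + (A x).toReal) := by
    intro n i j x hx
    have hb := hbase x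
    have e0 : ‖cv (Kn n i) (U j) x‖ₑ ≤ ENNReal.ofReal (2 * cK⁻¹) * (Z + A x) := by
      calc _ ≤ ∫⁻ t, ‖Kn n i t * U j (x - t)‖ₑ := enorm_integral_le_lintegral_enorm _
        _ ≤ ∫⁻ t, ENNReal.ofReal (2 * cK⁻¹) * ENNReal.ofReal ((‖t‖ ^ 2)⁻¹ * W (x - t)) := by
          refine lintegral_mono fun t => ?_
          rw [← ENNReal.ofReal_mul (by positivity), Real.enorm_eq_ofReal_abs]
          apply ENNReal.ofReal_le_ofReal
          rw [abs_mul, ← mul_assoc]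
          exact mul_le_mul (Kn_le n i t) (hW0 j _) (abs_nonneg _) (by positivity)
        _ = ENNReal.ofReal (2 * cK⁻¹) * ∫⁻ t, ENNReal.ofReal ((‖t‖ ^ 2)⁻¹ * W (x - t)) :=
          lintegral_const_mul' _ _ ENNReal.ofReal_ne_top
        _ ≤ _ := by gcongr
    have e1 := ENNReal.toReal_mono (ENNReal.mul_lt_top ENNReal.ofReal_lt_top (ENNReal.add_lt_top.2 ⟨hZt, hx⟩)).ne e0
    rw [ENNReal.toReal_mul, ENNReal.toReal_add hZt.ne hx.ne, ENNReal.toReal_ofReal (by positivity)] at e1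
    simpa using e1
  refine ⟨D * Z.toReal, fun x => D * (A x).toReal, by positivity, (hAm.ennreal_toReal).const_mul D,
    fun x => by positivity, ?_, ?_, ?_⟩
  · have : ∫⁻ x, (ENNReal.ofReal (D ^ 2) * (A x + A x ^ (2 * p))) < ⊤ := by
      rw [lintegral_const_mul' _ _ ENNReal.ofReal_ne_top, lintegral_add_left hAm]
      exact ENNReal.mul_lt_top ENNReal.ofReal_lt_top (ENNReal.add_lt_top.2 ⟨hA1, hAs⟩)
    refine (lintegral_mono fun x => ?_).trans_lt this
    rw [mul_pow, ENNReal.ofReal_mul (by positivity)]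
    gcongr
    rw [ENNReal.ofReal_pow (by positivity)]
    refine (pow_le_pow_left' ENNReal.ofReal_toReal_le 2).trans ?_
    rcases le_or_gt (A x) 1 with h | h
    · refine le_trans ?_ le_self_add
      rw [pow_two]; exact mul_le_of_le_one_right' h
    · refine le_trans ?_ le_add_self
      rw [← ENNReal.rpow_natCast]
      exact ENNReal.rpow_le_rpow_of_exponent_le h.le (by push_cast; linarith)
  · have : ∫⁻ x, (ENNReal.ofReal (D ^ (2 * p)) * (A x ^ (2 * p))) < ⊤ := by
      rw [lintegral_const_mul' _ _ ENNReal.ofReal_ne_top]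
      exact ENNReal.mul_lt_top ENNReal.ofReal_lt_top hAs
    refine (lintegral_mono fun x => ?_).trans_lt this
    rw [Real.mul_rpow hD0.le (by positivity), ENNReal.ofReal_mul (by positivity)]
    gcongr
    rw [← ENNReal.ofReal_rpow_of_nonneg (by positivity) (by linarith)]
    gcongr
    exact ENNReal.ofReal_toReal_le
  · refine ⟨fun n i => cv (fun x => ∑ j, pd (Kn n j) j x) (U i),
      fun n i j x => cv (Kn n i) (U j) x - cv (Kn n j) (U i) x, ?_, ?_, ?_, ?_, ?_, ?_, ?_, ?_⟩
    · exact fun n => (pot_of_kernel (Kn_sm n) (Kn_cs n) (Kn_symm n) hU hdiv).1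
    · exact fun n => (pot_of_kernel (Kn_sm n) (Kn_cs n) (Kn_symm n) hU hdiv).2.1
    · intro n i j x; ring
    · exact fun n => (pot_of_kernel (Kn_sm n) (Kn_cs n) (Kn_symm n) hU hdiv).2.2.1
    · exact fun n => (pot_of_kernel (Kn_sm n) (Kn_cs n) (Kn_symm n) hU hdiv).2.2.2
    · exact fun i M => un_bdd (hU i) (hW0 i) (by linarith) hWi M
    · exact fun i x => un_tendsto (hU i) (hW0 i) (by linarith) hWi x
    · intro n i j
      filter_upwards [hAf] with x hx
      have h1 := hcv n i j x hx
      have h2 := hcv n j i x hx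
      refine (abs_sub _ _).trans ?_
      rw [hD]
      linarith

open scoped ENNReal

def bmp : ContDiffBump (0 : R3) := ⟨1, 2, by norm_num, by norm_num⟩

def ph (x : R3) : ℝ := bmp x

lemma ph_sm : Sm ph := bmp.contDiff
lemma ph_nonneg (x : R3) : 0 ≤ ph x := bmp.nonneg
lemma ph_le_one (x : R3) : ph x ≤ 1 := bmp.le_one
lemma ph_one {x : R3} (h : ‖x‖ ≤ 1) : ph x = 1 :=
  bmp.one_of_mem_closedBall (by simpa [bmp] using h)
lemma ph_zero {x : R3} (h : 2 ≤ ‖x‖) : ph x = 0 :=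
  bmp.zero_of_le_dist (by simpa [bmp] using h)

lemma Sm.pow {f : R3 → ℝ} (hf : Sm f) (k : ℕ) : Sm (fun x => f x ^ k) := ContDiff.pow hf k

lemma pd_pow {f : R3 → ℝ} (hf : Sm f) (k : ℕ) (j : Fin 3) (x : R3) :
    pd (fun x => f x ^ (k+1)) j x = f x ^ k * ((k+1) * pd f j x) := by
  induction k with
  | zero => simp
  | succ k ih =>
    have e : (fun x => f x ^ (k+1+1)) = fun x => f x ^ (k+1) * f x := by funext x; ring
    rw [e, pd_mul (hf.pow _) hf, ih]
    push_cast; ring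

lemma pd_powmul {f h : R3 → ℝ} (hf : Sm f) (hh : Sm h) (k : ℕ) (j : Fin 3) :
    pd (fun x => f x ^ (k+1) * h x) j =
      fun x => f x ^ k * (f x * pd h j x + (k+1) * pd f j x * h x) := by
  funext x
  rw [pd_mul (hf.pow _) hh, pd_pow hf]
  ring

lemma sm_next {f h : R3 → ℝ} (hf : Sm f) (hh : Sm h) (k : ℕ) (j : Fin 3) :
    Sm (fun x => f x * pd h j x + (k+1) * pd f j x * h x) :=
  (hf.mul (hh.pd j)).add ((contDiff_const.mul (hf.pd j)).mul hh)

lemma bdd_ball {h : R3 → ℝ} (hh : Sm h) : ∃ B : ℝ, 0 ≤ B ∧ ∀ x, ‖x‖ ≤ 2 → |h x| ≤ B := by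
  obtain ⟨B, hB⟩ := (isCompact_closedBall (0:R3) 2).exists_bound_of_continuousOn hh.cont.continuousOn
  refine ⟨|B|, abs_nonneg _, fun x hx => (hB x (by simpa using hx)).trans (le_abs_self B)⟩

lemma ph_bd {h : R3 → ℝ} (hh : Sm h) (k : ℕ) : ∃ B : ℝ, 0 ≤ B ∧
    ∀ x, |ph x ^ (k+1) * h x| ≤ B * ph x ^ (k+1) := by
  obtain ⟨B, hB0, hB⟩ := bdd_ball hh
  refine ⟨B, hB0, fun x => ?_⟩
  rcases le_or_gt ‖x‖ 2 with hx | hx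
  · rw [abs_mul, abs_of_nonneg (pow_nonneg (ph_nonneg x) _), mul_comm]
    exact mul_le_mul_of_nonneg_right (hB x hx) (pow_nonneg (ph_nonneg x) _)
  · simp [ph_zero hx.le]

lemma cut0 (m : ℕ) : ∃ c : ℝ, 0 < c ∧
    (∀ j x, |pd (fun x => ph x ^ (m+4)) j x| ≤ c * ph x ^ (m+3)) ∧
    (∀ j k x, |pd (pd (fun x => ph x ^ (m+4)) j) k x| ≤ c * ph x ^ (m+2)) ∧
    (∀ j k l x, |pd (pd (pd (fun x => ph x ^ (m+4)) j) k) l x| ≤ c * ph x ^ (m+1)) := by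
  set h1 : Fin 3 → R3 → ℝ := fun j x => ((m+3:ℕ)+1) * pd ph j x with hh1
  have s1 : ∀ j, Sm (h1 j) := fun j => contDiff_const.mul (ph_sm.pd j)
  set h2 : Fin 3 → Fin 3 → R3 → ℝ := fun j k x => ph x * pd (h1 j) k x + ((m+2:ℕ)+1) * pd ph k x * h1 j x with hh2
  have s2 : ∀ j k, Sm (h2 j k) := fun j k => sm_next ph_sm (s1 j) (m+2) k
  set h3 : Fin 3 → Fin 3 → Fin 3 → R3 → ℝ :=
    fun j k l x => ph x * pd (h2 j k) l x + ((m+1:ℕ)+1) * pd ph l x * h2 j k x with hh3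
  have s3 : ∀ j k l, Sm (h3 j k l) := fun j k l => sm_next ph_sm (s2 j k) (m+1) l
  have e1 : ∀ j, pd (fun x => ph x ^ (m+4)) j = fun x => ph x ^ (m+3) * h1 j x := by
    intro j; funext x; exact pd_pow ph_sm (m+3) j x
  have e2 : ∀ j k, pd (pd (fun x => ph x ^ (m+4)) j) k = fun x => ph x ^ (m+2) * h2 j k x := by
    intro j k; rw [e1]; exact pd_powmul ph_sm (s1 j) (m+2) k
  have e3 : ∀ j k l, pd (pd (pd (fun x => ph x ^ (m+4)) j) k) l = fun x => ph x ^ (m+1) * h3 j k l x := by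
    intro j k l; rw [e2]; exact pd_powmul ph_sm (s2 j k) (m+1) l
  choose B1 p1 q1 using fun j => ph_bd (s1 j) (m+2)
  choose B2 p2 q2 using fun j k => ph_bd (s2 j k) (m+1)
  choose B3 p3 q3 using fun j k l => ph_bd (s3 j k l) m
  refine ⟨1 + (∑ j, B1 j) + (∑ j, ∑ k, B2 j k) + ∑ j, ∑ k, ∑ l, B3 j k l, ?_, ?_, ?_, ?_⟩
  · have := Finset.sum_nonneg fun j (_ : j ∈ Finset.univ) => p1 j
    have := Finset.sum_nonneg fun j (_ : j ∈ Finset.univ) => Finset.sum_nonneg fun k (_ : k ∈ Finset.univ) => p2 j k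
    have := Finset.sum_nonneg fun j (_ : j ∈ Finset.univ) => Finset.sum_nonneg fun k (_ : k ∈ Finset.univ) =>
      Finset.sum_nonneg fun l (_ : l ∈ Finset.univ) => p3 j k l
    linarith
  all_goals
    have t1 := Finset.sum_nonneg fun j (_ : j ∈ Finset.univ) => p1 j
    have t2 := Finset.sum_nonneg fun j (_ : j ∈ Finset.univ) => Finset.sum_nonneg fun k (_ : k ∈ Finset.univ) => p2 j k
    have t3 := Finset.sum_nonneg fun j (_ : j ∈ Finset.univ) => Finset.sum_nonneg fun k (_ : k ∈ Finset.univ) =>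
      Finset.sum_nonneg fun l (_ : l ∈ Finset.univ) => p3 j k l
  · intro j x
    rw [e1]
    refine (q1 j x).trans (mul_le_mul_of_nonneg_right ?_ (pow_nonneg (ph_nonneg x) _))
    have := Finset.single_le_sum (fun j (_ : j ∈ Finset.univ) => p1 j) (Finset.mem_univ j)
    linarith
  · intro j k x
    rw [e2]
    refine (q2 j k x).trans (mul_le_mul_of_nonneg_right ?_ (pow_nonneg (ph_nonneg x) _))
    have i1 := Finset.single_le_sum (fun k (_ : k ∈ Finset.univ) => p2 j k) (Finset.mem_univ k)
    have i2 := Finset.single_le_sum (f := fun j => ∑ k, B2 j k) (fun j (_ : j ∈ Finset.univ) =>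
      Finset.sum_nonneg fun k (_ : k ∈ Finset.univ) => p2 j k) (Finset.mem_univ j)
    linarith
  · intro j k l x
    rw [e3]
    refine (q3 j k l x).trans (mul_le_mul_of_nonneg_right ?_ (pow_nonneg (ph_nonneg x) _))
    have i1 := Finset.single_le_sum (fun l (_ : l ∈ Finset.univ) => p3 j k l) (Finset.mem_univ l)
    have i2 := Finset.single_le_sum (f := fun k => ∑ l, B3 j k l) (fun k (_ : k ∈ Finset.univ) =>
      Finset.sum_nonneg fun l (_ : l ∈ Finset.univ) => p3 j k l) (Finset.mem_univ k)
    have i3 := Finset.single_le_sum (f := fun j => ∑ k, ∑ l, B3 j k l) (fun j (_ : j ∈ Finset.univ) =>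
      Finset.sum_nonneg fun k (_ : k ∈ Finset.univ) => Finset.sum_nonneg fun l (_ : l ∈ Finset.univ) => p3 j k l) (Finset.mem_univ j)
    linarith

/-- scaled cutoff -/
def phR (R : ℝ) (x : R3) : ℝ := ph (R⁻¹ • x)

lemma phR_sm (R : ℝ) : Sm (phR R) := by
  have := sm_scale ph_sm R⁻¹ 1
  simp only [one_mul] at this
  exact this

lemma pd_sc {f : R3 → ℝ} (hf : Sm f) (b c : ℝ) (i : Fin 3) :
    pd (fun x => c * f (b • x)) i = fun x => (c * b) * pd f i (b • x) := by
  funext x; rw [pd_scale hf]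

lemma pd_locconst {f : R3 → ℝ} {c R : ℝ} (h : ∀ x, ‖x‖ < R → f x = c) (j : Fin 3) (x : R3)
    (hx : ‖x‖ < R) : pd f j x = 0 := by
  unfold pd
  have : f =ᶠ[nhds x] fun _ => c := by
    filter_upwards [isOpen_ball.mem_nhds (show x ∈ ball (0:R3) R by simpa using hx)] with y hy
    exact h y (by simpa using hy)
  rw [this.fderiv_eq]; simp

lemma cutR (m : ℕ) : ∃ c : ℝ, 0 < c ∧ ∀ R : ℝ, 0 < R →
    (∀ j x, |pd (fun x => phR R x ^ (m+4)) j x| ≤ c * R⁻¹ * phR R x ^ (m+3)) ∧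
    (∀ j k x, |pd (pd (fun x => phR R x ^ (m+4)) j) k x| ≤ c * R⁻¹ ^ 2 * phR R x ^ (m+2)) ∧
    (∀ j k l x, |pd (pd (pd (fun x => phR R x ^ (m+4)) j) k) l x| ≤ c * R⁻¹ ^ 3 * phR R x ^ (m+1)) := by
  obtain ⟨c, hc, h1, h2, h3⟩ := cut0 m
  refine ⟨c, hc, fun R hR => ?_⟩
  have hR' : 0 < R⁻¹ := inv_pos.2 hR
  have e0 : (fun x => phR R x ^ (m+4)) = fun x => 1 * (fun x => ph x ^ (m+4)) (R⁻¹ • x) := by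
    funext x; simp [phR]
  have s := ph_sm.pow (m+4)
  have e1 : ∀ j, pd (fun x => phR R x ^ (m+4)) j = fun x => (1 * R⁻¹) * pd (fun x => ph x ^ (m+4)) j (R⁻¹ • x) := by
    intro j; rw [e0]; exact pd_sc s _ _ j
  have e2 : ∀ j k, pd (pd (fun x => phR R x ^ (m+4)) j) k =
      fun x => (1 * R⁻¹ * R⁻¹) * pd (pd (fun x => ph x ^ (m+4)) j) k (R⁻¹ • x) := by
    intro j k; rw [e1]; exact pd_sc (s.pd j) _ _ k
  have e3 : ∀ j k l, pd (pd (pd (fun x => phR R x ^ (m+4)) j) k) l =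
      fun x => (1 * R⁻¹ * R⁻¹ * R⁻¹) * pd (pd (pd (fun x => ph x ^ (m+4)) j) k) l (R⁻¹ • x) := by
    intro j k l; rw [e2]; exact pd_sc ((s.pd j).pd k) _ _ l
  refine ⟨fun j x => ?_, fun j k x => ?_, fun j k l x => ?_⟩
  · rw [e1, abs_mul, abs_of_pos (by positivity)]
    have := mul_le_mul_of_nonneg_left (h1 j (R⁻¹ • x)) hR'.le
    unfold phR; linarith
  · rw [e2, abs_mul, abs_of_pos (by positivity)]
    have := mul_le_mul_of_nonneg_left (h2 j k (R⁻¹ • x)) (by positivity : 0 ≤ R⁻¹ ^ 2)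
    unfold phR; linarith
  · rw [e3, abs_mul, abs_of_pos (by positivity)]
    have := mul_le_mul_of_nonneg_left (h3 j k l (R⁻¹ • x)) (by positivity : 0 ≤ R⁻¹ ^ 3)
    unfold phR; linarith

lemma phR_one {R : ℝ} (hR : 0 < R) {x : R3} (h : ‖x‖ ≤ R) : phR R x = 1 := by
  apply ph_one
  rw [norm_smul, Real.norm_of_nonneg (inv_pos.2 hR).le, inv_mul_le_iff₀ hR]; linarith

lemma phR_zero {R : ℝ} (hR : 0 < R) {x : R3} (h : 2 * R ≤ ‖x‖) : phR R x = 0 := by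
  apply ph_zero
  rw [norm_smul, Real.norm_of_nonneg (inv_pos.2 hR).le, inv_mul_eq_div, le_div_iff₀ hR]; linarith

lemma phR_cs {R : ℝ} (hR : 0 < R) : HasCompactSupport (phR R) := by
  refine HasCompactSupport.intro (isCompact_closedBall 0 (2*R)) fun x hx => phR_zero hR ?_
  simp at hx; exact hx.le

lemma phR_nonneg (R : ℝ) (x : R3) : 0 ≤ phR R x := ph_nonneg _
lemma phR_le_one (R : ℝ) (x : R3) : phR R x ≤ 1 := ph_le_one _

open scoped ENNReal

lemma abs_sum3 {f : Fin 3 → ℝ} {B : ℝ} (h : ∀ i, |f i| ≤ B) : |∑ i, f i| ≤ 3 * B := by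
  refine (Finset.abs_sum_le_sum_abs _ _).trans ?_
  rw [Fin.sum_univ_three]; linarith [h 0, h 1, h 2]

lemma am2 {a b A B : ℝ} (ha : |a| ≤ A) (hb : |b| ≤ B) : |a * b| ≤ A * B := by
  rw [abs_mul]; exact mul_le_mul ha hb (abs_nonneg _) ((abs_nonneg _).trans ha)

def Ssq (U V : Fin 3 → R3 → ℝ) (θ : R3 → ℝ) (x : R3) : ℝ :=
  (∑ i, U i x ^ 2) + (∑ i, V i x ^ 2) + θ x ^ 2

lemma Ssq_nonneg (U V : Fin 3 → R3 → ℝ) (θ : R3 → ℝ) (x : R3) : 0 ≤ Ssq U V θ x := by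
  unfold Ssq; positivity

lemma Eden_nonneg (U V : Fin 3 → R3 → ℝ) (θ : R3 → ℝ) (x : R3) : 0 ≤ Eden U V θ x := by
  unfold Eden; positivity

lemma ptw_bound {U V : Fin 3 → R3 → ℝ} {θ P : R3 → ℝ} (hθ : Sm θ) (hP : Sm P)
    (hU : ∀ i, Sm (U i)) (hV : ∀ i, Sm (V i)) {x : R3} {a d1 d2 d2' d3 : ℝ} (ha : 0 ≤ a)
    (h1 : ∀ j, |pd P j x| ≤ d1) (h2 : ∀ j k, |pd (pd P j) k x| ≤ d2)
    (h2' : ∀ j k, |pd (pd P j) k x| ≤ d2')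
    (h3 : ∀ j k l, |pd (pd (pd P j) k) l x| ≤ d3) :
    |Hloc U V θ P x| + ∑ i, ∑ j, |Hpot U V P i j x| * a ≤
      39 * (√(Ssq U V θ x) * √(Eden U V θ x) * d1) + 4 * (Ssq U V θ x * (∑ i, |U i x|) * d1)
      + |θ x| * (∑ i, |V i x|) * d1 + 18 * (Ssq U V θ x * d2) + 27 * (a * √(Ssq U V θ x) * d3)
      + 54 * (a * √(Eden U V θ x) * d2') + 81 * (a * √(Ssq U V θ x) * √(Eden U V θ x) * d1) := by
  set S := Ssq U V θ x with hS
  set Q := Eden U V θ x with hQ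
  set t := √S with ht
  set g := √Q with hg
  set τ := ∑ i, |U i x| with hτ
  set ν := ∑ i, |V i x| with hν
  have hS0 : 0 ≤ S := Ssq_nonneg _ _ _ _
  have ht0 : 0 ≤ t := Real.sqrt_nonneg _
  have hg0 : 0 ≤ g := Real.sqrt_nonneg _
  have hd1 : 0 ≤ d1 := (abs_nonneg _).trans (h1 0)
  have htt : t * t = S := Real.mul_self_sqrt hS0
  have sU : 0 ≤ ∑ i, U i x ^ 2 := by positivity
  have sV : 0 ≤ ∑ i, V i x ^ 2 := by positivity
  have sT : 0 ≤ θ x ^ 2 := by positivity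
  have bU : ∀ i, |U i x| ≤ t := by
    intro i
    apply Real.abs_le_sqrt
    have := Finset.single_le_sum (f := fun i => U i x ^ 2) (fun j _ => sq_nonneg _) (Finset.mem_univ i)
    simp only [hS, Ssq]; linarith
  have bV : ∀ i, |V i x| ≤ t := by
    intro i
    apply Real.abs_le_sqrt
    have := Finset.single_le_sum (f := fun i => V i x ^ 2) (fun j _ => sq_nonneg _) (Finset.mem_univ i)
    simp only [hS, Ssq]; linarith
  have bT : |θ x| ≤ t := by
    apply Real.abs_le_sqrt
    simp only [hS, Ssq]; linarith
  have eU : 0 ≤ ∑ i, ∑ k, pd (U i) k x ^ 2 := by positivity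
  have eV : 0 ≤ ∑ i, ∑ k, pd (V i) k x ^ 2 := by positivity
  have eT : 0 ≤ ∑ k, pd θ k x ^ 2 := by positivity
  have cU : ∀ i k, |pd (U i) k x| ≤ g := by
    intro i k
    apply Real.abs_le_sqrt
    have := Finset.single_le_sum (f := fun k => pd (U i) k x ^ 2) (fun j _ => sq_nonneg _) (Finset.mem_univ k)
    have := Finset.single_le_sum (f := fun i => ∑ k, pd (U i) k x ^ 2) (fun j _ => Finset.sum_nonneg fun k _ => sq_nonneg _) (Finset.mem_univ i)
    simp only [hQ, Eden]; linarith
  have cV : ∀ i k, |pd (V i) k x| ≤ g := by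
    intro i k
    apply Real.abs_le_sqrt
    have := Finset.single_le_sum (f := fun k => pd (V i) k x ^ 2) (fun j _ => sq_nonneg _) (Finset.mem_univ k)
    have := Finset.single_le_sum (f := fun i => ∑ k, pd (V i) k x ^ 2) (fun j _ => Finset.sum_nonneg fun k _ => sq_nonneg _) (Finset.mem_univ i)
    simp only [hQ, Eden]; linarith
  have cT : ∀ k, |pd θ k x| ≤ g := by
    intro k
    apply Real.abs_le_sqrt
    have := Finset.single_le_sum (f := fun k => pd θ k x ^ 2) (fun j _ => sq_nonneg _) (Finset.mem_univ k)
    simp only [hQ, Eden]; linarith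
  have a1 : |∑ i, ∑ k, U i x * pd (U i) k x * pd P k x| ≤ 3 * (3 * (t * g * d1)) :=
    abs_sum3 fun i => abs_sum3 fun k => am2 (am2 (bU i) (cU i k)) (h1 k)
  have a2 : |∑ i, ∑ k, V i x * pd (V i) k x * pd P k x| ≤ 3 * (3 * (t * g * d1)) :=
    abs_sum3 fun i => abs_sum3 fun k => am2 (am2 (bV i) (cV i k)) (h1 k)
  have a3 : |∑ k, θ x * pd θ k x * pd P k x| ≤ 3 * (t * g * d1) :=
    abs_sum3 fun k => am2 (am2 bT (cT k)) (h1 k)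
  have a4 : |∑ j, U j x * pd P j x| ≤ τ * d1 := by
    refine (Finset.abs_sum_le_sum_abs _ _).trans ?_
    rw [hτ, Finset.sum_mul]
    exact Finset.sum_le_sum fun j _ => am2 le_rfl (h1 j)
  have a5 : |∑ j, V j x * pd P j x| ≤ ν * d1 := by
    refine (Finset.abs_sum_le_sum_abs _ _).trans ?_
    rw [hν, Finset.sum_mul]
    exact Finset.sum_le_sum fun j _ => am2 le_rfl (h1 j)
  have a6 : |∑ i, ∑ j, V j x * V i x * U i x * pd P j x| ≤ 3 * (S * τ * d1) := by
    refine (Finset.abs_sum_le_sum_abs _ _).trans ?_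
    calc _ ≤ ∑ i, 3 * (S * |U i x| * d1) := by
          refine Finset.sum_le_sum fun i _ => abs_sum3 fun j => ?_
          rw [← htt]
          exact am2 (am2 (am2 (bV j) (bV i)) le_rfl) (h1 j)
      _ = _ := by rw [hτ, ← Finset.mul_sum, ← Finset.sum_mul, ← Finset.mul_sum]
  have pm : ∀ i j k, |pd (fun y => U i y * pd P j y) k x| ≤ t * d2 + g * d1 := by
    intro i j k
    rw [pd_mul (hU i) (hP.pd j)]
    exact (abs_add_le _ _).trans (add_le_add (am2 (bU i) (h2 j k)) (am2 (cU i k) (h1 j)))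
  have a7 : |∑ i, ∑ j, (pd (fun y => U i y * pd P j y) j x * U i x
         - pd (fun y => U i y * pd P j y) i x * U j x)| ≤ 3 * (3 * (2 * ((t * d2 + g * d1) * t))) := by
    refine abs_sum3 fun i => abs_sum3 fun j => (abs_sub _ _).trans ?_
    have := am2 (pm i j j) (bU i)
    have := am2 (pm i j i) (bU j)
    linarith
  have hl : |Hloc U V θ P x| ≤ 39 * (t * g * d1) + 4 * (S * τ * d1) + |θ x| * ν * d1 + 18 * (S * d2) := by
    unfold Hloc
    have b2 : |(1/2) * ((∑ i, U i x ^ 2) + (∑ i, V i x ^ 2) + θ x ^ 2) * (∑ j, U j x * pd P j x)|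
        ≤ (1/2) * S * (τ * d1) := by
      refine am2 ?_ a4
      rw [abs_of_nonneg (by positivity)]; simp only [hS, Ssq]; exact le_rfl
    have b4 : |θ x * ∑ j, V j x * pd P j x| ≤ |θ x| * (ν * d1) := am2 le_rfl a5
    have hτ0 : 0 ≤ τ := Finset.sum_nonneg fun i _ => abs_nonneg _
    have hx : 0 ≤ S * τ * d1 := by positivity
    rw [← htt] at hx ⊢
    rw [← htt] at a6 b2
    rw [abs_le] at *
    constructor <;> linarith [a1.1, a1.2]
  have hp : ∀ i j, |Hpot U V P i j x| ≤ 3 * (t * d3) + 6 * (g * d2') + 9 * (t * g * d1) := by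
    intro i j
    unfold Hpot
    have q1 : |U i x * lap (pd P j) x| ≤ t * (3 * d3) := by
      refine am2 (bU i) ?_
      unfold lap; exact abs_sum3 fun k => h3 j k k
    have q2 : |∑ k, pd (U i) k x * pd (pd P j) k x| ≤ 3 * (g * d2') := abs_sum3 fun k => am2 (cU i k) (h2' j k)
    have q3 : |∑ k, U k x * pd (U i) k x| ≤ 3 * (t * g) := abs_sum3 fun k => am2 (bU k) (cU i k)
    have q4 : |∑ k, pd (fun y => V k y * V i y) k x| ≤ 3 * (2 * (t * g)) := by
      refine abs_sum3 fun k => ?_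
      rw [pd_mul (hV k) (hV i)]
      refine (abs_add_le _ _).trans ?_
      have := am2 (bV k) (cV i k)
      have := am2 (cV k k) (bV i)
      linarith
    have q5 : |((∑ k, U k x * pd (U i) k x) + (∑ k, pd (fun y => V k y * V i y) k x)) * pd P j x|
        ≤ (9 * (t * g)) * d1 := by
      refine am2 ((abs_add_le _ _).trans ?_) (h1 j)
      linarith
    rw [abs_le] at *
    constructor <;> linarith [q1.1, q1.2, q2.1, q2.2, q5.1, q5.2]
  have hps : ∑ i, ∑ j, |Hpot U V P i j x| * a ≤ 9 * ((3 * (t * d3) + 6 * (g * d2') + 9 * (t * g * d1)) * a) := by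
    have := fun i j => mul_le_mul_of_nonneg_right (hp i j) ha
    simp only [Fin.sum_univ_three]
    linarith [this 0 0, this 0 1, this 0 2, this 1 0, this 1 1, this 1 2, this 2 0, this 2 1, this 2 2]
  linarith

lemma young_num {t g a r e s c S τ T : ℝ} (ht : 0 ≤ t) (hg : 0 ≤ g) (ha : 0 ≤ a) (hr : 0 ≤ r)
    (he : 0 ≤ e) (hes : e ≤ s) (hc : 0 ≤ c) (hS : t * t = S) (hτ : 0 ≤ τ) (hT : 0 ≤ T) :
    39 * (t * g * (c * r * (e * s))) + 4 * (S * τ * (c * r * (e * s)))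
      + T * (c * r * (e * s)) + 18 * (S * (c * r ^ 2 * s ^ 2)) + 27 * (a * t * (c * r ^ 3 * s))
      + 54 * (a * g * (c * r ^ 2 * e)) + 81 * (a * t * g * (c * r * (e * s)))
    ≤ 1/2 * (e ^ 2 * (g * g)) + 10000 * (c + c ^ 2) * (r ^ 2 * (s ^ 2 * S) + r * (s ^ 2 * (τ * S + T))
        + r ^ 4 * a ^ 2 + r ^ 2 * (s ^ 2 * (S * a ^ 2))) := by
  have hs : 0 ≤ s := he.trans hes
  subst hS
  have y1 : 39 * (t * g * (c * r * (e * s))) ≤ 1/6 * (e^2*(g*g)) + 3/2 * (39*c)^2 * (r^2*(s^2*(t*t))) := by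
    nlinarith [sq_nonneg (e * g / 3 - 39 * c * r * s * t)]
  have y2 : 54 * (a * g * (c * r ^ 2 * e)) ≤ 1/6 * (e^2*(g*g)) + 3/2 * (54*c)^2 * (r^4*a^2) := by
    nlinarith [sq_nonneg (e * g / 3 - 54 * c * r^2 * a)]
  have y3 : 81 * (a * t * g * (c * r * (e * s))) ≤ 1/6 * (e^2*(g*g)) + 3/2 * (81*c)^2 * (r^2*(s^2*(t*t*a^2))) := by
    nlinarith [sq_nonneg (e * g / 3 - 81 * c * r * s * t * a)]
  have y4 : 27 * (a * t * (c * r ^ 3 * s)) ≤ 27/2 * c * (r^2*(s^2*(t*t)) + r^4*a^2) := by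
    have := mul_nonneg hc (sq_nonneg (r * s * t - r^2 * a))
    nlinarith
  have hess : e * s ≤ s ^ 2 := by nlinarith
  have y5 : (4 * (t * t * τ) + T) * (c * r * (e * s)) ≤ (4 * (t * t * τ) + T) * (c * r * s^2) := by
    gcongr
  have p1 : 0 ≤ r^2*(s^2*(t*t)) := by positivity
  have p2 : 0 ≤ r^4*a^2 := by positivity
  have p3 : 0 ≤ r^2*(s^2*(t*t*a^2)) := by positivity
  have p4 : 0 ≤ r*(s^2*(τ*(t*t))) := by positivity
  have p5 : 0 ≤ r*(s^2*T) := by positivity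
  have hc2 : 0 ≤ c^2 := by positivity
  have m1 := mul_nonneg hc p1
  have m1' := mul_nonneg hc2 p1
  have m2 := mul_nonneg hc p2
  have m2' := mul_nonneg hc2 p2
  have m3 := mul_nonneg hc p3
  have m3' := mul_nonneg hc2 p3
  have m4 := mul_nonneg hc p4
  have m4' := mul_nonneg hc2 p4
  have m5 := mul_nonneg hc p5
  have m5' := mul_nonneg hc2 p5
  nlinarith

open scoped ENNReal

def Ann (R : ℝ) : Set R3 := {x | R ≤ ‖x‖ ∧ ‖x‖ < 2 * R}

lemma Ann_meas (R : ℝ) : MeasurableSet (Ann R) :=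
  (measurableSet_le measurable_const measurable_norm).inter (measurableSet_lt measurable_norm measurable_const)

/-- the error density -/
def Err (U V : Fin 3 → R3 → ℝ) (θ : R3 → ℝ) (N : ℕ) (R : ℝ) (a : R3 → ℝ) (x : R3) : ℝ :=
  R⁻¹ ^ 2 * ((phR R x ^ (N+3)) ^ 2 * Ssq U V θ x)
   + R⁻¹ * ((phR R x ^ (N+3)) ^ 2 * ((∑ i, |U i x|) * Ssq U V θ x + |θ x| * (∑ i, |V i x|)))
   + R⁻¹ ^ 4 * a x ^ 2 + R⁻¹ ^ 2 * ((phR R x ^ (N+3)) ^ 2 * (Ssq U V θ x * a x ^ 2))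

lemma Err_nonneg (U V : Fin 3 → R3 → ℝ) (θ : R3 → ℝ) (N : ℕ) {R : ℝ} (hR : 0 < R) (a : R3 → ℝ) (x : R3) :
    0 ≤ Err U V θ N R a x := by
  have := Ssq_nonneg U V θ x
  unfold Err; positivity

lemma comb (N : ℕ) : ∃ K : ℝ, 0 < K ∧ ∀ (U V : Fin 3 → R3 → ℝ) (θ : R3 → ℝ), Sm θ → (∀ i, Sm (U i)) →
    (∀ i, Sm (V i)) → ∀ (R : ℝ), 0 < R → ∀ (a : R3 → ℝ), (∀ x, 0 ≤ a x) → ∀ x,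
    |Hloc U V θ (fun x => phR R x ^ (2*N+8)) x| + ∑ i, ∑ j, |Hpot U V (fun x => phR R x ^ (2*N+8)) i j x| * a x
      ≤ 1/2 * (phR R x ^ (2*N+8) * Eden U V θ x) + K * (Ann R).indicator (Err U V θ N R a) x := by
  obtain ⟨c, hc, h⟩ := cutR (2*N+4)
  refine ⟨10000*(c+c^2), by positivity, fun U V θ hθ hU hV R hR a ha x => ?_⟩
  obtain ⟨h1, h2, h3⟩ := h R hR
  have e8 : 2*N+8 = 2*N+4+4 := by ring
  rw [e8]
  have hP : Sm (fun x => phR R x ^ (2*N+4+4)) := (phR_sm R).pow _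
  have p0 := phR_nonneg R x
  have p1 := phR_le_one R x
  by_cases hA : x ∈ Ann R
  · rw [Set.indicator_of_mem hA]
    have hb := ptw_bound (x := x) hθ hP hU hV (ha x)
      (d1 := c * R⁻¹ * (phR R x ^ (N+4) * phR R x ^ (N+3))) (d2 := c * R⁻¹ ^ 2 * (phR R x ^ (N+3)) ^ 2)
      (d2' := c * R⁻¹ ^ 2 * phR R x ^ (N+4)) (d3 := c * R⁻¹ ^ 3 * phR R x ^ (N+3)) ?_ ?_ ?_ ?_
    · refine hb.trans ?_
      have S0 := Ssq_nonneg U V θ x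
      have E0 := Eden_nonneg U V θ x
      have := young_num (Real.sqrt_nonneg (Ssq U V θ x)) (Real.sqrt_nonneg (Eden U V θ x)) (ha x)
        (inv_pos.2 hR).le (pow_nonneg p0 (N+4)) (pow_le_pow_of_le_one p0 p1 (by omega : N+3 ≤ N+4)) hc.le
        (Real.mul_self_sqrt S0) (Finset.sum_nonneg (s := Finset.univ) fun i _ => abs_nonneg (U i x))
        (mul_nonneg (abs_nonneg (θ x)) (Finset.sum_nonneg (s := Finset.univ) fun i _ => abs_nonneg (V i x)))
      rw [Real.mul_self_sqrt E0] at this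
      have e : (phR R x ^ (N+4)) ^ 2 = phR R x ^ (2*N+4+4) := by rw [← pow_mul]; congr 1; ring
      rw [e] at this
      unfold Err
      exact this
    · intro j; refine (h1 j x).trans_eq ?_
      rw [← pow_add]; congr 2; ring
    · intro j k; refine (h2 j k x).trans_eq ?_
      rw [← pow_mul]; congr 2; ring
    · intro j k; refine (h2 j k x).trans ?_
      exact mul_le_mul_of_nonneg_left (pow_le_pow_of_le_one p0 p1 (by omega)) (by positivity)
    · intro j k l; refine (h3 j k l x).trans ?_
      exact mul_le_mul_of_nonneg_left (pow_le_pow_of_le_one p0 p1 (by omega)) (by positivity)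
  · rw [Set.indicator_of_notMem hA]
    have hb := ptw_bound (x := x) hθ hP hU hV (ha x) (d1 := 0) (d2 := 0) (d2' := 0) (d3 := 0)
    have E0 := mul_nonneg (pow_nonneg p0 (2*N+4+4)) (Eden_nonneg U V θ x)
    have key : (∀ j, pd (fun x => phR R x ^ (2*N+4+4)) j x = 0) ∧
      (∀ j k, pd (pd (fun x => phR R x ^ (2*N+4+4)) j) k x = 0) ∧
      (∀ j k l, pd (pd (pd (fun x => phR R x ^ (2*N+4+4)) j) k) l x = 0) := by
      by_cases hx : ‖x‖ < R
      · have b0 : ∀ x : R3, ‖x‖ < R → phR R x ^ (2*N+4+4) = 1 := fun y hy => by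
          rw [phR_one hR hy.le, one_pow]
        have b1 := fun j => pd_locconst b0 j
        have b2 := fun j k => pd_locconst (b1 j) k
        have b3 := fun j k l => pd_locconst (b2 j k) l
        exact ⟨fun j => b1 j x hx, fun j k => b2 j k x hx, fun j k l => b3 j k l x hx⟩
      · have z : phR R x = 0 := phR_zero hR (by
          by_contra hh; exact hA ⟨not_lt.1 hx, not_le.1 hh⟩)
        refine ⟨fun j => ?_, fun j k => ?_, fun j k l => ?_⟩
        · have := h1 j x; rw [z] at this; simpa using this
        · have := h2 j k x; rw [z] at this; simpa using this
        · have := h3 j k l x; rw [z] at this; simpa using this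
    have := hb (fun j => by rw [key.1]; simp) (fun j k => by rw [key.2.1]; simp)
      (fun j k => by rw [key.2.1]; simp) (fun j k l => by rw [key.2.2]; simp)
    simp only [mul_zero, add_zero] at this ⊢
    linarith

/-- cut-off energy -/
def En (U V : Fin 3 → R3 → ℝ) (θ : R3 → ℝ) (N : ℕ) (R : ℝ) : ℝ≥0∞ :=
  ∫⁻ x, ENNReal.ofReal (phR R x ^ (2*N+8) * Eden U V θ x)

lemma Eden_sm {U V : Fin 3 → R3 → ℝ} {θ : R3 → ℝ} (hθ : Sm θ) (hU : ∀ i, Sm (U i)) (hV : ∀ i, Sm (V i)) :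
    Sm (Eden U V θ) := by
  have a1 : Sm (fun x => ∑ i, ∑ k, pd (U i) k x ^ 2) :=
    ContDiff.sum fun i _ => ContDiff.sum fun k _ => ((hU i).pd k).pow 2
  have a2 : Sm (fun x => ∑ i, ∑ k, pd (V i) k x ^ 2) :=
    ContDiff.sum fun i _ => ContDiff.sum fun k _ => ((hV i).pd k).pow 2
  have a3 : Sm (fun x => ∑ k, pd θ k x ^ 2) :=
    ContDiff.sum fun k _ => (hθ.pd k).pow 2
  exact (a1.add a2).add a3

lemma phRpow_cs {R : ℝ} (hR : 0 < R) (m : ℕ) : HasCompactSupport (fun x => phR R x ^ (m+1)) :=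
  cs_of (phR_cs hR) fun x hx => by rw [hx]; simp

lemma cs_lint {f : R3 → ℝ} (hf : Continuous f) (h : HasCompactSupport f) :
    ∫⁻ x, ENNReal.ofReal (f x) < ⊤ := by
  have := (hf.integrable_of_hasCompactSupport (μ := volume) h).lintegral_lt_top
  exact this

lemma En_fin {U V : Fin 3 → R3 → ℝ} {θ : R3 → ℝ} (hθ : Sm θ) (hU : ∀ i, Sm (U i)) (hV : ∀ i, Sm (V i))
    (N : ℕ) {R : ℝ} (hR : 0 < R) : En U V θ N R < ⊤ := by
  unfold En
  refine cs_lint (((phR_sm R).pow _).cont.mul (Eden_sm hθ hU hV).cont) ?_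
  exact (phRpow_cs hR (2*N+7)).mul_right

lemma main_err (N : ℕ) : ∃ K : ℝ, 0 < K ∧ ∀ {π θ a : R3 → ℝ} {U V : Fin 3 → R3 → ℝ} (hπ : Sm π) (hθ : Sm θ)
    (hU : ∀ i, Sm (U i)) (hV : ∀ i, Sm (V i))
    (hdiv : ∀ x, ∑ j, pd (U j) j x = 0)
    (h1 : ∀ i x, -lap (U i) x + (∑ j, U j x * pd (U i) j x)
      + pd π i x + (∑ j, pd (fun y => V j y * V i y) j x) = 0)
    (h2 : ∀ i x, -lap (V i) x + (∑ j, U j x * pd (V i) j x)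
      + pd θ i x + (∑ j, V j x * pd (U i) j x) = 0)
    (h3 : ∀ x, -lap θ x + (∑ j, U j x * pd θ j x) + (∑ j, pd (V j) j x) = 0)
    (ha : ∀ x, 0 ≤ a x) (hpot : HasPot U a) (R : ℝ) (hR : 0 < R),
    En U V θ N R ≤ ENNReal.ofReal K * ∫⁻ x in Ann R, ENNReal.ofReal (Err U V θ N R a x) := by
  obtain ⟨K, hK, h⟩ := comb N
  refine ⟨2 * K, by positivity, ?_⟩
  intro π θ a U V hπ hθ hU hV hdiv h1 h2 h3 ha hpot R hR
  have hm := main_ineq hπ hθ ((phR_sm R).pow (2*N+8)) (phRpow_cs hR (2*N+7))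
    (fun x => pow_nonneg (phR_nonneg R x) _) hU hV hdiv h1 h2 h3 ha hpot
  have hfin := En_fin hθ hU hV N hR
  have hmm : Measurable fun x => ENNReal.ofReal (1/2 * (phR R x ^ (2*N+8) * Eden U V θ x)) :=
    (continuous_const.mul (((phR_sm R).pow _).cont.mul (Eden_sm hθ hU hV).cont)).measurable.ennreal_ofReal
  have h4 : En U V θ N R ≤ 2⁻¹ * En U V θ N R + ENNReal.ofReal K * ∫⁻ x in Ann R, ENNReal.ofReal (Err U V θ N R a x) := by
    refine hm.trans ?_
    calc _ ≤ ∫⁻ x, (ENNReal.ofReal (1/2 * (phR R x ^ (2*N+8) * Eden U V θ x)) +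
            ENNReal.ofReal K * (Ann R).indicator (fun x => ENNReal.ofReal (Err U V θ N R a x)) x) := by
          refine lintegral_mono fun x => ?_
          refine (ENNReal.ofReal_le_ofReal (h U V θ hθ hU hV R hR a ha x)).trans ?_
          refine ENNReal.ofReal_add_le.trans ?_
          gcongr
          rw [ENNReal.ofReal_mul hK.le]
          gcongr
          by_cases hx : x ∈ Ann R <;> simp [hx]
      _ = _ := by
          rw [lintegral_add_left hmm, lintegral_const_mul' _ _ ENNReal.ofReal_ne_top,
            lintegral_indicator (Ann_meas R)]
          congr 1
          unfold En
          rw [← lintegral_const_mul' _ _ (by simp)]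
          refine lintegral_congr fun x => ?_
          rw [ENNReal.ofReal_mul (by norm_num)]
          congr 1
          rw [one_div, ENNReal.ofReal_inv_of_pos (by norm_num)]; simp
  set E := En U V θ N R
  set X := ENNReal.ofReal K * ∫⁻ x in Ann R, ENNReal.ofReal (Err U V θ N R a x) with hX
  have h5 : 2⁻¹ * E ≤ X := by
    have e : E = 2⁻¹ * E + 2⁻¹ * E := by rw [← add_mul, ENNReal.inv_two_add_inv_two, one_mul]
    have : 2⁻¹ * E + 2⁻¹ * E ≤ 2⁻¹ * E + X := e ▸ h4
    exact (ENNReal.add_le_add_iff_left (ENNReal.mul_ne_top (by simp) hfin.ne)).1 this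
  calc E = 2 * (2⁻¹ * E) := by rw [← mul_assoc, ENNReal.mul_inv_cancel (by simp) (by simp), one_mul]
    _ ≤ 2 * X := by gcongr
    _ = _ := by rw [hX, ← mul_assoc, ENNReal.ofReal_mul (by norm_num)]; simp

open scoped ENNReal

def fab (f : R3 → ℝ) (x : R3) : ℝ≥0∞ := ENNReal.ofReal |f x|
def bg (f : R3 → ℝ) (x : R3) : ℝ≥0∞ := if 1 < |f x| then ENNReal.ofReal |f x| else 0
def sl (f : R3 → ℝ) (x : R3) : ℝ≥0∞ := if 1 < |f x| then 0 else ENNReal.ofReal |f x|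

lemma fab_meas {f : R3 → ℝ} (hf : Measurable f) : Measurable (fab f) :=
  (measurable_norm.comp hf).ennreal_ofReal

lemma bg_meas {f : R3 → ℝ} (hf : Measurable f) : Measurable (bg f) :=
  Measurable.ite (measurableSet_lt measurable_const (measurable_norm.comp hf)) (fab_meas hf) measurable_const

lemma sl_meas {f : R3 → ℝ} (hf : Measurable f) : Measurable (sl f) :=
  Measurable.ite (measurableSet_lt measurable_const (measurable_norm.comp hf)) measurable_const (fab_meas hf)

lemma fab_eq (f : R3 → ℝ) (x : R3) : fab f x = bg f x + sl f x := by
  unfold fab bg sl; split_ifs <;> simp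

lemma fab_sq (f : R3 → ℝ) (x : R3) : fab f x ^ 2 = bg f x ^ 2 + sl f x ^ 2 := by
  unfold fab bg sl; split_ifs <;> simp

lemma bg_le_fab (f : R3 → ℝ) (x : R3) : bg f x ≤ fab f x := by
  rw [fab_eq]; exact le_self_add

lemma sl_le_one (f : R3 → ℝ) (x : R3) : sl f x ≤ 1 := by
  unfold sl; split_ifs with h
  · simp
  · exact ENNReal.ofReal_le_one.2 (not_lt.1 h)

lemma bg_pow_le (f : R3 → ℝ) {s σ : ℝ} (h0 : 0 < σ) (h : σ ≤ s) (x : R3) :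
    bg f x ^ σ ≤ ENNReal.ofReal (|f x| ^ s) := by
  unfold bg; split_ifs with h1
  · rw [ENNReal.ofReal_rpow_of_nonneg (abs_nonneg _) h0.le]
    exact ENNReal.ofReal_le_ofReal (Real.rpow_le_rpow_of_exponent_le h1.le h)
  · rw [ENNReal.zero_rpow_of_pos h0]; exact zero_le

lemma sl_pow_le (f : R3 → ℝ) {s σ : ℝ} (h0 : 0 < s) (h : s ≤ σ) (x : R3) :
    sl f x ^ σ ≤ ENNReal.ofReal (|f x| ^ s) := by
  unfold sl; split_ifs with h1
  · rw [ENNReal.zero_rpow_of_pos (h0.trans_le h)]; exact zero_le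
  · rw [ENNReal.ofReal_rpow_of_nonneg (abs_nonneg _) (h0.le.trans h)]
    exact ENNReal.ofReal_le_ofReal (Real.rpow_le_rpow_of_exponent_ge' (abs_nonneg _) (not_lt.1 h1) h0.le h)

/-- `X n ≤ δ n (1 + E n)` with `δ → 0` -/
def Sma (E X : ℕ → ℝ≥0∞) : Prop :=
  ∃ δ : ℕ → ℝ≥0∞, Tendsto δ atTop (nhds 0) ∧ ∀ n, X n ≤ δ n * (1 + E n)

lemma Sma.mono {E X Y : ℕ → ℝ≥0∞} (h : Sma E X) (hY : ∀ n, Y n ≤ X n) : Sma E Y := by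
  obtain ⟨δ, h1, h2⟩ := h
  exact ⟨δ, h1, fun n => (hY n).trans (h2 n)⟩

lemma Sma.add {E X Y : ℕ → ℝ≥0∞} (h : Sma E X) (h' : Sma E Y) : Sma E (fun n => X n + Y n) := by
  obtain ⟨δ, h1, h2⟩ := h
  obtain ⟨δ', h1', h2'⟩ := h'
  refine ⟨fun n => δ n + δ' n, by simpa using h1.add h1', fun n => ?_⟩
  rw [add_mul]; exact add_le_add (h2 n) (h2' n)

lemma Sma.sum {E : ℕ → ℝ≥0∞} {ι : Type} (s : Finset ι) {X : ι → ℕ → ℝ≥0∞} (h : ∀ i, Sma E (X i)) :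
    Sma E (fun n => ∑ i ∈ s, X i n) := by
  classical
  induction s using Finset.induction_on with
  | empty => exact ⟨fun _ => 0, tendsto_const_nhds, fun n => by simp⟩
  | insert a s ha ih => simp only [Finset.sum_insert ha]; exact (h a).add ih

lemma Sma.cmul {E X : ℕ → ℝ≥0∞} (h : Sma E X) {c : ℝ≥0∞} (hc : c ≠ ⊤) : Sma E (fun n => c * X n) := by
  obtain ⟨δ, h1, h2⟩ := h
  refine ⟨fun n => c * δ n, by simpa using ENNReal.Tendsto.const_mul h1 (Or.inr hc), fun n => ?_⟩
  rw [mul_assoc]; exact mul_le_mul_right (h2 n) c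

lemma Sma.of_tendsto {E X : ℕ → ℝ≥0∞} (h : Tendsto X atTop (nhds 0)) : Sma E X :=
  ⟨X, h, fun n => le_mul_of_one_le_right' le_self_add⟩

def rn (n : ℕ) : ℝ≥0∞ := ENNReal.ofReal ((n:ℝ) + 1)⁻¹

lemma rn_tendsto : Tendsto rn atTop (nhds 0) := by
  have : Tendsto (fun n : ℕ => ((n:ℝ)+1)⁻¹) atTop (nhds 0) := by
    simpa [one_div] using tendsto_one_div_add_atTop_nhds_zero_nat (𝕜 := ℝ)
  have h := ENNReal.tendsto_ofReal this
  rw [ENNReal.ofReal_zero] at h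
  exact h

lemma rn_le_one (n : ℕ) : rn n ≤ 1 := by
  refine ENNReal.ofReal_le_one.2 (inv_le_one_of_one_le₀ ?_)
  linarith [n.cast_nonneg (α := ℝ)]

lemma rn_pow_le {k : ℕ} (hk : 1 ≤ k) (n : ℕ) : rn n ^ k ≤ rn n :=
  (pow_le_pow_right_of_le_one' (rn_le_one n) hk).trans_eq (pow_one _)

lemma Sma.of_bdd {E X : ℕ → ℝ≥0∞} {C : ℝ≥0∞} (hC : C ≠ ⊤) (h : ∀ n, X n ≤ C * (1 + E n)) {k : ℕ} (hk : 1 ≤ k) :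
    Sma E (fun n => rn n ^ k * X n) := by
  refine ⟨fun n => C * rn n, by simpa using ENNReal.Tendsto.const_mul rn_tendsto (Or.inr hC), fun n => ?_⟩
  calc _ ≤ rn n * (C * (1 + E n)) := mul_le_mul' (rn_pow_le hk n) (h n)
    _ = _ := by ring

lemma Sma.of_bdd' {E X : ℕ → ℝ≥0∞} {C : ℝ≥0∞} (hC : C ≠ ⊤) (h : ∀ n, X n ≤ C) {k : ℕ} (hk : 1 ≤ k) :
    Sma E (fun n => rn n ^ k * X n) :=
  Sma.of_bdd hC (fun n => (h n).trans (le_mul_of_one_le_right' le_self_add)) hk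

def An (n : ℕ) : Set R3 := Ann ((n:ℝ) + 1)
lemma An_meas (n : ℕ) : MeasurableSet (An n) := Ann_meas _

lemma tail_zero {g : R3 → ℝ≥0∞} (hi : ∫⁻ x, g x ≠ ⊤) :
    Tendsto (fun n => ∫⁻ x in An n, g x) atTop (nhds 0) := by
  have hm : ∀ n : ℕ, MeasurableSet {x : R3 | (n:ℝ) ≤ ‖x‖} := fun n =>
    measurableSet_le measurable_const measurable_norm
  have h1 : Tendsto (fun n : ℕ => (volume.withDensity g) {x : R3 | (n:ℝ) ≤ ‖x‖}) atTop
      (nhds ((volume.withDensity g) (⋂ n : ℕ, {x : R3 | (n:ℝ) ≤ ‖x‖}))) := by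
    refine tendsto_measure_iInter_atTop (fun n => (hm n).nullMeasurableSet) ?_ ⟨0, ?_⟩
    · intro a b hab x hx
      have : (a:ℝ) ≤ b := by exact_mod_cast hab
      exact this.trans hx
    · rw [withDensity_apply _ (hm 0)]
      exact ((setLIntegral_le_lintegral _ _).trans_lt (lt_top_iff_ne_top.2 hi)).ne
  have h2 : (⋂ n : ℕ, {x : R3 | (n:ℝ) ≤ ‖x‖}) = ∅ := by
    ext x; simp only [Set.mem_iInter, Set.mem_setOf_eq, Set.mem_empty_iff_false, iff_false, not_forall, not_le]
    exact exists_nat_gt _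
  rw [h2, measure_empty] at h1
  refine tendsto_of_tendsto_of_tendsto_of_le_of_le tendsto_const_nhds h1 (fun n => zero_le) (fun n => ?_)
  rw [withDensity_apply _ (hm n)]
  refine lintegral_mono_set fun x hx => ?_
  have := hx.1
  simp only [Set.mem_setOf_eq]; linarith

lemma An_vol : ∃ Cv : ℝ≥0∞, Cv ≠ ⊤ ∧ ∀ n, rn n ^ 3 * volume (An n) ≤ Cv := by
  refine ⟨8 * volume (ball (0:R3) 1), ENNReal.mul_ne_top (by simp) measure_ball_lt_top.ne, fun n => ?_⟩
  have hR : (0:ℝ) < n + 1 := by positivity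
  have h1 : volume (An n) ≤ volume (ball (0:R3) (2 * (n+1))) := by
    refine measure_mono fun x hx => ?_
    simpa using hx.2
  rw [Measure.addHaar_ball _ _ (by positivity)] at h1
  have e : Module.finrank ℝ R3 = 3 := by simp
  rw [e] at h1
  calc _ ≤ rn n ^ 3 * (ENNReal.ofReal ((2 * (n+1)) ^ 3) * volume (ball (0:R3) 1)) := by gcongr
    _ = _ := by
      rw [← mul_assoc]; congr 1
      unfold rn
      rw [← ENNReal.ofReal_pow (by positivity), ← ENNReal.ofReal_mul (by positivity)]
      have : ((n:ℝ) + 1)⁻¹ ^ 3 * (2 * (n + 1)) ^ 3 = 8 := by field_simp; norm_num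
      rw [this]; simp

lemma hold_A {g : R3 → ℝ≥0∞} (hg : Measurable g) {α β : ℝ} (hα : 0 ≤ α) (hβ : 0 ≤ β) (h : α + β = 1) (A : Set R3) :
    ∫⁻ x in A, g x ^ α ≤ (∫⁻ x in A, g x) ^ α * volume A ^ β := by
  have := ENNReal.lintegral_mul_norm_pow_le (μ := volume.restrict A) (f := g) (g := fun _ => 1)
    hg.aemeasurable aemeasurable_const hα hβ h
  simpa using this

lemma tail_sma {g : R3 → ℝ≥0∞} (hg : Measurable g) (hi : ∫⁻ x, g x ≠ ⊤) {α β : ℝ} (hα : 0 < α) (hβ : 0 ≤ β)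
    (h : α + β = 1) {k : ℕ} (hk : (k:ℝ) = 3 * β) {u : ℕ → R3 → ℝ≥0∞} (hu : ∀ n x, u n x ≤ g x ^ α) :
    Tendsto (fun n => rn n ^ k * ∫⁻ x in An n, u n x) atTop (nhds 0) := by
  obtain ⟨Cv, hC, hv⟩ := An_vol
  have h1 : ∀ n, rn n ^ k * ∫⁻ x in An n, u n x ≤ Cv ^ β * (∫⁻ x in An n, g x) ^ α := by
    intro n
    have e : rn n ^ k = (rn n ^ 3) ^ β := by
      rw [← ENNReal.rpow_natCast, hk, ENNReal.rpow_mul]; norm_num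
    calc _ ≤ rn n ^ k * ((∫⁻ x in An n, g x) ^ α * volume (An n) ^ β) := by
          gcongr
          exact (lintegral_mono (hu n)).trans (hold_A hg hα.le hβ h _)
      _ = (rn n ^ 3 * volume (An n)) ^ β * (∫⁻ x in An n, g x) ^ α := by
          rw [e, ENNReal.mul_rpow_of_nonneg _ _ hβ]; ring
      _ ≤ _ := by gcongr; exact hv n
  have h2 : Tendsto (fun n => (∫⁻ x in An n, g x) ^ α) atTop (nhds 0) := by
    have := ((ENNReal.continuous_rpow_const (y := α)).tendsto 0).comp (tail_zero hi)
    rwa [ENNReal.zero_rpow_of_pos hα] at this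
  have h3 := ENNReal.Tendsto.const_mul (a := Cv ^ β) h2 (Or.inr (ENNReal.rpow_ne_top_of_nonneg hβ hC))
  rw [mul_zero] at h3
  exact tendsto_of_tendsto_of_tendsto_of_le_of_le tendsto_const_nhds h3 (fun n => zero_le) h1

open scoped ENNReal

lemma fderiv_norm_le (f : R3 → ℝ) (x : R3) : ‖fderiv ℝ f x‖ ≤ ∑ j, |pd f j x| := by
  refine ContinuousLinearMap.opNorm_le_bound _ (Finset.sum_nonneg fun _ _ => abs_nonneg _) fun v => ?_
  have e : v = ∑ j, v j • (EuclideanSpace.single j (1:ℝ) : R3) := by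
    ext k; simp [Finset.sum_apply, Pi.single_apply]
  have : fderiv ℝ f x v = ∑ j, v j * pd f j x := by
    conv_lhs => rw [e]
    rw [map_sum]; simp [pd]
  rw [this, Finset.sum_mul]
  refine (norm_sum_le _ _).trans (Finset.sum_le_sum fun j _ => ?_)
  rw [norm_mul, mul_comm]
  exact mul_le_mul_of_nonneg_left (PiLp.norm_apply_le v j) (abs_nonneg _)

def phn (n : ℕ) (x : R3) : ℝ≥0∞ := ENNReal.ofReal (phR ((n:ℝ)+1) x)

lemma phn_le_one (n : ℕ) (x : R3) : phn n x ≤ 1 := ENNReal.ofReal_le_one.2 (phR_le_one _ _)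

lemma phn_meas (n : ℕ) : Measurable (phn n) := (phR_sm _).cont.measurable.ennreal_ofReal

/-- energy of `f` -/
def En1 (f : R3 → ℝ) (N n : ℕ) : ℝ≥0∞ :=
  ∫⁻ x, ENNReal.ofReal (phR ((n:ℝ)+1) x ^ (2*N+8) * ∑ j, pd f j x ^ 2)

def Y6 (f : R3 → ℝ) (N n : ℕ) : ℝ≥0∞ := ∫⁻ x, (phn n x ^ (N+4) * fab f x) ^ (6:ℝ)

lemma Y6_fin {f : R3 → ℝ} (hf : Sm f) (N n : ℕ) : Y6 f N n < ⊤ := by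
  have hR : (0:ℝ) < n + 1 := by positivity
  have := cs_lint (f := fun x => (phR ((n:ℝ)+1) x ^ (N+4) * |f x|) ^ 6)
    (((((phR_sm ((n:ℝ)+1)).pow (N+4)).cont).mul hf.cont.abs).pow 6)
    (cs_of (phR_cs hR) fun x hx => by rw [hx]; simp)
  refine lt_of_le_of_lt (lintegral_mono fun x => ?_) this
  have p0 := phR_nonneg ((n:ℝ)+1) x
  rw [ENNReal.ofReal_pow (by positivity), ENNReal.ofReal_mul (by positivity), ENNReal.ofReal_pow p0]
  rw [show (6:ℝ) = ((6:ℕ):ℝ) by norm_num, ENNReal.rpow_natCast]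
  exact le_rfl

lemma sob (N : ℕ) : ∃ C : ℝ≥0∞, C ≠ ⊤ ∧ ∀ f : R3 → ℝ, Sm f → ∀ n : ℕ,
    Y6 f N n ^ (1/3:ℝ) ≤ C * (En1 f N n + rn n ^ 2 * ∫⁻ x, (phn n x ^ (N+3) * fab f x) ^ 2) := by
  obtain ⟨c, hc, h⟩ := cutR N
  set C0 := eLpNormLESNormFDerivOfEqInnerConst (volume : Measure R3) 2 with hC0
  refine ⟨(C0:ℝ≥0∞) ^ 2 * (ENNReal.ofReal (6 + 18 * c ^ 2)), ENNReal.mul_ne_top (by simp) (by simp), ?_⟩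
  intro f hf n
  set R : ℝ := (n:ℝ) + 1 with hRd
  have hR : 0 < R := by positivity
  obtain ⟨h1, -, -⟩ := h R hR
  have hη : Sm (fun x => phR R x ^ (N+4)) := (phR_sm R).pow _
  set g : R3 → ℝ := fun x => phR R x ^ (N+4) * f x with hg
  have gs : Sm g := hη.mul hf
  have gcs : HasCompactSupport g := (phRpow_cs hR (N+3)).mul_right
  have hs := eLpNorm_le_eLpNorm_fderiv_of_eq_inner (volume : Measure R3) (u := g) (gs.of_le (by simp)) gcs
    (p := 2) (p' := 6) (by norm_num) (by simp) (by simp; norm_num)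
  have hgn : ∀ x, ‖fderiv ℝ g x‖ ^ 2 ≤ (6 + 18 * c ^ 2) * (phR R x ^ (2*N+8) * ∑ j, pd f j x ^ 2
      + R⁻¹ ^ 2 * (phR R x ^ (N+3) * |f x|) ^ 2) := by
    intro x
    have p0 := phR_nonneg R x
    have a1 : ∀ j, |pd g j x| ≤ phR R x ^ (N+4) * |pd f j x| + c * (R⁻¹ * (phR R x ^ (N+3) * |f x|)) := by
      intro j
      rw [hg, pd_mul hη hf]
      refine (abs_add_le _ _).trans (add_le_add ?_ ?_)
      · rw [abs_mul, abs_of_nonneg (pow_nonneg p0 _)]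
      · rw [abs_mul]
        calc _ ≤ c * R⁻¹ * phR R x ^ (N+3) * |f x| := mul_le_mul_of_nonneg_right (h1 j x) (abs_nonneg _)
          _ = _ := by ring
    have e : phR R x ^ (2*N+8) = (phR R x ^ (N+4)) ^ 2 := by rw [← pow_mul]; congr 1; ring
    rw [e]
    set w := R⁻¹ * (phR R x ^ (N+3) * |f x|) with hw
    have ew : R⁻¹ ^ 2 * (phR R x ^ (N+3) * |f x|) ^ 2 = w ^ 2 := by rw [hw]; ring
    rw [ew]
    set s := phR R x ^ (N+4)
    have w0 : 0 ≤ w := by positivity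
    have s0 : 0 ≤ s := by positivity
    have a2 := fderiv_norm_le g x
    have a3 : ∀ j, |pd g j x| ^ 2 ≤ 2 * (s ^ 2 * pd f j x ^ 2) + 2 * c ^ 2 * w ^ 2 := by
      intro j
      calc |pd g j x| ^ 2 ≤ (s * |pd f j x| + c * w) ^ 2 := pow_le_pow_left₀ (abs_nonneg _) (a1 j) 2
        _ ≤ _ := by nlinarith [sq_nonneg (s * |pd f j x| - c * w), sq_abs (pd f j x)]
    have a4 : ‖fderiv ℝ g x‖ ^ 2 ≤ 3 * ∑ j, |pd g j x| ^ 2 := by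
      refine (pow_le_pow_left₀ (norm_nonneg _) a2 2).trans ?_
      simp only [Fin.sum_univ_three]
      nlinarith [sq_nonneg (|pd g 0 x| - |pd g 1 x|), sq_nonneg (|pd g 0 x| - |pd g 2 x|), sq_nonneg (|pd g 1 x| - |pd g 2 x|)]
    simp only [Fin.sum_univ_three] at a4 ⊢
    have z : 0 ≤ c ^ 2 * (s ^ 2 * (pd f 0 x ^ 2 + pd f 1 x ^ 2 + pd f 2 x ^ 2)) := by positivity
    have z2 : 0 ≤ w ^ 2 := by positivity
    nlinarith [a3 0, a3 1, a3 2]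
  have hY : eLpNorm g 6 volume = Y6 f N n ^ (1/6:ℝ) := by
    rw [eLpNorm_eq_lintegral_rpow_enorm_toReal (by simp) (by simp)]
    unfold Y6
    congr 1
    · refine lintegral_congr fun x => ?_
      congr 1
      · rw [Real.enorm_eq_ofReal_abs, hg, abs_mul, abs_of_nonneg (pow_nonneg (phR_nonneg R x) _),
          ENNReal.ofReal_mul (pow_nonneg (phR_nonneg R x) _), ENNReal.ofReal_pow (phR_nonneg R x)]
        rfl
      
  have hD : eLpNorm (fderiv ℝ g) 2 volume ^ 2 = ∫⁻ x, ENNReal.ofReal (‖fderiv ℝ g x‖ ^ 2) := by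
    rw [eLpNorm_eq_lintegral_rpow_enorm_toReal (by simp) (by simp)]
    rw [← ENNReal.rpow_natCast, ← ENNReal.rpow_mul]
    simp only [ENNReal.toReal_ofNat, Nat.cast_ofNat]
    norm_num
  have hD2 : ∫⁻ x, ENNReal.ofReal (‖fderiv ℝ g x‖ ^ 2) ≤ ENNReal.ofReal (6 + 18 * c ^ 2) *
      (En1 f N n + rn n ^ 2 * ∫⁻ x, (phn n x ^ (N+3) * fab f x) ^ 2) := by
    have m1 : Measurable fun x => ENNReal.ofReal (phR R x ^ (2*N+8) * ∑ j, pd f j x ^ 2) := by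
      refine (Continuous.measurable ?_).ennreal_ofReal
      exact ((phR_sm R).pow _).cont.mul (continuous_finset_sum _ fun j _ => ((hf.pd j).pow 2).cont)
    have hrt : rn n ^ 2 ≠ ⊤ := by simp [rn]
    unfold En1
    rw [← lintegral_const_mul' _ _ hrt, ← lintegral_add_left m1, ← lintegral_const_mul' _ _ ENNReal.ofReal_ne_top]
    refine lintegral_mono fun x => ?_
    have p0 := phR_nonneg R x
    have q0 : 0 ≤ ∑ j, pd f j x ^ 2 := by positivity
    have z1 : 0 ≤ phR R x ^ (2*N+8) * ∑ j, pd f j x ^ 2 := by positivity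
    have z2 : 0 ≤ R⁻¹ ^ 2 * (phR R x ^ (N+3) * |f x|) ^ 2 := by positivity
    have z3 : ENNReal.ofReal (R⁻¹ ^ 2 * (phR R x ^ (N+3) * |f x|) ^ 2) = rn n ^ 2 * (phn n x ^ (N+3) * fab f x) ^ 2 := by
      rw [ENNReal.ofReal_mul (by positivity), ENNReal.ofReal_pow (by positivity), ENNReal.ofReal_pow (by positivity),
        ENNReal.ofReal_mul (by positivity), ENNReal.ofReal_pow (by positivity)]
      rfl
    rw [← z3, ← ENNReal.ofReal_add z1 z2, ← ENNReal.ofReal_mul (by positivity)]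
    exact ENNReal.ofReal_le_ofReal (hgn x)
  calc Y6 f N n ^ (1/3:ℝ) = (eLpNorm g 6 volume) ^ 2 := by
        rw [hY, ← ENNReal.rpow_natCast, ← ENNReal.rpow_mul]; norm_num
    _ ≤ (C0 * eLpNorm (fderiv ℝ g) 2 volume) ^ 2 := by gcongr; exact_mod_cast hs
    _ = (C0:ℝ≥0∞) ^ 2 * eLpNorm (fderiv ℝ g) 2 volume ^ 2 := by rw [mul_pow]
    _ ≤ _ := by rw [hD, mul_assoc]; gcongr

open scoped ENNReal

lemma absorb {X A B : ℝ≥0∞} (hX : X ≠ ⊤) (h : X ≤ B + A * X ^ (3/5:ℝ)) : X ≤ 2 * B + (2 * A) ^ (5/2:ℝ) := by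
  by_cases h0 : X = 0
  · rw [h0]; exact zero_le
  rcases le_or_gt X (2 * A * X ^ (3/5:ℝ)) with h1 | h1
  · have e : X ^ (2/5:ℝ) * X ^ (3/5:ℝ) = X := by
      rw [← ENNReal.rpow_add _ _ h0 hX]; norm_num
    have z0 : X ^ (3/5:ℝ) ≠ 0 := by simp [h0, hX]
    have zt : X ^ (3/5:ℝ) ≠ ⊤ := by simp [h0, hX]
    have h2 : X ^ (2/5:ℝ) ≤ 2 * A := by
      rw [← ENNReal.mul_le_mul_iff_left z0 zt, e]; exact h1
    have h3 : X ≤ (2 * A) ^ (5/2:ℝ) := by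
      calc X = (X ^ (2/5:ℝ)) ^ (5/2:ℝ) := by rw [← ENNReal.rpow_mul]; norm_num
        _ ≤ _ := by gcongr
    exact h3.trans le_add_self
  · have h2 : 2 * X ≤ 2 * B + X := by
      calc 2 * X ≤ 2 * (B + A * X ^ (3/5:ℝ)) := by gcongr
        _ = 2 * B + 2 * A * X ^ (3/5:ℝ) := by ring
        _ ≤ _ := by gcongr
    rw [two_mul X] at h2
    exact ((ENNReal.add_le_add_iff_right hX).1 h2).trans le_self_add

lemma interp {f : R3 → ℝ} (hf : Measurable f) (N n : ℕ) {σ : ℝ} (h1 : 1 ≤ σ) (h6 : σ ≤ 6)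
    (hN : 6 * ((N:ℝ)+4) * (σ-1) ≤ 5 * (N+3) * σ) :
    ∫⁻ x, (phn n x ^ (N+3) * bg f x) ^ σ ≤ (∫⁻ x, bg f x) ^ ((6-σ)/5) * Y6 f N n ^ ((σ-1)/5) := by
  have hα : 0 ≤ (6-σ)/5 := by linarith
  have hβ : 0 ≤ (σ-1)/5 := by linarith
  have m1 : Measurable fun x => (phn n x ^ (N+4) * fab f x) ^ (6:ℝ) :=
    (((phn_meas n).pow_const _).mul (fab_meas hf)).pow_const _
  refine le_trans ?_ (ENNReal.lintegral_mul_norm_pow_le (bg_meas hf).aemeasurable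
    m1.aemeasurable hα hβ (by ring))
  refine lintegral_mono fun x => ?_
  rw [ENNReal.mul_rpow_of_nonneg _ _ (by linarith), ← ENNReal.rpow_mul]
  have e1 : (phn n x ^ (N+3)) ^ σ = phn n x ^ ((N+3)*σ) := by
    rw [← ENNReal.rpow_natCast, ← ENNReal.rpow_mul]; push_cast; rfl
  have e2 : (phn n x ^ (N+4)) ^ (6*((σ-1)/5)) = phn n x ^ ((N+4)*(6*((σ-1)/5))) := by
    rw [← ENNReal.rpow_natCast, ← ENNReal.rpow_mul]; push_cast; rfl
  have e3 : bg f x ^ σ = bg f x ^ ((6-σ)/5) * bg f x ^ (6*((σ-1)/5)) := by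
    rw [← ENNReal.rpow_add_of_nonneg _ _ hα (by linarith)]; congr 1; ring
  rw [ENNReal.mul_rpow_of_nonneg _ _ (by linarith), e1, e2, e3]
  calc _ = bg f x ^ ((6-σ)/5) * (phn n x ^ (((N:ℝ)+3)*σ) * bg f x ^ (6*((σ-1)/5))) := by ring
    _ ≤ _ := by
      refine mul_le_mul' le_rfl (mul_le_mul' ?_ ?_)
      · refine ENNReal.rpow_le_rpow_of_exponent_ge (phn_le_one n x) ?_
        linarith
      · exact ENNReal.rpow_le_rpow (bg_le_fab f x) (by linarith)

lemma Bn_vol : ∃ Cv : ℝ≥0∞, Cv ≠ ⊤ ∧ ∀ n : ℕ, rn n ^ 3 * volume (ball (0:R3) (2 * ((n:ℝ)+1))) ≤ Cv := by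
  refine ⟨8 * volume (ball (0:R3) 1), ENNReal.mul_ne_top (by simp) measure_ball_lt_top.ne, fun n => ?_⟩
  have hR : (0:ℝ) < n + 1 := by positivity
  rw [Measure.addHaar_ball _ _ (by positivity)]
  have e : Module.finrank ℝ R3 = 3 := by simp
  rw [e]
  refine le_of_eq ?_
  rw [← mul_assoc]; congr 1
  unfold rn
  rw [← ENNReal.ofReal_pow (by positivity), ← ENNReal.ofReal_mul (by positivity)]
  have : ((n:ℝ) + 1)⁻¹ ^ 3 * (2 * (n + 1)) ^ 3 = 8 := by field_simp; norm_num
  rw [this]; simp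

lemma phn_zero (n : ℕ) {x : R3} (hx : x ∉ ball (0:R3) (2 * ((n:ℝ)+1))) : phn n x = 0 := by
  unfold phn
  rw [phR_zero (by positivity) (by simpa using hx)]; simp

lemma Xbound {f : R3 → ℝ} (hf : Sm f) (N : ℕ) (hb : ∫⁻ x, bg f x ≠ ⊤) (hs : ∫⁻ x, sl f x ^ (6:ℝ) ≠ ⊤) :
    ∃ C : ℝ≥0∞, C ≠ ⊤ ∧ ∀ n, Y6 f N n ^ (1/3:ℝ) ≤ C * (1 + En1 f N n) := by
  obtain ⟨C, hC, h⟩ := sob N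
  obtain ⟨Cv, hCv, hv⟩ := Bn_vol
  have hm := hf.cont.measurable
  set M := (∫⁻ x, bg f x) ^ (4/5:ℝ) with hM
  have hMt : M ≠ ⊤ := ENNReal.rpow_ne_top_of_nonneg (by norm_num) hb
  set L := (∫⁻ x, sl f x ^ (6:ℝ)) ^ (1/3:ℝ) * Cv ^ (2/3:ℝ) with hL
  have hLt : L ≠ ⊤ := ENNReal.mul_ne_top (ENNReal.rpow_ne_top_of_nonneg (by norm_num) hs)
    (ENNReal.rpow_ne_top_of_nonneg (by norm_num) hCv)
  have key : ∀ n, rn n ^ 2 * ∫⁻ x, (phn n x ^ (N+3) * fab f x) ^ 2 ≤ L + M * (Y6 f N n ^ (1/3:ℝ)) ^ (3/5:ℝ) := by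
    intro n
    have e : ∫⁻ x, (phn n x ^ (N+3) * fab f x) ^ 2 = (∫⁻ x, (phn n x ^ (N+3) * sl f x) ^ 2)
        + ∫⁻ x, (phn n x ^ (N+3) * bg f x) ^ (2:ℝ) := by
      have m1 : Measurable fun x => (phn n x ^ (N+3) * sl f x) ^ 2 :=
        (((phn_meas n).pow_const _).mul (sl_meas hm)).pow_const _
      rw [← lintegral_add_left m1]
      refine lintegral_congr fun x => ?_
      rw [ENNReal.rpow_two, mul_pow, mul_pow, mul_pow, fab_sq]; ring
    rw [e, mul_add]
    refine add_le_add ?_ ?_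
    · set A := ball (0:R3) (2 * ((n:ℝ)+1)) with hA
      have b1 : ∫⁻ x, (phn n x ^ (N+3) * sl f x) ^ 2 ≤ ∫⁻ x in A, (sl f x ^ (6:ℝ)) ^ (1/3:ℝ) := by
        rw [← lintegral_indicator measurableSet_ball]
        refine lintegral_mono fun x => ?_
        by_cases hx : x ∈ A
        · rw [Set.indicator_of_mem hx, ← ENNReal.rpow_mul, show (6:ℝ) * (1/3) = 2 by norm_num, ENNReal.rpow_two]
          refine pow_le_pow_left' (mul_le_of_le_one_left' (pow_le_one₀ zero_le (phn_le_one n x))) 2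
        · rw [phn_zero n hx]; simp
      have b2 := hold_A ((sl_meas hm).pow_const (6:ℝ)) (α := 1/3) (β := 2/3) (by norm_num) (by norm_num) (by norm_num) A
      have e2 : rn n ^ 2 = (rn n ^ 3) ^ (2/3:ℝ) := by
        rw [← ENNReal.rpow_natCast, ← ENNReal.rpow_natCast, ← ENNReal.rpow_mul]; norm_num
      calc _ ≤ rn n ^ 2 * ((∫⁻ x in A, sl f x ^ (6:ℝ)) ^ (1/3:ℝ) * volume A ^ (2/3:ℝ)) := by
            gcongr; exact b1.trans b2
        _ = (∫⁻ x in A, sl f x ^ (6:ℝ)) ^ (1/3:ℝ) * (rn n ^ 3 * volume A) ^ (2/3:ℝ) := by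
            rw [e2, ENNReal.mul_rpow_of_nonneg _ _ (by norm_num)]; ring
        _ ≤ L := by
            rw [hL]
            gcongr
            · exact Measure.restrict_le_self
            · exact hv n
    · have b1 := interp hm N n (σ := 2) (by norm_num) (by norm_num) (by nlinarith [N.cast_nonneg (α := ℝ)])
      rw [show ((6:ℝ)-2)/5 = 4/5 by norm_num, show ((2:ℝ)-1)/5 = 1/3 * (3/5) by norm_num, ENNReal.rpow_mul] at b1
      exact (mul_le_of_le_one_left' (pow_le_one₀ zero_le (rn_le_one n))).trans b1
  refine ⟨2 * C * (1 + L) + (2 * (C * M)) ^ (5/2:ℝ), ?_, fun n => ?_⟩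
  · refine ENNReal.add_ne_top.2 ⟨ENNReal.mul_ne_top (ENNReal.mul_ne_top (by simp) hC) (by simp [hLt]),
      ENNReal.rpow_ne_top_of_nonneg (by norm_num) (ENNReal.mul_ne_top (by simp) (ENNReal.mul_ne_top hC hMt))⟩
  · have h1 := (h f hf n).trans (mul_le_mul_right (add_le_add_right (key n) (En1 f N n)) C)
    have h2 : Y6 f N n ^ (1/3:ℝ) ≤ C * (En1 f N n + L) + (C * M) * (Y6 f N n ^ (1/3:ℝ)) ^ (3/5:ℝ) := by
      refine h1.trans_eq ?_; ring
    refine (absorb (ENNReal.rpow_ne_top_of_nonneg (by norm_num) (Y6_fin hf N n).ne) h2).trans ?_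
    rw [add_mul]
    refine add_le_add ?_ (le_mul_of_one_le_right' le_self_add)
    calc 2 * (C * (En1 f N n + L)) = 2 * C * (En1 f N n + L) := by ring
      _ ≤ 2 * C * ((1 + L) * (1 + En1 f N n)) := by
        gcongr
        calc En1 f N n + L ≤ En1 f N n + L + (1 + L * En1 f N n) := le_self_add
          _ = _ := by ring
      _ = _ := by ring

/-- Bound on the big part -/
lemma bgbound {f : R3 → ℝ} (hf : Sm f) (N : ℕ) (hb : ∫⁻ x, bg f x ≠ ⊤) (hs : ∫⁻ x, sl f x ^ (6:ℝ) ≠ ⊤)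
    {σ : ℝ} (h1 : 1 ≤ σ) (h6 : σ ≤ 6) (hN : 6 * ((N:ℝ)+4) * (σ-1) ≤ 5 * (N+3) * σ) :
    ∃ C : ℝ≥0∞, C ≠ ⊤ ∧ ∀ n, (∫⁻ x, (phn n x ^ (N+3) * bg f x) ^ σ) ^ (2/σ) ≤ C * (1 + En1 f N n) := by
  obtain ⟨C, hC, h⟩ := Xbound hf N hb hs
  have hσ : 0 < σ := by linarith
  set M := ((∫⁻ x, bg f x) ^ ((6-σ)/5)) ^ (2/σ) with hM
  have hMt : M ≠ ⊤ := ENNReal.rpow_ne_top_of_nonneg (by positivity) (ENNReal.rpow_ne_top_of_nonneg (by linarith) hb)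
  refine ⟨M * (1 + C), ENNReal.mul_ne_top hMt (by simp [hC]), fun n => ?_⟩
  set κ := 6 * (σ - 1) / (5 * σ) with hκ
  have k0 : 0 ≤ κ := div_nonneg (by linarith) (by linarith)
  have k1 : κ ≤ 1 := by rw [hκ, div_le_one (by linarith)]; linarith
  calc _ ≤ ((∫⁻ x, bg f x) ^ ((6-σ)/5) * Y6 f N n ^ ((σ-1)/5)) ^ (2/σ) := by
        gcongr; exact interp hf.cont.measurable N n h1 h6 hN
    _ = M * (Y6 f N n ^ (1/3:ℝ)) ^ κ := by
        rw [ENNReal.mul_rpow_of_nonneg _ _ (by positivity), ← ENNReal.rpow_mul (Y6 f N n), ← ENNReal.rpow_mul (Y6 f N n)]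
        congr 2
        rw [hκ]; field_simp; ring
    _ ≤ M * (1 + Y6 f N n ^ (1/3:ℝ)) := by
        gcongr
        have := en_young (x := 1) (y := Y6 f N n ^ (1/3:ℝ)) (α := 1 - κ) (β := κ) (by linarith) k0 (by ring)
        simpa using this
    _ ≤ M * ((1 + C) * (1 + En1 f N n)) := by
        gcongr
        calc 1 + Y6 f N n ^ (1/3:ℝ) ≤ 1 + C * (1 + En1 f N n) + En1 f N n := by
              refine le_trans ?_ le_self_add
              gcongr; exact h n
          _ = _ := by ring
    _ = _ := by ring

open scoped ENNReal

def SI (E : ℕ → ℝ≥0∞) (k : ℕ) (w : ℕ → R3 → ℝ≥0∞) : Prop :=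
  Sma E (fun n => rn n ^ k * ∫⁻ x in An n, w n x)

lemma SI.mono {E : ℕ → ℝ≥0∞} {k : ℕ} {w w' : ℕ → R3 → ℝ≥0∞} (h : SI E k w) (hw : ∀ n x, w' n x ≤ w n x) :
    SI E k w' :=
  Sma.mono h fun n => mul_le_mul_right (lintegral_mono (hw n)) _

lemma SI.add {E : ℕ → ℝ≥0∞} {k : ℕ} {w w' : ℕ → R3 → ℝ≥0∞} (h : SI E k w) (h' : SI E k w')
    (hm : ∀ n, Measurable (w n)) : SI E k (fun n x => w n x + w' n x) := by
  refine Sma.mono (Sma.add h h') fun n => le_of_eq ?_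
  rw [lintegral_add_left (hm n), mul_add]

lemma SI.sum {E : ℕ → ℝ≥0∞} {k : ℕ} {ι : Type} (s : Finset ι) {w : ι → ℕ → R3 → ℝ≥0∞} (h : ∀ i, SI E k (w i))
    (hm : ∀ i n, Measurable (w i n)) : SI E k (fun n x => ∑ i ∈ s, w i n x) := by
  refine Sma.mono (Sma.sum s h) fun n => le_of_eq ?_
  rw [lintegral_finset_sum _ (fun i _ => hm i n), Finset.mul_sum]

lemma SI.cmul {E : ℕ → ℝ≥0∞} {k : ℕ} {w : ℕ → R3 → ℝ≥0∞} (h : SI E k w) {c : ℝ≥0∞} (hc : c ≠ ⊤) :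
    SI E k (fun n x => c * w n x) := by
  refine Sma.mono (Sma.cmul h hc) fun n => le_of_eq ?_
  rw [lintegral_const_mul' _ _ hc]; ring

lemma SI.of_int {E : ℕ → ℝ≥0∞} {k : ℕ} (hk : 1 ≤ k) {w : ℕ → R3 → ℝ≥0∞} {g : R3 → ℝ≥0∞}
    (hg : ∫⁻ x, g x ≠ ⊤) (hw : ∀ n x, w n x ≤ g x) : SI E k w :=
  Sma.of_bdd' hg (fun n => (lintegral_mono (hw n)).trans (setLIntegral_le_lintegral _ _)) hk

lemma SI.of_bdd {E : ℕ → ℝ≥0∞} {k : ℕ} (hk : 1 ≤ k) {w : ℕ → R3 → ℝ≥0∞} {C : ℝ≥0∞} (hC : C ≠ ⊤)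
    (h : ∀ n, ∫⁻ x, w n x ≤ C * (1 + E n)) : SI E k w :=
  Sma.of_bdd hC (fun n => (setLIntegral_le_lintegral _ _).trans (h n)) hk

def psn (N n : ℕ) (x : R3) : ℝ≥0∞ := phn n x ^ (N+3)
lemma psn_le_one (N n : ℕ) (x : R3) : psn N n x ≤ 1 := pow_le_one₀ zero_le (phn_le_one n x)
lemma psn_meas (N n : ℕ) : Measurable (psn N n) := (phn_meas n).pow_const _

structure Good (E : ℕ → ℝ≥0∞) (N : ℕ) (p : ℝ) (f : R3 → ℝ) : Prop where
  m : Measurable f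
  b : ∫⁻ x, bg f x ≠ ⊤
  s : ∫⁻ x, sl f x ^ (6:ℝ) ≠ ⊤
  b2 : ∃ C : ℝ≥0∞, C ≠ ⊤ ∧ ∀ n, ∫⁻ x, (psn N n x * bg f x) ^ 2 ≤ C * (1 + E n)
  bp : ∃ C : ℝ≥0∞, C ≠ ⊤ ∧ ∀ n, (∫⁻ x, ((psn N n x * bg f x) ^ 2) ^ (p/(p-1))) ^ ((p-1)/p) ≤ C * (1 + E n)

lemma psq_le (N n : ℕ) (x : R3) (y : ℝ≥0∞) : psn N n x ^ 2 * y ≤ y :=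
  mul_le_of_le_one_left' (pow_le_one₀ zero_le (psn_le_one N n x))

lemma SI_bg2 {E : ℕ → ℝ≥0∞} {N : ℕ} {p : ℝ} {f : R3 → ℝ} (h : Good E N p f) {k : ℕ} (hk : 1 ≤ k) :
    SI E k (fun n x => psn N n x ^ 2 * bg f x ^ 2) := by
  obtain ⟨C, hC, h2⟩ := h.b2
  refine SI.of_bdd hk hC fun n => ?_
  simpa only [mul_pow] using h2 n

lemma SI_bgp {E : ℕ → ℝ≥0∞} {N : ℕ} {p : ℝ} {f : R3 → ℝ} (hp : 1 < p) (h : Good E N p f) {k : ℕ} (hk : 1 ≤ k)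
    {H : R3 → ℝ≥0∞} (hH : Measurable H) (hHp : ∫⁻ x, H x ^ p ≠ ⊤) :
    SI E k (fun n x => psn N n x ^ 2 * (H x * bg f x ^ 2)) := by
  obtain ⟨C, hC, h2⟩ := h.bp
  have hT : (∫⁻ x, H x ^ p) ^ (1/p) ≠ ⊤ := ENNReal.rpow_ne_top_of_nonneg (by positivity) hHp
  refine SI.of_bdd hk (C := (∫⁻ x, H x ^ p) ^ (1/p) * C) (ENNReal.mul_ne_top hT hC) fun n => ?_
  have hc : p.HolderConjugate (p/(p-1)) := Real.HolderConjugate.conjExponent hp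
  have m1 : Measurable fun x => (psn N n x * bg f x) ^ 2 :=
    ((psn_meas N n).mul (bg_meas h.m)).pow_const _
  have := ENNReal.lintegral_mul_le_Lp_mul_Lq volume hc hH.aemeasurable m1.aemeasurable
  rw [show 1 / (p/(p-1)) = (p-1)/p by rw [one_div_div]] at this
  calc _ = ∫⁻ x, (H * fun x => (psn N n x * bg f x) ^ 2) x := by
        refine lintegral_congr fun x => ?_
        simp only [Pi.mul_apply]; ring
    _ ≤ _ := this
    _ ≤ (∫⁻ x, H x ^ p) ^ (1/p) * (C * (1 + E n)) := by gcongr; exact h2 n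
    _ = _ := by ring

lemma SI_a {E : ℕ → ℝ≥0∞} {N : ℕ} {p : ℝ} {f : R3 → ℝ} (h : Good E N p f) :
    SI E 2 (fun n x => psn N n x ^ 2 * fab f x ^ 2) := by
  have h1 := SI_bg2 h (k := 2) (by norm_num)
  have h2 : SI E 2 (fun n x => psn N n x ^ 2 * sl f x ^ 2) := by
    refine Sma.of_tendsto (tail_sma ((sl_meas h.m).pow_const (6:ℝ)) h.s (α := 1/3) (β := 2/3) (by norm_num)
      (by norm_num) (by norm_num) (by norm_num) fun n x => ?_)
    refine (psq_le _ _ _ _).trans_eq ?_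
    rw [← ENNReal.rpow_mul, show (6:ℝ) * (1/3) = 2 by norm_num, ENNReal.rpow_two]
  refine (h1.add h2 fun n => ((psn_meas N n).pow_const 2).mul ((bg_meas h.m).pow_const 2)).mono fun n x => ?_
  rw [fab_sq, mul_add]

lemma SI_b {E : ℕ → ℝ≥0∞} {N : ℕ} {p : ℝ} {f G : R3 → ℝ} (hp : 1 < p) (h : Good E N p f) (hG : Measurable G)
    (hb : ∫⁻ x, bg G x ≠ ⊤) (hbp : ∫⁻ x, bg G x ^ p ≠ ⊤) (hs : ∫⁻ x, sl G x ^ (3:ℝ) ≠ ⊤) :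
    SI E 1 (fun n x => psn N n x ^ 2 * (fab G x * fab f x ^ 2)) := by
  have h1 := SI_bgp hp h (k := 1) le_rfl (bg_meas hG) hbp
  have h2 := SI_bg2 h (k := 1) le_rfl
  have h3 : SI E 1 (fun n x => bg G x) := SI.of_int le_rfl hb fun n x => le_rfl
  have h4 : SI E 1 (fun n x => sl G x * sl f x ^ 2) := by
    have mm : Measurable fun x => sl G x ^ (3:ℝ) + sl f x ^ (6:ℝ) :=
      ((sl_meas hG).pow_const _).add ((sl_meas h.m).pow_const _)
    refine Sma.of_tendsto (tail_sma mm ?_ (α := 2/3) (β := 1/3) (by norm_num)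
      (by norm_num) (by norm_num) (by norm_num) fun n x => ?_)
    · rw [lintegral_add_left ((sl_meas hG).pow_const _)]
      exact ENNReal.add_ne_top.2 ⟨hs, h.s⟩
    · have := en_young (x := sl G x ^ (3:ℝ)) (y := sl f x ^ (6:ℝ)) (α := 1/2) (β := 1/2) (by norm_num) (by norm_num) (by norm_num)
      refine le_trans (le_of_eq ?_) (ENNReal.rpow_le_rpow this (by norm_num))
      rw [ENNReal.mul_rpow_of_nonneg _ _ (by norm_num), ← ENNReal.rpow_mul, ← ENNReal.rpow_mul, ← ENNReal.rpow_mul,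
        ← ENNReal.rpow_mul]
      norm_num
  have mb := bg_meas hG
  have ms := sl_meas hG
  have nb := bg_meas h.m
  have ns := sl_meas h.m
  have hh := ((h1.add h2 fun n => ((psn_meas N n).pow_const 2).mul (mb.mul (nb.pow_const 2))).add (h3.add h4 fun n => mb)
    fun n => (((psn_meas N n).pow_const 2).mul (mb.mul (nb.pow_const 2))).add (((psn_meas N n).pow_const 2).mul (nb.pow_const 2)))
  refine hh.mono fun n x => ?_
  rw [fab_sq, fab_eq G]
  calc _ = psn N n x ^ 2 * (bg G x * bg f x ^ 2) + psn N n x ^ 2 * (sl G x * bg f x ^ 2)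
        + (psn N n x ^ 2 * (bg G x * sl f x ^ 2) + psn N n x ^ 2 * (sl G x * sl f x ^ 2)) := by ring
    _ ≤ _ := by
      gcongr ?_ + ?_ * ?_ + (?_ + ?_)
      · exact le_rfl
      · exact le_rfl
      · exact mul_le_of_le_one_left' (sl_le_one _ _)
      · exact (psq_le _ _ _ _).trans (mul_le_of_le_one_right' (pow_le_one₀ zero_le (sl_le_one _ _)))
      · exact psq_le _ _ _ _

lemma SI_c {E : ℕ → ℝ≥0∞} {N : ℕ} {p : ℝ} {f G : R3 → ℝ} (h : Good E N p f) (hG : Good E N p G)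
    (hs : ∫⁻ x, sl G x ^ (2:ℝ) ≠ ⊤) :
    SI E 1 (fun n x => psn N n x ^ 2 * (fab f x * fab G x)) := by
  have h1 := SI_bg2 h (k := 1) le_rfl
  have h2 := SI_bg2 hG (k := 1) le_rfl
  have h3 : SI E 1 (fun n x => bg G x) := SI.of_int le_rfl hG.b fun n x => le_rfl
  have h3' : SI E 1 (fun n x => bg f x) := SI.of_int le_rfl h.b fun n x => le_rfl
  have h4 : SI E 1 (fun n x => sl f x * sl G x) := by
    have mm : Measurable fun x => sl f x ^ (6:ℝ) + sl G x ^ (2:ℝ) :=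
      ((sl_meas h.m).pow_const _).add ((sl_meas hG.m).pow_const _)
    refine Sma.of_tendsto (tail_sma mm ?_ (α := 2/3) (β := 1/3) (by norm_num)
      (by norm_num) (by norm_num) (by norm_num) fun n x => ?_)
    · rw [lintegral_add_left ((sl_meas h.m).pow_const _)]
      exact ENNReal.add_ne_top.2 ⟨h.s, hs⟩
    · have := en_young (x := sl f x ^ (6:ℝ)) (y := sl G x ^ (2:ℝ)) (α := 1/4) (β := 3/4) (by norm_num) (by norm_num) (by norm_num)
      refine le_trans (le_of_eq ?_) (ENNReal.rpow_le_rpow this (by norm_num))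
      rw [ENNReal.mul_rpow_of_nonneg _ _ (by norm_num), ← ENNReal.rpow_mul, ← ENNReal.rpow_mul, ← ENNReal.rpow_mul,
        ← ENNReal.rpow_mul]
      norm_num
  have mb := bg_meas hG.m
  have ms := sl_meas hG.m
  have nb := bg_meas h.m
  have ns := sl_meas h.m
  have m1 := fun n => ((psn_meas N n).pow_const 2).mul (nb.pow_const 2)
  have m2 := fun n => ((psn_meas N n).pow_const 2).mul (mb.pow_const 2)
  have hh := (h1.add h2 m1).add ((h3.add h3' fun _ => mb).add h4 fun _ => mb.add nb) fun n => (m1 n).add (m2 n)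
  refine hh.mono fun n x => ?_
  rw [fab_eq f, fab_eq G]
  have hy : bg f x * bg G x ≤ bg f x ^ 2 + bg G x ^ 2 := by
    rcases le_total (bg f x) (bg G x) with hc | hc
    · refine le_trans ?_ le_add_self
      rw [sq]; gcongr
    · refine le_trans ?_ le_self_add
      rw [sq]; gcongr
  calc _ = psn N n x ^ 2 * (bg f x * bg G x)
        + (psn N n x ^ 2 * (sl f x * bg G x) + psn N n x ^ 2 * (bg f x * sl G x) + psn N n x ^ 2 * (sl f x * sl G x)) := by ring
    _ ≤ _ := by
      refine add_le_add ?_ (add_le_add (add_le_add ?_ ?_) ?_)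
      · rw [← mul_add]; gcongr
      · exact (psq_le _ _ _ _).trans (mul_le_of_le_one_left' (sl_le_one _ _))
      · exact (psq_le _ _ _ _).trans (mul_le_of_le_one_right' (sl_le_one _ _))
      · exact psq_le _ _ _ _

lemma a_sq (C0 b : ℝ) : ENNReal.ofReal ((C0 + b) ^ 2) ≤
    ENNReal.ofReal (2 * C0 ^ 2) + 2 * ENNReal.ofReal (b ^ 2) := by
  have : (2:ℝ≥0∞) = ENNReal.ofReal 2 := by simp
  rw [this, ← ENNReal.ofReal_mul (by norm_num), ← ENNReal.ofReal_add (by positivity) (by positivity)]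
  refine ENNReal.ofReal_le_ofReal ?_
  nlinarith [sq_nonneg (C0 - b)]

lemma SI_d {E : ℕ → ℝ≥0∞} (C0 : ℝ) {a1 : R3 → ℝ} (h2 : ∫⁻ x, ENNReal.ofReal (a1 x ^ 2) ≠ ⊤) :
    SI E 4 (fun n x => ENNReal.ofReal ((C0 + a1 x) ^ 2)) := by
  have s1 : SI E 4 (fun n x => ENNReal.ofReal (2 * C0 ^ 2)) := by
    obtain ⟨Cv, hC, hv⟩ := An_vol
    have := Sma.of_bdd' (E := E) (C := ENNReal.ofReal (2 * C0 ^ 2) * Cv)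
      (X := fun n => rn n ^ 3 * ∫⁻ x in An n, ENNReal.ofReal (2 * C0 ^ 2)) (k := 1)
      (ENNReal.mul_ne_top ENNReal.ofReal_ne_top hC) (fun n => ?_) le_rfl
    · refine Sma.mono this fun n => le_of_eq ?_
      ring
    · rw [setLIntegral_const]
      calc _ = ENNReal.ofReal (2 * C0 ^ 2) * (rn n ^ 3 * volume (An n)) := by ring
        _ ≤ _ := by gcongr; exact hv n
  have s2 : SI E 4 (fun n x => 2 * ENNReal.ofReal (a1 x ^ 2)) :=
    SI.cmul (SI.of_int (by norm_num) h2 fun n x => le_rfl) (by simp)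
  exact (s1.add s2 fun _ => measurable_const).mono fun n x => a_sq _ _

lemma SI_e {E : ℕ → ℝ≥0∞} {N : ℕ} {p : ℝ} {f : R3 → ℝ} (hp : 1 < p) (h : Good E N p f) (C0 : ℝ) {a1 : R3 → ℝ}
    (hm : Measurable a1) (h0 : ∀ x, 0 ≤ a1 x)
    (h2 : ∫⁻ x, ENNReal.ofReal (a1 x ^ 2) ≠ ⊤) (h2p : ∫⁻ x, ENNReal.ofReal (a1 x ^ (2*p)) ≠ ⊤) :
    SI E 2 (fun n x => psn N n x ^ 2 * (fab f x ^ 2 * ENNReal.ofReal ((C0 + a1 x) ^ 2))) := by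
  have ma : Measurable fun x => ENNReal.ofReal (a1 x ^ 2) := (hm.pow_const 2).ennreal_ofReal
  have s1 := (SI_a h).cmul (c := ENNReal.ofReal (2 * C0 ^ 2)) ENNReal.ofReal_ne_top
  have s2 := SI_bgp hp h (k := 2) (by norm_num) ma (by
    convert h2p using 3 with x
    rw [ENNReal.ofReal_rpow_of_nonneg (by positivity) (by linarith), Real.rpow_mul (h0 x), Real.rpow_two])
  have s3 : SI E 2 (fun n x => ENNReal.ofReal (a1 x ^ 2)) := SI.of_int (by norm_num) h2 fun n x => le_rfl
  have nb := bg_meas h.m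
  have m2 := fun n => ((psn_meas N n).pow_const 2).mul (ma.mul (nb.pow_const 2))
  have s4 := (s2.add s3 m2).cmul (c := 2) (by simp)
  refine (s4.add s1 fun n => ((m2 n).add ma).const_mul 2).mono fun n x => ?_
  calc _ ≤ psn N n x ^ 2 * (fab f x ^ 2 * (ENNReal.ofReal (2 * C0 ^ 2) + 2 * ENNReal.ofReal (a1 x ^ 2))) := by
        gcongr; exact a_sq _ _
    _ = 2 * (psn N n x ^ 2 * (ENNReal.ofReal (a1 x ^ 2) * bg f x ^ 2) +
          psn N n x ^ 2 * (sl f x ^ 2 * ENNReal.ofReal (a1 x ^ 2)))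
        + ENNReal.ofReal (2 * C0 ^ 2) * (psn N n x ^ 2 * fab f x ^ 2) := by
        rw [fab_sq]; ring
    _ ≤ _ := by
      gcongr
      exact (psq_le _ _ _ _).trans (mul_le_of_le_one_left' (pow_le_one₀ zero_le (sl_le_one _ _)))

open scoped ENNReal

lemma good_of {f : R3 → ℝ} (hf : Sm f) {N : ℕ} {p s : ℝ} (hp1 : 3/2 < p) (hp2 : p < 3) (hs1 : 1 ≤ s) (hs2 : s ≤ 6)
    (hi : ∫⁻ x, ENNReal.ofReal (|f x| ^ s) < ⊤) {E : ℕ → ℝ≥0∞} (hE : ∀ n, En1 f N n ≤ E n)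
    (hN : 6 * ((N:ℝ)+4) * (2*p/(p-1)-1) ≤ 5 * (N+3) * (2*p/(p-1))) : Good E N p f := by
  have hb : ∫⁻ x, bg f x ≠ ⊤ := by
    refine (lt_of_le_of_lt (lintegral_mono fun x => ?_) hi).ne
    simpa using bg_pow_le f one_pos hs1 x
  have hs : ∫⁻ x, sl f x ^ (6:ℝ) ≠ ⊤ :=
    (lt_of_le_of_lt (lintegral_mono fun x => sl_pow_le f (by linarith) hs2 x) hi).ne
  refine ⟨hf.cont.measurable, hb, hs, ?_, ?_⟩
  · obtain ⟨C, hC, h⟩ := bgbound hf N hb hs (σ := 2) (by norm_num) (by norm_num) (by nlinarith [N.cast_nonneg (α := ℝ)])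
    refine ⟨C, hC, fun n => ?_⟩
    have := h n
    simp only [ENNReal.rpow_two, div_self (two_ne_zero' ℝ), ENNReal.rpow_one] at this
    refine this.trans ?_
    gcongr; exact hE n
  · have h0 : 0 < p - 1 := by linarith
    obtain ⟨C, hC, h⟩ := bgbound hf N hb hs (σ := 2*p/(p-1)) (by rw [le_div_iff₀ h0]; linarith)
      (by rw [div_le_iff₀ h0]; linarith) hN
    refine ⟨C, hC, fun n => ?_⟩
    have := h n
    have e : 2 / (2*p/(p-1)) = (p-1)/p := by field_simp
    rw [e] at this
    have e2 : ∀ x, ((psn N n x * bg f x) ^ 2) ^ (p/(p-1)) = (phn n x ^ (N+3) * bg f x) ^ (2*p/(p-1)) := by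
      intro x
      rw [← ENNReal.rpow_two, ← ENNReal.rpow_mul]; unfold psn; congr 1; ring
    simp only [e2]
    refine this.trans ?_
    gcongr; exact hE n

def fam (U V : Fin 3 → R3 → ℝ) (θ : R3 → ℝ) : Option (Fin 3 ⊕ Fin 3) → R3 → ℝ
  | none => θ
  | some (Sum.inl i) => U i
  | some (Sum.inr i) => V i

lemma ofReal_sq_abs (t : ℝ) : ENNReal.ofReal (t ^ 2) = ENNReal.ofReal |t| ^ 2 := by
  rw [← ENNReal.ofReal_pow (abs_nonneg _), sq_abs]

lemma Ssq_fam (U V : Fin 3 → R3 → ℝ) (θ : R3 → ℝ) (x : R3) :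
    ENNReal.ofReal (Ssq U V θ x) = ∑ o, fab (fam U V θ o) x ^ 2 := by
  have : Ssq U V θ x = ∑ o, fam U V θ o x ^ 2 := by
    simp only [Fintype.sum_option, Fintype.sum_sum_type, fam, Ssq]; ring
  rw [this, ENNReal.ofReal_sum_of_nonneg fun _ _ => sq_nonneg _]
  exact Finset.sum_congr rfl fun o _ => ofReal_sq_abs _

lemma En1_le {U V : Fin 3 → R3 → ℝ} {θ : R3 → ℝ} (N n : ℕ) (o : Option (Fin 3 ⊕ Fin 3)) :
    En1 (fam U V θ o) N n ≤ En U V θ N ((n:ℝ)+1) := by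
  refine lintegral_mono fun x => ENNReal.ofReal_le_ofReal ?_
  refine mul_le_mul_of_nonneg_left ?_ (pow_nonneg (phR_nonneg _ _) _)
  have : Eden U V θ x = ∑ o, ∑ k, pd (fam U V θ o) k x ^ 2 := by
    simp only [Fintype.sum_option, Fintype.sum_sum_type, fam, Eden]; ring
  rw [this]
  exact Finset.single_le_sum (f := fun o => ∑ k, pd (fam U V θ o) k x ^ 2)
    (fun o _ => Finset.sum_nonneg fun k _ => sq_nonneg _) (Finset.mem_univ o)

lemma Err_sma {U V : Fin 3 → R3 → ℝ} {θ a1 : R3 → ℝ} {N : ℕ} {p C0 : ℝ} {E : ℕ → ℝ≥0∞} (hp : 1 < p)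
    (hg : ∀ o, Good E N p (fam U V θ o))
    (hUb : ∀ i, ∫⁻ x, bg (U i) x ^ p ≠ ⊤) (hUs : ∀ i, ∫⁻ x, sl (U i) x ^ (3:ℝ) ≠ ⊤)
    (hVs : ∀ i, ∫⁻ x, sl (V i) x ^ (2:ℝ) ≠ ⊤)
    (hm : Measurable a1) (h0 : ∀ x, 0 ≤ a1 x)
    (h2 : ∫⁻ x, ENNReal.ofReal (a1 x ^ 2) ≠ ⊤) (h2p : ∫⁻ x, ENNReal.ofReal (a1 x ^ (2*p)) ≠ ⊤) :
    Sma E (fun n => ∫⁻ x in An n, ENNReal.ofReal (Err U V θ N ((n:ℝ)+1) (fun x => C0 + a1 x) x)) := by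
  have gU : ∀ i, Good E N p (U i) := fun i => hg (some (Sum.inl i))
  have gV : ∀ i, Good E N p (V i) := fun i => hg (some (Sum.inr i))
  have gT : Good E N p θ := hg none
  have mf := fun o => fab_meas (hg o).m
  have mps := fun n => (psn_meas N n).pow_const 2
  have ma : Measurable fun x => ENNReal.ofReal ((C0 + a1 x) ^ 2) := ((hm.const_add C0).pow_const 2).ennreal_ofReal
  have sa := SI.sum Finset.univ (fun o => SI_a (hg o)) fun o n => (mps n).mul ((mf o).pow_const 2)
  have sb := SI.sum Finset.univ (fun i => SI.sum Finset.univ (fun o => SI_b hp (hg o) (gU i).m (gU i).b (hUb i) (hUs i))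
    fun o n => (mps n).mul ((fab_meas (gU i).m).mul ((mf o).pow_const 2)))
    fun i n => Finset.measurable_sum _ fun o _ => (mps n).mul ((fab_meas (gU i).m).mul ((mf o).pow_const 2))
  have sc := SI.sum Finset.univ (fun i => SI_c gT (gV i) (hVs i))
    fun i n => (mps n).mul ((fab_meas gT.m).mul (fab_meas (gV i).m))
  have sd := SI_d (E := E) C0 h2
  have se := SI.sum Finset.univ (fun o => SI_e hp (hg o) C0 hm h0 h2 h2p) fun o n => (mps n).mul (((mf o).pow_const 2).mul ma)
  refine Sma.mono (((Sma.add sa (Sma.add sb sc)).add sd).add se) fun n => ?_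
  have rt : ∀ k, rn n ^ k ≠ ⊤ := fun k => ENNReal.pow_ne_top ENNReal.ofReal_ne_top
  have m1 : Measurable fun x => rn n ^ 2 * ∑ o, psn N n x ^ 2 * fab (fam U V θ o) x ^ 2 :=
    (Finset.measurable_sum _ fun o _ => (mps n).mul ((mf o).pow_const 2)).const_mul _
  have m2 : Measurable fun x => rn n ^ 1 * ∑ i, ∑ o, psn N n x ^ 2 * (fab (U i) x * fab (fam U V θ o) x ^ 2) :=
    (Finset.measurable_sum _ fun i _ => Finset.measurable_sum _ fun o _ =>
      (mps n).mul ((fab_meas (gU i).m).mul ((mf o).pow_const 2))).const_mul _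
  have m3 : Measurable fun x => rn n ^ 1 * ∑ i, psn N n x ^ 2 * (fab θ x * fab (V i) x) :=
    (Finset.measurable_sum _ fun i _ => (mps n).mul ((fab_meas gT.m).mul (fab_meas (gV i).m))).const_mul _
  have m4 : Measurable fun x => rn n ^ 4 * ENNReal.ofReal ((C0 + a1 x) ^ 2) := ma.const_mul _
  simp only [← lintegral_const_mul' _ _ (rt _)]
  have m5 : Measurable fun x => rn n ^ 2 * ∑ o, psn N n x ^ 2 * fab (fam U V θ o) x ^ 2 +
      (rn n ^ 1 * ∑ i, ∑ o, psn N n x ^ 2 * (fab (U i) x * fab (fam U V θ o) x ^ 2) +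
        rn n ^ 1 * ∑ i, psn N n x ^ 2 * (fab θ x * fab (V i) x)) := m1.add (m2.add m3)
  have m6 : Measurable fun x => rn n ^ 2 * ∑ o, psn N n x ^ 2 * fab (fam U V θ o) x ^ 2 +
      (rn n ^ 1 * ∑ i, ∑ o, psn N n x ^ 2 * (fab (U i) x * fab (fam U V θ o) x ^ 2) +
        rn n ^ 1 * ∑ i, psn N n x ^ 2 * (fab θ x * fab (V i) x)) +
      rn n ^ 4 * ENNReal.ofReal ((C0 + a1 x) ^ 2) := m5.add m4
  rw [← lintegral_add_left m2, ← lintegral_add_left m1, ← lintegral_add_left m5,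
    ← lintegral_add_left m6]
  refine lintegral_mono fun x => le_of_eq ?_
  have S0 := Ssq_nonneg U V θ x
  have p0 := phR_nonneg ((n:ℝ)+1) x
  have er : ENNReal.ofReal (((n:ℝ)+1)⁻¹) = rn n := rfl
  have ep : ENNReal.ofReal (phR ((n:ℝ)+1) x ^ (N+3)) = psn N n x := ENNReal.ofReal_pow p0 _
  have eU : ENNReal.ofReal (∑ i, |U i x|) = ∑ i, fab (U i) x := ENNReal.ofReal_sum_of_nonneg fun _ _ => abs_nonneg _
  have eV : ENNReal.ofReal (∑ i, |V i x|) = ∑ i, fab (V i) x := ENNReal.ofReal_sum_of_nonneg fun _ _ => abs_nonneg _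
  have eT : ENNReal.ofReal |θ x| = fab θ x := rfl
  have u0 : 0 ≤ ∑ i, |U i x| := by positivity
  have v0 : 0 ≤ ∑ i, |V i x| := by positivity
  unfold Err
  rw [ENNReal.ofReal_add (by positivity) (by positivity), ENNReal.ofReal_add (by positivity) (by positivity),
    ENNReal.ofReal_add (by positivity) (by positivity)]
  rw [ENNReal.ofReal_mul (by positivity), ENNReal.ofReal_mul (by positivity), ENNReal.ofReal_mul (by positivity),
    ENNReal.ofReal_mul (by positivity), ENNReal.ofReal_mul (by positivity), ENNReal.ofReal_mul (by positivity),
    ENNReal.ofReal_mul (p := (phR ((n:ℝ)+1) x ^ (N+3)) ^ 2) (by positivity), ENNReal.ofReal_mul (p := Ssq U V θ x) (by positivity),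
    ENNReal.ofReal_add (by positivity) (by positivity), ENNReal.ofReal_mul (p := ∑ i, |U i x|) (by positivity),
    ENNReal.ofReal_mul (p := |θ x|) (by positivity)]
  rw [ENNReal.ofReal_pow (p := ((n:ℝ)+1)⁻¹) (by positivity), ENNReal.ofReal_pow (p := ((n:ℝ)+1)⁻¹) (by positivity), 
     ENNReal.ofReal_pow (p := phR ((n:ℝ)+1) x ^ (N+3)) (by positivity), er, ep, eU, eV, eT, Ssq_fam]
  simp only [pow_one, ← Finset.mul_sum, ← Finset.sum_mul]
  ring

open scoped ENNReal

lemma absorb_lim {E : ℕ → ℝ≥0∞} (hE : ∀ n, E n < ⊤) (h : Sma E E) : Tendsto E atTop (nhds 0) := by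
  obtain ⟨δ, hδ, h⟩ := h
  have ev : ∀ᶠ n in atTop, δ n ≤ 2⁻¹ := hδ.eventually (ge_mem_nhds (by simp))
  have ht : Tendsto (fun n => 2 * δ n) atTop (nhds 0) := by
    simpa using ENNReal.Tendsto.const_mul hδ (Or.inr (by simp : (2:ℝ≥0∞) ≠ ⊤))
  refine tendsto_of_tendsto_of_tendsto_of_le_of_le' tendsto_const_nhds ht (Eventually.of_forall fun _ => zero_le) ?_
  filter_upwards [ev] with n hn
  have hd : δ n ≠ ⊤ := ne_top_of_le_ne_top (by simp) hn
  lift E n to NNReal using (hE n).ne with e he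
  have h1 := h n
  rw [← he] at h1
  lift δ n to NNReal using hd with d hd
  have hn' : d ≤ 2⁻¹ := by
    rw [← ENNReal.coe_le_coe, ENNReal.coe_inv (by simp)]; simpa using hn
  have h1' : e ≤ d * (1 + e) := by exact_mod_cast h1
  have : e ≤ 2 * d := by
    rw [← NNReal.coe_le_coe] at *
    push_cast at *
    have := e.2
    nlinarith [e.coe_nonneg]
  exact_mod_cast this

lemma Eden_zero {U V : Fin 3 → R3 → ℝ} {θ : R3 → ℝ} (hθ : Sm θ) (hU : ∀ i, Sm (U i)) (hV : ∀ i, Sm (V i)) (N : ℕ)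
    (h : Tendsto (fun n : ℕ => En U V θ N ((n:ℝ)+1)) atTop (nhds 0)) (x : R3) : Eden U V θ x = 0 := by
  have hc := (Eden_sm hθ hU hV).cont
  have key : ∫⁻ x, ENNReal.ofReal (Eden U V θ x) = 0 := by
    have f := lintegral_liminf_le (u := atTop) (μ := (volume : Measure R3))
      (f := fun (n:ℕ) x => ENNReal.ofReal (phR ((n:ℝ)+1) x ^ (2*N+8) * Eden U V θ x))
      (fun n => (((phR_sm ((n:ℝ)+1)).pow _).cont.mul hc).measurable.ennreal_ofReal)
    have e2 : liminf (fun n : ℕ => ∫⁻ x, ENNReal.ofReal (phR ((n:ℝ)+1) x ^ (2*N+8) * Eden U V θ x)) atTop = 0 :=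
      h.liminf_eq
    rw [e2] at f
    refine le_antisymm (le_trans (lintegral_mono fun x => le_of_eq ?_) f) zero_le
    refine (Tendsto.liminf_eq (tendsto_const_nhds.congr' ?_)).symm
    obtain ⟨m, hm⟩ := exists_nat_ge ‖x‖
    filter_upwards [eventually_ge_atTop m] with n hn
    have : (m:ℝ) ≤ n := by exact_mod_cast hn
    rw [phR_one (by positivity) (by linarith)]; simp
  rw [lintegral_eq_zero_iff hc.measurable.ennreal_ofReal] at key
  have k2 := (Continuous.ae_eq_iff_eq (volume : Measure R3) (ENNReal.continuous_ofReal.comp hc)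
    (g := fun _ => (0:ℝ≥0∞)) continuous_const).1 key
  have := congrFun k2 x
  simp only [Function.comp, ENNReal.ofReal_eq_zero] at this
  exact le_antisymm this (Eden_nonneg _ _ _ _)

lemma zero_of_grad {f : R3 → ℝ} (hf : Sm f) (h : ∀ k x, pd f k x = 0) {s : ℝ}
    (hi : ∫⁻ x, ENNReal.ofReal (|f x| ^ s) < ⊤) (x : R3) : f x = 0 := by
  have hc : ∀ y, f y = f 0 := fun y => is_const_of_fderiv_eq_zero hf.diff (fun z => by
    have := fderiv_norm_le f z
    simp only [h, abs_zero, Finset.sum_const_zero] at this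
    exact norm_le_zero_iff.1 this) y 0
  by_contra hx
  have h0 : 0 < |f 0| ^ s := by
    rw [hc x] at hx; exact Real.rpow_pos_of_pos (abs_pos.2 hx) _
  simp only [hc, lintegral_const] at hi
  have vt : (volume : Measure R3) Set.univ = ⊤ := measure_univ_of_isAddLeftInvariant _
  rw [vt, ENNReal.mul_top (by simpa using h0)] at hi
  exact lt_irrefl _ hi

lemma core {U V : Fin 3 → R3 → ℝ} {π θ W : R3 → ℝ} (hπ : Sm π) (hθ : Sm θ)
    (hU : ∀ i, Sm (U i)) (hV : ∀ i, Sm (V i))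
    (hdiv : ∀ x, ∑ j, pd (U j) j x = 0)
    (h1 : ∀ i x, -lap (U i) x + (∑ j, U j x * pd (U i) j x)
      + pd π i x + (∑ j, pd (fun y => V j y * V i y) j x) = 0)
    (h2 : ∀ i x, -lap (V i) x + (∑ j, U j x * pd (V i) j x)
      + pd θ i x + (∑ j, V j x * pd (U i) j x) = 0)
    (h3 : ∀ x, -lap θ x + (∑ j, U j x * pd θ j x) + (∑ j, pd (V j) j x) = 0)
    {p q r : ℝ} (hp1 : 3 / 2 < p) (hp2 : p < 3) (hq1 : 1 ≤ q) (hq2 : q < 2) (hr1 : 1 ≤ r) (hr2 : r ≤ 6)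
    (hWm : Continuous W) (hW0 : ∀ i x, |U i x| ≤ W x) (hWp : ∫⁻ x, ENNReal.ofReal (W x ^ p) < ⊤)
    (iU : ∀ i, ∫⁻ x, ENNReal.ofReal (|U i x| ^ p) < ⊤)
    (iV : ∀ i, ∫⁻ x, ENNReal.ofReal (|V i x| ^ q) < ⊤)
    (iT : ∫⁻ x, ENNReal.ofReal (|θ x| ^ r) < ⊤) :
    (∀ i x, U i x = 0) ∧ (∀ i x, V i x = 0) ∧ ∀ x, θ x = 0 := by
  obtain ⟨C0, a1, c0, am, a0, i2, i2p, hpot⟩ := exists_pot hU hdiv hWm hW0 hp1 hp2 hWp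
  have hσ : 2*p/(p-1) < 6 := by rw [div_lt_iff₀ (by linarith)]; linarith
  obtain ⟨N, hN0⟩ := exists_nat_ge (30 / (6 - 2*p/(p-1)))
  have hN : 6 * ((N:ℝ)+4) * (2*p/(p-1)-1) ≤ 5 * (N+3) * (2*p/(p-1)) := by
    rw [div_le_iff₀ (by linarith)] at hN0
    nlinarith
  obtain ⟨K, hK, hmain⟩ := main_err N
  set E : ℕ → ℝ≥0∞ := fun n => En U V θ N ((n:ℝ)+1) with hEdef
  have gd : ∀ o, Good E N p (fam U V θ o) := by
    rintro (_ | i | i)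
    · exact good_of hθ hp1 hp2 hr1 hr2 iT (fun n => En1_le N n none) hN
    · exact good_of (hU i) hp1 hp2 (by linarith) (by linarith) (iU i) (fun n => En1_le N n (some (Sum.inl i))) hN
    · exact good_of (hV i) hp1 hp2 hq1 (by linarith) (iV i) (fun n => En1_le N n (some (Sum.inr i))) hN
  have es := Err_sma (C0 := C0) (by linarith) gd
    (fun i => (lt_of_le_of_lt (lintegral_mono fun x => bg_pow_le (U i) (by linarith) le_rfl x) (iU i)).ne)
    (fun i => (lt_of_le_of_lt (lintegral_mono fun x => sl_pow_le (U i) (by linarith) hp2.le x) (iU i)).ne)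
    (fun i => (lt_of_le_of_lt (lintegral_mono fun x => sl_pow_le (V i) (by linarith) hq2.le x) (iV i)).ne)
    am a0 i2.ne i2p.ne
  have sE : Sma E E := (es.cmul (c := ENNReal.ofReal K) ENNReal.ofReal_ne_top).mono fun n =>
    hmain hπ hθ hU hV hdiv h1 h2 h3 (fun x => add_nonneg c0 (a0 x)) hpot ((n:ℝ)+1) (by positivity)
  have lim := absorb_lim (fun n => En_fin hθ hU hV N (by positivity)) sE
  have ez := Eden_zero hθ hU hV N lim
  have s0 : ∀ o k x, pd (fam U V θ o) k x = 0 := by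
    intro o k x
    have : Eden U V θ x = ∑ o, ∑ k, pd (fam U V θ o) k x ^ 2 := by
      simp only [Fintype.sum_option, Fintype.sum_sum_type, fam, Eden]; ring
    rw [ez x] at this
    have t1 := (Finset.sum_eq_zero_iff_of_nonneg
      (fun o _ => Finset.sum_nonneg fun k _ => sq_nonneg _)).1 this.symm o (Finset.mem_univ _)
    have t2 := (Finset.sum_eq_zero_iff_of_nonneg (fun k _ => sq_nonneg _)).1 t1 k (Finset.mem_univ _)
    exact pow_eq_zero_iff two_ne_zero |>.1 t2
  exact ⟨fun i => zero_of_grad (hU i) (s0 (some (Sum.inl i))) (iU i),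
    fun i => zero_of_grad (hV i) (s0 (some (Sum.inr i))) (iV i), zero_of_grad hθ (s0 none) iT⟩

theorem liouville_tcm_B2 (u v : R3 → R3) (pr θ : R3 → ℝ)
    (hu : ContDiff ℝ (⊤ : ℕ∞) u) (hv : ContDiff ℝ (⊤ : ℕ∞) v)
    (hpr : ContDiff ℝ (⊤ : ℕ∞) pr) (hθ : ContDiff ℝ (⊤ : ℕ∞) θ)
    (hsol : TCM u v pr θ)
    (p q r : ℝ)
    (hp1 : 3 / 2 < p) (hp2 : p < 3)
    (hq1 : 1 ≤ q) (hq2 : q < 2)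
    (hr1 : 1 ≤ r) (hr2 : r ≤ 6)
    (hLu : (∫⁻ x : R3, ENNReal.ofReal (‖u x‖ ^ p)) < ⊤)
    (hLv : (∫⁻ x : R3, ENNReal.ofReal (‖v x‖ ^ q)) < ⊤)
    (hLθ : (∫⁻ x : R3, ENNReal.ofReal (|θ x| ^ r)) < ⊤) :
    (∀ x, u x = 0) ∧ (∀ x, v x = 0) ∧ (∀ x, θ x = 0) := by
  obtain ⟨h1, h2, h3, h4⟩ := hsol
  have nu : ∀ (w : R3) (i : Fin 3), |w i| ≤ ‖w‖ := fun w i => by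
    simpa using PiLp.norm_apply_le w i
  have cmp : ∀ (w : R3 → R3), ContDiff ℝ (⊤ : ℕ∞) w → ∀ i : Fin 3, Sm (fun y => w y i) :=
    fun w hw i => contDiff_euclidean.1 hw i
  have li : ∀ (w : R3 → R3) (s : ℝ), 0 ≤ s → (∫⁻ x : R3, ENNReal.ofReal (‖w x‖ ^ s)) < ⊤ →
      ∀ i : Fin 3, (∫⁻ x : R3, ENNReal.ofReal (|w x i| ^ s)) < ⊤ := fun w s hs h i =>
    lt_of_le_of_lt (lintegral_mono fun x => ENNReal.ofReal_le_ofReal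
      (Real.rpow_le_rpow (abs_nonneg _) (nu _ _) hs)) h
  obtain ⟨a, b, c⟩ := core (U := fun i y => u y i) (V := fun i y => v y i) (W := fun y => ‖u y‖) hpr hθ
    (cmp u hu) (cmp v hv) h4 h1 h2 h3 hp1 hp2 hq1 hq2 hr1 hr2 hu.continuous.norm (fun i x => nu _ _) hLu
    (li u p (by linarith) hLu) (li v q (by linarith) hLv) hLθ
  exact ⟨fun x => by ext i; exact a i x, fun x => by ext i; exact b i x, c⟩
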